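/- Assume the Riemann Hypothesis. There exists T₀ such that for all T ≥ T₀ and every real number B (which may depend on T), ∫_B^{B+1} F(α,T) dα ≤ 3. -/

import Mathlib

open Complex Filter MeasureTheory Real Set

noncomputable section

/-- A non-trivial zero of the Riemann zeta function. -/
def ZetaNontrivZero (ρ : ℂ) : Prop := riemannZeta ρ = 0 ∧ 0 < ρ.re ∧ ρ.re < 1

/-- The multiplicity of `ρ` as a zero of `ζ`. -/
def zetaMult (ρ : ℂ) : ℕ := sInf {n : ℕ | iteratedDeriv n riemannZeta ρ ≠ 0}

/-- The set of non-trivial zeros with ordinate in `(0, T]`. -/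
def zerosUpTo (T : ℝ) : Set ℂ := {ρ | ZetaNontrivZero ρ ∧ 0 < ρ.im ∧ ρ.im ≤ T}

/-- Montgomery's pair correlation function `F(x,T)`, zeros counted with multiplicity. -/
def Fxt (x T : ℝ) : ℂ :=
  ∑' p : zerosUpTo T × zerosUpTo T,
    (zetaMult p.1 * zetaMult p.2 : ℂ) *
      Complex.exp (Complex.I * (((p.1 : ℂ).im - (p.2 : ℂ).im : ℝ) : ℂ) * (Real.log x : ℂ)) *
      ((4 / (4 + ((p.1 : ℂ).im - (p.2 : ℂ).im) ^ 2) : ℝ) : ℂ)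

/-- The normalized form `F(α) = F(α, T)`. -/
def FF (α T : ℝ) : ℂ := ((T / (2 * π) * Real.log T : ℝ) : ℂ)⁻¹ * Fxt (T ^ α) T

namespace Mont

lemma factor_one (g : ℂ → ℂ) (hg : Differentiable ℂ g) (ρ : ℂ) (hord : analyticOrderAt g ρ ≠ ⊤) :
    ∃ g₁ : ℂ → ℂ, Differentiable ℂ g₁ ∧ (∀ z, g z = (z - ρ) ^ (analyticOrderNatAt g ρ) * g₁ z) ∧
      g₁ ρ ≠ 0 := by
  obtain ⟨k, hk, hk0, hke⟩ := (hg.analyticAt ρ).analyticOrderAt_ne_top.mp hord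
  set n := analyticOrderNatAt g ρ
  have key : ∀ᶠ z in nhds ρ, (if z = ρ then k ρ else g z / (z - ρ) ^ n) = k z := by
    filter_upwards [hke] with z hz
    split_ifs with h
    · rw [h]
    · have : (z - ρ) ^ n ≠ 0 := pow_ne_zero _ (sub_ne_zero.mpr h)
      rw [hz, smul_eq_mul, mul_div_cancel_left₀ _ this]
  refine ⟨fun z => if z = ρ then k ρ else g z / (z - ρ) ^ n, ?_, ?_, ?_⟩
  · intro z
    by_cases h : z = ρ
    · subst h
      exact (hk.differentiableAt).congr_of_eventuallyEq key
    · have hev : ∀ᶠ w in nhds z, w ≠ ρ := isOpen_ne.mem_nhds h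
      have : DifferentiableAt ℂ (fun w => g w / (w - ρ) ^ n) z := by
        refine (hg z).div (by fun_prop) (pow_ne_zero _ (sub_ne_zero.mpr h))
      refine this.congr_of_eventuallyEq ?_
      filter_upwards [hev] with w hw
      simp [hw]
  · intro z
    by_cases h : z = ρ
    · subst h
      have := hke.self_of_nhds
      simpa using this
    · have : (z - ρ) ^ n ≠ 0 := pow_ne_zero _ (sub_ne_zero.mpr h)
      simp [h]
      field_simp
  · simpa using hk0

lemma factor_finset (f : ℂ → ℂ) (hf : Differentiable ℂ f) (hord : ∀ ρ, analyticOrderAt f ρ ≠ ⊤)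
    (S : Finset ℂ) :
    ∃ g : ℂ → ℂ, Differentiable ℂ g ∧
      (∀ z, f z = (∏ ρ ∈ S, (z - ρ) ^ (analyticOrderNatAt f ρ)) * g z) ∧ ∀ ρ ∈ S, g ρ ≠ 0 := by
  induction S using Finset.induction_on with
  | empty => exact ⟨f, hf, by simp, by simp⟩
  | insert a S ha ih =>
    obtain ⟨g, hg, hfg, hne⟩ := ih
    set P : ℂ → ℂ := fun z => ∏ ρ ∈ S, (z - ρ) ^ (analyticOrderNatAt f ρ)
    have hP : Differentiable ℂ P := by
      intro z; simp only [P]; fun_prop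
    have hPa : P a ≠ 0 := by
      simp only [P]
      refine Finset.prod_ne_zero_iff.mpr fun ρ hρ => pow_ne_zero _ (sub_ne_zero.mpr ?_)
      rintro rfl; exact ha hρ
    have hord2 : analyticOrderAt f a = analyticOrderAt g a := by
      have : f = P * g := by ext z; exact hfg z
      rw [this, analyticOrderAt_mul (hP.analyticAt a) (hg.analyticAt a),
        (hP.analyticAt a).analyticOrderAt_eq_zero.mpr hPa, zero_add]
    have hordn : analyticOrderNatAt f a = analyticOrderNatAt g a := by
      simp [analyticOrderNatAt, hord2]
    obtain ⟨g₁, hg₁, hgg, hg₁a⟩ := factor_one g hg a (hord2 ▸ hord a)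
    refine ⟨g₁, hg₁, ?_, ?_⟩
    · intro z
      rw [Finset.prod_insert ha, hfg z, hgg z, hordn]; ring
    · intro ρ hρ
      rcases Finset.mem_insert.mp hρ with rfl | h
      · exact hg₁a
      · intro h0
        exact hne ρ h (by rw [hgg, h0, mul_zero])

lemma log_bound (g : ℂ → ℂ) (hg : Differentiable ℂ g) (R M : ℝ) (hR : 0 < R) (hM : 0 < M)
    (hnz : ∀ z ∈ Metric.ball (0:ℂ) R, g z ≠ 0)
    (hb : ∀ z ∈ Metric.ball (0:ℂ) R, ‖g z‖ ≤ Real.exp M * ‖g 0‖) (w : ℂ) (hw : ‖w‖ < R / 8) :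
    ‖logDeriv g w - logDeriv g 0‖ ≤ 64 * M / R ^ 2 * ‖w‖ := by
  have h0m : (0:ℂ) ∈ Metric.ball (0:ℂ) R := by simpa using hR
  have hd : DifferentiableOn ℂ (logDeriv g) (Metric.ball 0 R) := by
    intro z hz
    refine DifferentiableAt.differentiableWithinAt ?_
    exact ((hg.analyticAt z).deriv.differentiableAt).div (hg z) (hnz z hz)
  obtain ⟨h, h00, hh⟩ := (hd.isExactOn_ball).with_val_at 0 0
  have hconst : ∀ z ∈ Metric.ball (0:ℂ) R, Complex.exp (-h z) * g z = g 0 := by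
    intro z hz
    have hder : ∀ x ∈ Metric.ball (0:ℂ) R, HasDerivAt (fun z => Complex.exp (-h z) * g z) 0 x := by
      intro x hx
      have h1 := ((hh x hx).neg.cexp).mul (hg x).hasDerivAt
      have h2 := hnz x hx
      have h3 : logDeriv g x * g x = deriv g x := by
        rw [logDeriv_apply]; field_simp
      refine HasDerivAt.congr_deriv h1 ?_
      linear_combination (-Complex.exp (-h x)) * h3
    have := (convex_ball (0:ℂ) R).is_const_of_fderivWithin_eq_zero (𝕜 := ℂ)
      (f := fun z => Complex.exp (-h z) * g z)
      (fun x hx => (hder x hx).differentiableAt.differentiableWithinAt)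
      (fun x hx => by
        rw [fderivWithin_of_isOpen Metric.isOpen_ball hx]
        ext; simpa using (hder x hx).deriv) hz h0m
    simpa [h00] using this
  have hre : ∀ z ∈ Metric.ball (0:ℂ) R, (h z).re ≤ M := by
    intro z hz
    have h1 := hconst z hz
    have h2 : ‖g z‖ = Real.exp (h z).re * ‖g 0‖ := by
      rw [← h1, norm_mul, Complex.norm_exp, Complex.neg_re, ← mul_assoc, ← Real.exp_add]; simp
    have h3 := hb z hz
    rw [h2] at h3
    have h4 : 0 < ‖g 0‖ := norm_pos_iff.mpr (hnz 0 h0m)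
    exact Real.exp_le_exp.mp (le_of_mul_le_mul_right h3 h4)
  have hdh : DifferentiableOn ℂ h (Metric.ball 0 R) := fun x hx =>
    (hh x hx).differentiableAt.differentiableWithinAt
  have hB1 : ∀ z, ‖z‖ ≤ R / 2 → ‖h z‖ ≤ 2 * M := by
    intro z hz
    have hzR : z ∈ Metric.ball (0:ℂ) R := by simp; linarith
    refine (borelCaratheodory_zero hM hdh hre hR hzR h00).trans ?_
    rw [div_le_iff₀ (by linarith)]
    nlinarith
  have hB2 : ∀ z, ‖z‖ ≤ R / 4 → ‖logDeriv g z‖ ≤ 8 * M / R := by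
    intro z hz
    have hzR : z ∈ Metric.ball (0:ℂ) R := by simp; linarith
    rw [← (hh z hzR).deriv]
    have hsub : Metric.closedBall z (R/4) ⊆ Metric.ball (0:ℂ) R := by
      intro x hx
      have := norm_sub_norm_le x z
      simp [dist_eq_norm] at hx ⊢; linarith
    refine (norm_deriv_le_of_forall_mem_sphere_norm_le (R := R/4) (C := 2 * M) (by linarith)
      ((hdh.mono hsub).diffContOnCl_ball (le_refl _)) ?_).trans ?_
    · intro x hx
      apply hB1
      have := norm_sub_norm_le x z
      simp [dist_eq_norm] at hx; linarith
    · apply le_of_eq; field_simp; ring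
  have hB3 : ∀ z ∈ Metric.ball (0:ℂ) (R/8), ‖deriv (logDeriv g) z‖ ≤ 64 * M / R ^ 2 := by
    intro z hz
    have hz : ‖z‖ < R / 8 := by simpa using hz
    have hsub : Metric.closedBall z (R/8) ⊆ Metric.ball (0:ℂ) R := by
      intro x hx
      have := norm_sub_norm_le x z
      simp [dist_eq_norm] at hx ⊢; linarith
    refine (norm_deriv_le_of_forall_mem_sphere_norm_le (R := R/8) (C := 8 * M / R) (by linarith)
      ((hd.mono hsub).diffContOnCl_ball (le_refl _)) ?_).trans ?_
    · intro x hx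
      apply hB2
      have := norm_sub_norm_le x z
      simp [dist_eq_norm] at hx; linarith
    · apply le_of_eq; field_simp; ring
  have := (convex_ball (0:ℂ) (R/8)).norm_image_sub_le_of_norm_deriv_le (𝕜 := ℂ) (f := logDeriv g)
    (x := 0) (y := w) (fun x hx => (hd x (Metric.ball_subset_ball (by linarith) hx)).differentiableAt
      (Metric.isOpen_ball.mem_nhds (Metric.ball_subset_ball (by linarith) hx))) hB3
    (by simpa using hR) (by simpa using hw)
  simpa using this

/-- Finite-radius version of Hadamard's partial fraction formula. -/
lemma hadamard_finite (f : ℂ → ℂ) (hf : Differentiable ℂ f) (hf0 : f 0 ≠ 0)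
    (R M : ℝ) (hR : 0 < R) (hM : 0 < M)
    (hb : ∀ z, ‖z‖ = 2 * R → ‖f z‖ ≤ Real.exp M * ‖f 0‖)
    (S : Finset ℂ) (hS : ∀ z, z ∈ S ↔ ‖z‖ ≤ R ∧ f z = 0) (w : ℂ) (hw : ‖w‖ < R / 8) (hfw : f w ≠ 0) :
    ‖logDeriv f w - logDeriv f 0 - ∑ ρ ∈ S, (analyticOrderNatAt f ρ : ℂ) * (1 / (w - ρ) - 1 / (0 - ρ))‖
      ≤ 64 * M / R ^ 2 * ‖w‖ := by
  have hord : ∀ ρ, analyticOrderAt f ρ ≠ ⊤ := by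
    intro ρ h
    have han : AnalyticOnNhd ℂ f Set.univ := fun z _ => hf.analyticAt z
    have := han.eqOn_zero_of_preconnected_of_eventuallyEq_zero isPreconnected_univ (mem_univ ρ)
      (analyticOrderAt_eq_top.mp h)
    exact hf0 (this (mem_univ 0))
  obtain ⟨g, hg, hfg, hne⟩ := factor_finset f hf hord S
  have hρ0 : ∀ ρ ∈ S, ρ ≠ 0 := by
    rintro ρ hρ rfl; exact hf0 ((hS 0).mp hρ).2
  set G : ℂ → ℂ := fun z => (∏ ρ ∈ S, (-ρ) ^ (analyticOrderNatAt f ρ)) * g z with hG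
  have hcne : (∏ ρ ∈ S, (-ρ) ^ (analyticOrderNatAt f ρ)) ≠ 0 :=
    Finset.prod_ne_zero_iff.mpr fun ρ hρ => pow_ne_zero _ (neg_ne_zero.mpr (hρ0 ρ hρ))
  have hGd : Differentiable ℂ G := by intro z; simp only [hG]; fun_prop
  have hfG : ∀ z, f z = (∏ ρ ∈ S, (1 - z / ρ) ^ (analyticOrderNatAt f ρ)) * G z := by
    intro z
    rw [hfg z, hG]
    simp only
    rw [← mul_assoc, ← Finset.prod_mul_distrib]
    congr 1
    refine Finset.prod_congr rfl fun ρ hρ => ?_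
    rw [← mul_pow]; congr 1
    have := hρ0 ρ hρ
    field_simp; ring
  have hG0 : G 0 = f 0 := by rw [hfG 0]; simp
  have hnz : ∀ z ∈ Metric.ball (0:ℂ) R, G z ≠ 0 := by
    intro z hz h0
    have hz' : ‖z‖ < R := by simpa using hz
    have hzS : z ∈ S := (hS z).mpr ⟨hz'.le, by rw [hfG, h0, mul_zero]⟩
    exact hne z hzS ((mul_eq_zero.mp h0).resolve_left hcne)
  have hsph : ∀ z, ‖z‖ = 2 * R → ‖G z‖ ≤ Real.exp M * ‖G 0‖ := by
    intro z hz
    rw [hG0]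
    refine le_trans ?_ (hb z hz)
    rw [hfG z, norm_mul (∏ ρ ∈ S, _) (G z)]
    refine le_mul_of_one_le_left (norm_nonneg (G z)) ?_
    rw [norm_prod]
    refine Finset.one_le_prod fun ρ hρ => ?_
    rw [norm_pow]
    refine one_le_pow₀ ?_
    have h1 : ‖ρ‖ ≤ R := ((hS ρ).mp hρ).1
    have h2 : 0 < ‖ρ‖ := norm_pos_iff.mpr (hρ0 ρ hρ)
    have h3 : 2 ≤ ‖z / ρ‖ := by rw [norm_div, le_div_iff₀ h2, hz]; linarith
    have h4 := norm_sub_norm_le (z / ρ) (1:ℂ)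
    rw [norm_one, norm_sub_rev] at h4
    linarith
  have hball : ∀ z ∈ Metric.ball (0:ℂ) R, ‖G z‖ ≤ Real.exp M * ‖G 0‖ := by
    intro z hz
    refine norm_le_of_forall_mem_frontier_norm_le (U := Metric.ball (0:ℂ) (2*R)) Metric.isBounded_ball
      hGd.diffContOnCl ?_ ?_
    · intro x hx
      rw [frontier_ball _ (by positivity)] at hx
      exact hsph x (by simpa using hx)
    · exact subset_closure (Metric.ball_subset_ball (by linarith) hz)
  have hmain := log_bound G hGd R M hR hM hnz hball w hw
  have hld : ∀ z, f z ≠ 0 → ‖z‖ < R → logDeriv G z = logDeriv f z -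
      ∑ ρ ∈ S, (analyticOrderNatAt f ρ : ℂ) * (1 / (z - ρ)) := by
    intro z hz hzR
    have h1 : logDeriv f z = logDeriv (fun z => ∏ ρ ∈ S, (z - ρ) ^ (analyticOrderNatAt f ρ)) z + logDeriv g z := by
      have : f = fun z => (∏ ρ ∈ S, (z - ρ) ^ (analyticOrderNatAt f ρ)) * g z := funext hfg
      conv_lhs => rw [this]
      have h := hfg z
      rw [h] at hz
      exact logDeriv_mul z (left_ne_zero_of_mul hz) (right_ne_zero_of_mul hz) (by fun_prop) (hg z)
    have hS' : ∀ ρ ∈ S, z - ρ ≠ 0 := by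
      intro ρ hρ h
      rw [sub_eq_zero] at h
      subst h; exact hz ((hS z).mp hρ).2
    have h2 : logDeriv (fun z => ∏ ρ ∈ S, (z - ρ) ^ (analyticOrderNatAt f ρ)) z =
        ∑ ρ ∈ S, (analyticOrderNatAt f ρ : ℂ) * (1 / (z - ρ)) := by
      rw [logDeriv_prod]
      · refine Finset.sum_congr rfl fun ρ hρ => ?_
        rw [logDeriv_fun_pow (by fun_prop)]
        simp [logDeriv_apply]
      · intro ρ hρ; exact pow_ne_zero _ (hS' ρ hρ)
      · intro ρ hρ; fun_prop
    have h3 : logDeriv G z = logDeriv g z := logDeriv_const_mul z _ hcne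
    rw [h3, h1, h2]; ring
  rw [hld w hfw (by linarith), hld 0 hf0 (by simpa using hR)] at hmain
  convert hmain using 2
  simp only [mul_sub, Finset.sum_sub_distrib]
  ring

end Mont

namespace Mont

open HurwitzZeta in
lemma modif_decay : ∃ p C t₀ : ℝ, 0 < p ∧ 0 ≤ C ∧ 1 ≤ t₀ ∧
    ∀ t, t₀ ≤ t → ‖(hurwitzEvenFEPair 0).f_modif t‖ ≤ C * Real.exp (-p * t) := by
  obtain ⟨p, hp, h⟩ := isBigO_atTop_evenKernel_sub 0
  obtain ⟨C, hC, h⟩ := h.exists_nonneg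
  rw [Asymptotics.isBigOWith_iff, eventually_atTop] at h
  obtain ⟨a, ha⟩ := h
  refine ⟨p, C, max a 2, hp, hC, le_max_of_le_right (by norm_num), fun t ht => ?_⟩
  have h1 := ha t (le_trans (le_max_left _ _) ht)
  have h2 : 1 < t := lt_of_lt_of_le (by norm_num) (le_trans (le_max_right a 2) ht)
  rw [Real.norm_of_nonneg (Real.exp_pos _).le] at h1
  refine le_trans (le_of_eq ?_) h1
  rw [WeakFEPair.f_modif, Pi.add_apply, indicator_of_mem (mem_Ioi.mpr h2),
      indicator_of_notMem (notMem_Ioo_of_ge h2.le), add_zero]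
  simp only [hurwitzEvenFEPair, if_true, Function.comp]
  rw [← Complex.norm_real]; simp

open HurwitzZeta in
lemma modif_mellin (s : ℂ) : MellinConvergent (hurwitzEvenFEPair 0).f_modif s := by
  have h := (hurwitzEvenFEPair 0).isStrongFEPair_toStrongFEPair.hasMellin s
  exact h.1

open HurwitzZeta in
lemma Lambda_bound : ∃ A D q : ℝ, 0 ≤ A ∧ 0 ≤ D ∧ 0 < q ∧ ∀ (s : ℂ) (m : ℕ), 1/4 ≤ s.re → s.re ≤ m + 1 →
    ‖(hurwitzEvenFEPair 0).Λ₀ s‖ ≤ A + D * (m.factorial / q ^ m) := by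
  obtain ⟨p, C, t₀, hp, hC, ht₀, hdec⟩ := modif_decay
  set F := (hurwitzEvenFEPair 0).f_modif with hF
  have hmeas : AEStronglyMeasurable F (volume.restrict (Ioi 0)) :=
    (hurwitzEvenFEPair 0).hf_modif_int.aestronglyMeasurable
  have h1 : IntegrableOn (fun t => ‖F t‖) (Ioi 0) := by
    have := (modif_mellin 1).norm
    refine this.congr ?_
    filter_upwards with t; simp [← hF]
  have h4 : IntegrableOn (fun t : ℝ => t ^ ((1:ℝ)/4 - 1) * ‖F t‖) (Ioi 0) := by
    have := (modif_mellin (1/4)).norm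
    refine this.congr ?_
    filter_upwards [self_mem_ae_restrict measurableSet_Ioi] with t ht
    rw [norm_smul, Complex.norm_cpow_eq_rpow_re_of_pos ht, ← hF]; norm_num
  have hE : IntegrableOn (fun t : ℝ => Real.exp (p/2 * t) * ‖F t‖) (Ioi 0) := by
    have hb : IntegrableOn (fun t : ℝ => Real.exp (p/2*t₀) * ‖F t‖ + C * Real.exp (-(p/2)*t)) (Ioi 0) :=
      (h1.const_mul _).add ((integrableOn_exp_mul_Ioi (by linarith) 0).const_mul _)
    refine hb.mono' ?_ ?_
    · exact (Continuous.aestronglyMeasurable (by fun_prop)).mul hmeas.norm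
    · filter_upwards [self_mem_ae_restrict measurableSet_Ioi] with t ht
      rw [norm_mul, norm_norm, Real.norm_of_nonneg (Real.exp_pos _).le]
      rcases le_total t t₀ with h | h
      · have : Real.exp (p/2*t) ≤ Real.exp (p/2*t₀) := Real.exp_le_exp.mpr (by gcongr)
        have := mul_le_mul_of_nonneg_right this (norm_nonneg (F t))
        have : 0 ≤ C * Real.exp (-(p/2)*t) := by positivity
        linarith
      · have h2 := mul_le_mul_of_nonneg_left (hdec t h) (Real.exp_pos (p/2*t)).le
        have h3 : Real.exp (p/2*t) * (C * Real.exp (-p*t)) = C * Real.exp (-(p/2)*t) := by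
          rw [mul_left_comm, ← Real.exp_add]; congr 2; ring
        have : 0 ≤ Real.exp (p/2*t₀) * ‖F t‖ := by positivity
        linarith
  refine ⟨∫ t in Ioi (0:ℝ), t ^ ((1:ℝ)/4 - 1) * ‖F t‖, ∫ t in Ioi (0:ℝ), Real.exp (p/2 * t) * ‖F t‖, p/2,
    ?_, ?_, by linarith, ?_⟩
  · exact setIntegral_nonneg measurableSet_Ioi fun t ht => mul_nonneg (Real.rpow_nonneg (le_of_lt ht) _) (norm_nonneg _)
  · exact setIntegral_nonneg measurableSet_Ioi fun t ht => by positivity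
  intro s m hs1 hs2
  have hint : IntegrableOn (fun t : ℝ => t ^ ((1:ℝ)/4 - 1) * ‖F t‖ + m.factorial / (p/2)^m * (Real.exp (p/2 * t) * ‖F t‖)) (Ioi 0) :=
    h4.add (hE.const_mul _)
  rw [WeakFEPair.Λ₀, mellin]
  refine (norm_integral_le_of_norm_le hint ?_).trans (le_of_eq ?_)
  · filter_upwards [self_mem_ae_restrict measurableSet_Ioi] with t ht
    have ht0 : 0 < t := ht
    rw [norm_smul, Complex.norm_cpow_eq_rpow_re_of_pos ht, ← hF, ← mul_assoc, ← add_mul]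
    refine mul_le_mul_of_nonneg_right ?_ (norm_nonneg _)
    have e1 : t ^ m ≤ m.factorial / (p/2)^m * Real.exp (p/2*t) := by
      have := Real.pow_div_factorial_le_exp (p/2*t) (by positivity) m
      rw [mul_pow, div_le_iff₀ (by positivity)] at this
      rw [div_mul_eq_mul_div, le_div_iff₀ (by positivity)]; linarith
    rcases le_total t 1 with h | h
    · have : t ^ (s - 1).re ≤ t ^ ((1:ℝ)/4 - 1) :=
        Real.rpow_le_rpow_of_exponent_ge ht0 h (by simp; linarith)
      have : 0 ≤ m.factorial / (p/2)^m * Real.exp (p/2*t) := by positivity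
      linarith
    · have : t ^ (s - 1).re ≤ t ^ (m:ℝ) :=
        Real.rpow_le_rpow_of_exponent_le h (by simp; linarith)
      rw [Real.rpow_natCast] at this
      have : 0 ≤ t ^ ((1:ℝ)/4 - 1) := by positivity
      linarith
  · rw [integral_add h4 (hE.const_mul _), integral_const_mul]; ring

/-- Riemann xi (normalised): entire -/
def X (s : ℂ) : ℂ := s * (s - 1) * completedRiemannZeta₀ s + 1

lemma X_diff : Differentiable ℂ X := by
  unfold X
  have := differentiable_completedZeta₀
  fun_prop

lemma X_one_sub (s : ℂ) : X (1 - s) = X s := by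
  unfold X; rw [completedRiemannZeta₀_one_sub]; ring

lemma X_eq (s : ℂ) (h0 : s ≠ 0) (h1 : s ≠ 1) : X s = s * (s - 1) * completedRiemannZeta s := by
  unfold X; rw [completedRiemannZeta_eq]
  have : 1 - s ≠ 0 := sub_ne_zero.mpr h1.symm
  field_simp; ring

lemma X_eq_zeta (s : ℂ) (h0 : s ≠ 0) (h1 : s ≠ 1) (hG : Gammaℝ s ≠ 0) :
    X s = s * (s - 1) * Gammaℝ s * riemannZeta s := by
  rw [X_eq s h0 h1, riemannZeta_def_of_ne_zero h0]; field_simp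

lemma X_growth : ∃ K : ℝ, 0 < K ∧ ∀ s : ℂ, ‖X s‖ ≤ Real.exp (K * (2 + ‖s‖) ^ ((3:ℝ)/2)) := by
  obtain ⟨A, D, q, hA, hD, hq, hb⟩ := Lambda_bound
  set Q := |Real.log q| with hQ
  have main : ∀ s : ℂ, 1/2 ≤ s.re → ∀ y : ℝ, 1 + ‖s‖ ≤ y → ‖X s‖ ≤ Real.exp ((A + D + 4 + Q) * y ^ ((3:ℝ)/2)) := by
    intro s hs y hy
    set m := ⌈‖s‖⌉₊ with hm
    have hm1 : ‖s‖ ≤ m := Nat.le_ceil _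
    have hm2 : (m:ℝ) ≤ y := by
      have := Nat.ceil_lt_add_one (norm_nonneg s); linarith
    have hre : s.re ≤ ‖s‖ := (Complex.abs_re_le_norm s).trans' (le_abs_self _)
    have hL : ‖completedRiemannZeta₀ s‖ ≤ A + D * (m.factorial / q ^ m) := by
      have e : completedRiemannZeta₀ s = (HurwitzZeta.hurwitzEvenFEPair 0).Λ₀ (s/2) / 2 := rfl
      have h2 : (s/2).re = s.re/2 := by simp
      have := hb (s/2) m (by rw [h2]; linarith) (by rw [h2]; linarith)
      rw [e, norm_div, Complex.norm_ofNat]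
      have := norm_nonneg ((HurwitzZeta.hurwitzEvenFEPair 0).Λ₀ (s/2))
      linarith
    have hn0 := norm_nonneg s
    have hy1 : 1 ≤ y := by linarith
    set Y := y ^ ((3:ℝ)/2) with hY
    have hyY : y ≤ Y := by
      calc y = y ^ (1:ℝ) := (Real.rpow_one y).symm
        _ ≤ _ := Real.rpow_le_rpow_of_exponent_le hy1 (by norm_num)
    have hY1 : 1 ≤ Y := hy1.trans hyY
    have hlog : y * Real.log y ≤ 2 * Y := by
      have h := Real.log_le_rpow_div (by linarith : 0 ≤ y) (by norm_num : (0:ℝ) < 1/2)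
      have h2 : y * (y ^ ((1:ℝ)/2) / (1/2)) = 2 * Y := by
        rw [hY, show (3:ℝ)/2 = 1 + 1/2 by norm_num, Real.rpow_add (by linarith), Real.rpow_one]; ring
      rw [← h2]; gcongr
    have hfac : (m.factorial : ℝ) ≤ Real.exp (2 * Y) := by
      have h1 : (m.factorial : ℝ) ≤ (m:ℝ) ^ m := by exact_mod_cast Nat.factorial_le_pow m
      refine h1.trans ?_
      have h2 : (m:ℝ)^m ≤ y ^ m := by gcongr
      refine h2.trans ?_
      rw [← Real.exp_log (by linarith : 0 < y), ← Real.exp_nat_mul]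
      refine Real.exp_le_exp.mpr (le_trans ?_ hlog)
      have := Real.log_nonneg hy1
      gcongr
    have hqm : 1 / q ^ m ≤ Real.exp (Q * Y) := by
      rw [one_div, ← inv_pow, ← Real.exp_log (inv_pos.mpr hq), ← Real.exp_nat_mul]
      refine Real.exp_le_exp.mpr ?_
      rw [Real.log_inv]
      have h1 : -Real.log q ≤ Q := neg_le_abs _
      have hQ0 : 0 ≤ Q := abs_nonneg _
      calc (m:ℝ) * -Real.log q ≤ m * Q := by gcongr
        _ ≤ y * Q := by gcongr
        _ ≤ Y * Q := by gcongr
        _ = Q * Y := mul_comm _ _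
    have hX : ‖X s‖ ≤ y ^ 2 * (A + D * (m.factorial / q ^ m)) + 1 := by
      unfold X
      refine (norm_add_le _ _).trans ?_
      rw [norm_one, norm_mul, norm_mul]
      have e1 : ‖s - 1‖ ≤ y := (norm_sub_le _ _).trans (by simp; linarith)
      have e2 : ‖s‖ ≤ y := by linarith
      have e3 : ‖s‖ * ‖s - 1‖ ≤ y ^ 2 := by rw [sq]; gcongr
      gcongr
    have hf2 : (m.factorial : ℝ) / q ^ m ≤ Real.exp ((2 + Q) * Y) := by
      rw [div_eq_mul_one_div, add_mul, Real.exp_add]; gcongr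
    have hE1 : 1 ≤ Real.exp ((2+Q) * Y) := Real.one_le_exp (by have : 0 ≤ Q := abs_nonneg _; positivity)
    have hy2 : y ^ 2 ≤ Real.exp (2 * Y) := by
      have : y ≤ Real.exp Y := by have := Real.add_one_le_exp Y; linarith
      calc y^2 ≤ (Real.exp Y)^2 := by gcongr
        _ = _ := by rw [← Real.exp_nat_mul]; norm_num
    have hy21 : 1 ≤ Real.exp (2*Y) := Real.one_le_exp (by linarith)
    have hAD : A + D + 1 ≤ Real.exp ((A + D) * Y) := by
      have := Real.add_one_le_exp ((A+D)*Y)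
      have : (A+D) ≤ (A+D)*Y := le_mul_of_one_le_right (by linarith) hY1
      linarith
    calc ‖X s‖ ≤ y ^ 2 * (A + D * (m.factorial / q ^ m)) + 1 := hX
      _ ≤ Real.exp (2*Y) * (A * Real.exp ((2+Q)*Y) + D * Real.exp ((2+Q)*Y)) + Real.exp (2*Y) * Real.exp ((2+Q)*Y) := by
          have : 1 ≤ Real.exp (2*Y) * Real.exp ((2+Q)*Y) := one_le_mul_of_one_le_of_one_le hy21 hE1
          have : A ≤ A * Real.exp ((2+Q)*Y) := le_mul_of_one_le_right hA hE1
          gcongr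
      _ = Real.exp (2*Y) * Real.exp ((2+Q)*Y) * (A + D + 1) := by ring
      _ ≤ Real.exp (2*Y) * Real.exp ((2+Q)*Y) * Real.exp ((A + D) * Y) := by gcongr
      _ = _ := by rw [← Real.exp_add, ← Real.exp_add]; congr 1; ring
  refine ⟨A + D + 4 + Q, by have : 0 ≤ Q := abs_nonneg _; linarith, fun s => ?_⟩
  rcases le_total (1/2) s.re with h | h
  · exact main s h _ (by linarith)
  · rw [← X_one_sub]
    refine main (1 - s) (by simp; linarith) _ ?_
    have := norm_sub_le (1:ℂ) s
    rw [norm_one] at this; linarith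

end Mont

namespace Mont
open scoped Topology

lemma X_ne_zero_of_one_le {s : ℂ} (hs : 1 ≤ s.re) : X s ≠ 0 := by
  by_cases h1 : s = 1
  · subst h1; simp [X]
  have h0 : s ≠ 0 := by rintro rfl; simp at hs; linarith
  have hG := Gammaℝ_ne_zero_of_re_pos (by linarith : 0 < s.re)
  rw [X_eq_zeta s h0 h1 hG]
  have := riemannZeta_ne_zero_of_one_le_re hs
  have := sub_ne_zero.mpr h1
  positivity

lemma X_zero_strip {s : ℂ} (h : X s = 0) : 0 < s.re ∧ s.re < 1 ∧ riemannZeta s = 0 := by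
  have h1 : s.re < 1 := by
    by_contra hc
    exact X_ne_zero_of_one_le (not_lt.mp hc) h
  have h2 : 0 < s.re := by
    by_contra hc
    rw [← X_one_sub] at h
    exact X_ne_zero_of_one_le (by simp; linarith) h
  refine ⟨h2, h1, ?_⟩
  have h0 : s ≠ 0 := by rintro rfl; simp at h2
  have h1' : s ≠ 1 := by rintro rfl; simp at h1
  have hG := Gammaℝ_ne_zero_of_re_pos h2
  rw [X_eq_zeta s h0 h1' hG] at h
  have := sub_ne_zero.mpr h1'
  have : s * (s - 1) * Gammaℝ s ≠ 0 := by positivity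
  exact (mul_eq_zero.mp h).resolve_left this

lemma X_zero_of_strip {s : ℂ} (h : ZetaNontrivZero s) : X s = 0 := by
  obtain ⟨h, h2, h1⟩ := h
  have h0 : s ≠ 0 := by rintro rfl; simp at h2
  have h1' : s ≠ 1 := by rintro rfl; simp at h1
  have hG := Gammaℝ_ne_zero_of_re_pos h2
  rw [X_eq_zeta s h0 h1' hG, h, mul_zero]

lemma X_zero_re (hRH : RiemannHypothesis) {s : ℂ} (h : X s = 0) : s.re = 1/2 := by
  obtain ⟨h2, h1, h⟩ := X_zero_strip h
  refine hRH s h ?_ (by rintro rfl; simp at h1)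
  rintro ⟨n, rfl⟩
  simp at h2
  have : (0:ℝ) ≤ n := n.cast_nonneg
  linarith

lemma X_order_ne_top (s : ℂ) : analyticOrderAt X s ≠ ⊤ := by
  intro h
  have han : AnalyticOnNhd ℂ X Set.univ := fun z _ => X_diff.analyticAt z
  have h0 : X =ᶠ[𝓝 s] 0 := analyticOrderAt_eq_top.mp h
  have := han.eqOn_zero_of_preconnected_of_eventuallyEq_zero isPreconnected_univ (mem_univ s) h0 (mem_univ 1)
  exact X_ne_zero_of_one_le (s := 1) (by simp) this

lemma zetaMult_eq {s : ℂ} (h : ZetaNontrivZero s) : zetaMult s = analyticOrderNatAt X s := by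
  obtain ⟨h, h2, h1⟩ := h
  have h0 : s ≠ 0 := by rintro rfl; simp at h2
  have h1' : s ≠ 1 := by rintro rfl; simp at h1
  have hzan : AnalyticAt ℂ riemannZeta s := analyticOn_riemannZeta s h1'
  have hGan : AnalyticAt ℂ (fun s => (Gammaℝ s)⁻¹) s := differentiable_Gammaℝ_inv.analyticAt s
  have hG := Gammaℝ_ne_zero_of_re_pos h2
  have hGan' : AnalyticAt ℂ Gammaℝ s := by
    have := hGan.inv (inv_ne_zero hG)
    refine this.congr (Eventually.of_forall fun z => ?_)
    simp
  have hev : X =ᶠ[𝓝 s] ((fun s => s * (s-1) * Gammaℝ s) * riemannZeta) := by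
    have ho : IsOpen {z : ℂ | 0 < z.re ∧ z.re < 1} :=
      (isOpen_lt continuous_const Complex.continuous_re).inter (isOpen_lt Complex.continuous_re continuous_const)
    filter_upwards [ho.mem_nhds ⟨h2, h1⟩] with z hz
    rw [Pi.mul_apply]
    exact X_eq_zeta z (by rintro rfl; simp at hz) (by rintro rfl; simp at hz)
      (Gammaℝ_ne_zero_of_re_pos hz.1)
  have hfan : AnalyticAt ℂ (fun s => s * (s-1) * Gammaℝ s) s := by fun_prop
  have hf0 : analyticOrderAt (fun s => s * (s-1) * Gammaℝ s) s = 0 := by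
    rw [hfan.analyticOrderAt_eq_zero]
    have := sub_ne_zero.mpr h1'
    positivity
  have e : analyticOrderAt X s = analyticOrderAt riemannZeta s := by
    rw [analyticOrderAt_congr hev, analyticOrderAt_mul hfan hzan, hf0, zero_add]
  have e2 : analyticOrderAt riemannZeta s = (analyticOrderNatAt X s : ℕ) := by
    rw [Nat.cast_analyticOrderNatAt (X_order_ne_top s), e]
  rw [analyticOrderAt_eq_nat_iff_iteratedDeriv_eq_zero hzan] at e2
  unfold zetaMult
  refine le_antisymm (Nat.sInf_le e2.2) ?_
  refine le_csInf ⟨_, e2.2⟩ fun n hn => ?_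
  by_contra hc
  exact hn (e2.1 n (not_le.mp hc))

/-- zeros with multiplicity -/
abbrev Z : Type := Σ ρ : {ρ : ℂ // X ρ = 0}, Fin (analyticOrderNatAt X ρ.1)

def rho (z : Z) : ℂ := z.1.1
def gam (z : Z) : ℝ := z.1.1.im

lemma rho_eq (hRH : RiemannHypothesis) (z : Z) : rho z = 1/2 + gam z * I := by
  apply Complex.ext
  · simp [rho, X_zero_re hRH z.1.2]
  · simp [rho, gam]

lemma zset_finite (R : ℝ) : {ρ : {ρ : ℂ // X ρ = 0} | ‖ρ.1 - 2‖ ≤ R}.Finite := by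
  have h := (isCompact_closedBall (2:ℂ) R).inter_riemannZetaZeros_finite
  have h2 := Set.Finite.preimage (Subtype.val_injective.injOn (s := Set.univ) |>.mono (subset_univ _)) h
    (f := (Subtype.val : {ρ : ℂ // X ρ = 0} → ℂ))
  refine h2.subset fun ρ hρ => ?_
  refine ⟨by simpa [dist_eq_norm] using hρ, ?_⟩
  exact mem_riemannZetaZeros.mpr (X_zero_strip ρ.2).2.2

def SF (R : ℝ) : Finset {ρ : ℂ // X ρ = 0} := (zset_finite R).toFinset

def ZF (R : ℝ) : Finset Z := (SF R).sigma (fun _ => Finset.univ)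

lemma mem_ZF {R : ℝ} {z : Z} : z ∈ ZF R ↔ ‖rho z - 2‖ ≤ R := by
  simp [ZF, SF, rho]

lemma ZF_tendsto : Tendsto ZF atTop atTop := by
  refine tendsto_atTop_finset_of_monotone ?_ ?_
  · intro a b h z hz; rw [mem_ZF] at *; exact hz.trans h
  · intro z; exact ⟨_, mem_ZF.mpr le_rfl⟩

lemma sum_ZF (R : ℝ) (F : ℂ → ℂ) : ∑ z ∈ ZF R, F (rho z) =
    ∑ ρ ∈ SF R, (analyticOrderNatAt X ρ.1 : ℂ) * F ρ.1 := by
  rw [ZF, Finset.sum_sigma]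
  refine Finset.sum_congr rfl fun ρ _ => ?_
  simp [rho]

lemma pf_bound (w : ℂ) (hw : X w ≠ 0) : ∃ K : ℝ, ∀ R, 8 * ‖w - 2‖ < R → 1 ≤ R →
    ‖logDeriv X w - logDeriv X 2 - ∑ z ∈ ZF R, (1 / (w - rho z) - 1 / (2 - rho z))‖ ≤
      K * (4 + 2 * R) ^ ((3:ℝ)/2) / R ^ 2 := by
  obtain ⟨K, hK, hX⟩ := X_growth
  have hX2 : X 2 ≠ 0 := X_ne_zero_of_one_le (by simp)
  set M₀ := |Real.log ‖X 2‖| with hM₀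
  refine ⟨64 * (K + M₀) * ‖w - 2‖, fun R hR hR1 => ?_⟩
  set f : ℂ → ℂ := fun z => X (2 + z) with hf
  have hfd : Differentiable ℂ f := X_diff.comp (differentiable_id.const_add 2)
  have hld : ∀ z, logDeriv f z = logDeriv X (2 + z) := by
    intro z
    simp only [logDeriv_apply, hf, deriv_comp_const_add]
  have hord : ∀ z, analyticOrderNatAt f z = analyticOrderNatAt X (2 + z) := by
    intro z
    have hd : HasDerivAt (fun z : ℂ => 2 + z) 1 z := (hasDerivAt_id z).const_add 2
    have := analyticOrderAt_comp_of_deriv_ne_zero (f := X) (g := fun z : ℂ => 2 + z) (z₀ := z)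
      (by fun_prop) (by rw [hd.deriv]; exact one_ne_zero)
    unfold analyticOrderNatAt
    rw [← this]; rfl
  set P := (4 + 2 * R) ^ ((3:ℝ)/2) with hP
  have hP1 : 1 ≤ P := Real.one_le_rpow (by linarith) (by norm_num)
  have hb : ∀ z, ‖z‖ = 2 * R → ‖f z‖ ≤ Real.exp ((K + M₀) * P) * ‖f 0‖ := by
    intro z hz
    have h1 := hX (2 + z)
    have h2 : ‖2 + z‖ ≤ 2 + 2 * R := (norm_add_le _ _).trans (by rw [hz]; simp)
    have h3 : (2 + ‖2 + z‖) ^ ((3:ℝ)/2) ≤ P :=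
      Real.rpow_le_rpow (by positivity) (by linarith) (by norm_num)
    have h4 : 1 ≤ Real.exp M₀ * ‖f 0‖ := by
      have e : f 0 = X 2 := by simp [hf]
      rw [e]
      have hp : 0 < ‖X 2‖ := norm_pos_iff.mpr hX2
      rw [show Real.exp M₀ * ‖X 2‖ = Real.exp (M₀ + Real.log ‖X 2‖) by rw [Real.exp_add, Real.exp_log hp]]
      exact Real.one_le_exp (by have := neg_abs_le (Real.log ‖X 2‖); linarith)
    have h5 : Real.exp M₀ ≤ Real.exp (M₀ * P) :=
      Real.exp_le_exp.mpr (le_mul_of_one_le_right (abs_nonneg _) hP1)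
    calc ‖f z‖ ≤ Real.exp (K * (2 + ‖2 + z‖) ^ ((3:ℝ)/2)) := h1
      _ ≤ Real.exp (K * P) := Real.exp_le_exp.mpr (by gcongr)
      _ ≤ Real.exp (K * P) * (Real.exp M₀ * ‖f 0‖) := le_mul_of_one_le_right (Real.exp_pos _).le h4
      _ ≤ Real.exp (K * P) * (Real.exp (M₀ * P) * ‖f 0‖) := by gcongr
      _ = _ := by rw [add_mul, Real.exp_add]; ring
  have hM₀0 : 0 ≤ M₀ := abs_nonneg _
  have hinj : Function.Injective (fun ρ : {ρ : ℂ // X ρ = 0} => ρ.1 - 2) :=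
    fun a b h => Subtype.ext (sub_left_injective h)
  have := hadamard_finite f hfd (by simpa [hf] using hX2) R ((K + M₀) * P) (by linarith) (by positivity) hb
    ((SF R).map ⟨fun ρ => ρ.1 - 2, hinj⟩) ?_ (w - 2) (by linarith)
    (by simpa [hf] using hw)
  · rw [Finset.sum_map] at this
    simp only [hld, hord] at this
    simp only [Function.Embedding.coeFn_mk, add_sub_cancel, add_zero] at this
    have e := sum_ZF R (fun r => 1 / (w - r) - 1 / (2 - r))
    rw [e]
    convert this using 1
    · congr 2
      refine Finset.sum_congr rfl fun ρ _ => ?_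
      have e1 : w - 2 - (ρ.1 - 2) = w - ρ.1 := by ring
      have e2 : 0 - (ρ.1 - 2) = 2 - ρ.1 := by ring
      rw [e1, e2]
    · ring
  · intro z
    simp only [Finset.mem_map, Function.Embedding.coeFn_mk, SF, Set.Finite.mem_toFinset, mem_ofPred_eq]
    constructor
    · rintro ⟨ρ, h1, rfl⟩
      exact ⟨h1, by simp [hf, ρ.2]⟩
    · rintro ⟨h1, h2⟩
      exact ⟨⟨2 + z, h2⟩, by simpa using h1, by simp⟩

lemma pf_tendsto (w : ℂ) (hw : X w ≠ 0) :
    Tendsto (fun R => ∑ z ∈ ZF R, (1 / (w - rho z) - 1 / (2 - rho z))) atTop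
      (𝓝 (logDeriv X w - logDeriv X 2)) := by
  obtain ⟨K, hK⟩ := pf_bound w hw
  rw [tendsto_iff_norm_sub_tendsto_zero]
  have h1 : Tendsto (fun R : ℝ => K * 36 * R ^ (-((1:ℝ)/2))) atTop (𝓝 0) := by
    have := (tendsto_rpow_neg_atTop (by norm_num : (0:ℝ) < 1/2)).const_mul (K * 36)
    simpa using this
  have hK0 : 0 ≤ K := by
    have h := (norm_nonneg _).trans (hK (8 * ‖w - 2‖ + 1) (by linarith) (by have := norm_nonneg (w-2); linarith))
    have hp : 0 < (4 + 2 * (8 * ‖w - 2‖ + 1)) ^ ((3:ℝ)/2) / (8 * ‖w - 2‖ + 1) ^ 2 := by positivity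
    rw [mul_div_assoc] at h
    exact nonneg_of_mul_nonneg_left h hp
  refine squeeze_zero' (Eventually.of_forall fun R => norm_nonneg _) ?_ h1
  filter_upwards [eventually_gt_atTop (8 * ‖w - 2‖), eventually_ge_atTop 1] with R h2 h3
  rw [norm_sub_rev]
  refine (hK R h2 h3).trans ?_
  have e1 : (4 + 2 * R) ^ ((3:ℝ)/2) ≤ (6 * R) ^ ((3:ℝ)/2) :=
    Real.rpow_le_rpow (by linarith) (by linarith) (by norm_num)
  have e2 : (6:ℝ) ^ ((3:ℝ)/2) ≤ 36 := by
    calc (6:ℝ) ^ ((3:ℝ)/2) ≤ 6 ^ (2:ℝ) := Real.rpow_le_rpow_of_exponent_le (by norm_num) (by norm_num)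
      _ = 36 := by norm_num
  have hR0 : 0 < R := by linarith
  rw [Real.mul_rpow (by norm_num) (by linarith)] at e1
  have e3 : R ^ ((3:ℝ)/2) / R ^ 2 = R ^ (-((1:ℝ)/2)) := by
    rw [← Real.rpow_natCast, ← Real.rpow_sub hR0]; norm_num
  calc K * (4 + 2 * R) ^ ((3:ℝ)/2) / R ^ 2 ≤ K * (36 * R ^ ((3:ℝ)/2)) / R ^ 2 := by
        gcongr; exact e1.trans (by gcongr)
    _ = K * 36 * (R ^ ((3:ℝ)/2) / R ^ 2) := by ring
    _ = _ := by rw [e3]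

lemma X_logDeriv_symm (w : ℂ) : logDeriv X (1 - w) = - logDeriv X w := by
  have h : deriv X (1 - w) = - deriv X w := by
    have h1 : deriv (fun s => X (1 - s)) w = - deriv X (1 - w) := by
      rw [deriv_comp_const_sub]
    have h2 : (fun s => X (1 - s)) = X := funext X_one_sub
    rw [h2] at h1; rw [h1]; simp
  rw [logDeriv_apply, logDeriv_apply, X_one_sub, h]; ring

/-- `q w = (X'/X)(1/2 + w)`. -/
def q (w : ℂ) : ℂ := logDeriv X (1/2 + w)

lemma q_neg (w : ℂ) : q (-w) = - q w := by
  unfold q; rw [← X_logDeriv_symm]; congr 1; ring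


lemma pf_tendsto' (hRH : RiemannHypothesis) (w : ℂ) (hw : X (1/2 + w) ≠ 0) :
    Tendsto (fun R => ∑ z ∈ ZF R, (1 / (w - gam z * I) - 1 / (3/2 - gam z * I))) atTop
      (𝓝 (q w - q (3/2))) := by
  have := pf_tendsto (1/2 + w) hw
  have e : (1/2 + 3/2 : ℂ) = 2 := by norm_num
  unfold q; rw [e]
  refine this.congr fun R => ?_
  refine Finset.sum_congr rfl fun z _ => ?_
  rw [rho_eq hRH]
  congr 2
  · ring
  · ring

lemma re_term (hRH : RiemannHypothesis) (a t g : ℝ) : (1 / ((a:ℂ) + t * I - g * I)).re = a / (a ^ 2 + (t - g) ^ 2) := by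
  rw [one_div, Complex.inv_re]
  simp [Complex.normSq_apply]
  ring_nf

lemma X_ne_of_re (w : ℂ) (h : RiemannHypothesis) (hw : w.re ≠ 0) : X (1/2 + w) ≠ 0 := by
  intro h0
  have := X_zero_re h h0
  simp at this; exact hw this

lemma sum_real_tendsto (hRH : RiemannHypothesis) : Tendsto (fun R => ∑ z ∈ ZF R, (3/2) / ((3/2) ^ 2 + gam z ^ 2)) atTop
      (𝓝 (q (3/2)).re) := by
  have h := pf_tendsto' hRH (-(3/2)) (X_ne_of_re _ hRH (by norm_num))
  rw [q_neg] at h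
  have h2 := (Complex.continuous_re.tendsto _).comp h
  have h3 := h2.const_mul (-1/2)
  convert h3 using 1
  · ext R
    simp only [Function.comp, Complex.re_sum, Finset.mul_sum]
    refine Finset.sum_congr rfl fun z _ => ?_
    have e1 := re_term hRH (-(3/2)) 0 (gam z)
    have e2 := re_term hRH (3/2) 0 (gam z)
    push_cast at e1 e2
    simp only [zero_mul, add_zero] at e1 e2
    rw [Complex.sub_re, e1, e2]
    field_simp; ring
  · congr 1; simp; ring

lemma summable_g (hRH : RiemannHypothesis) : Summable (fun z : Z => 1 / (1 + gam z ^ 2)) := by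
  have h := sum_real_tendsto hRH
  have h1 : Summable (fun z : Z => (3/2) / ((3/2) ^ 2 + gam z ^ 2)) := by
    refine summable_of_sum_le (c := (q (3/2)).re) (fun z => by positivity) fun u => ?_
    have h2 : ∀ᶠ R in atTop, u ⊆ ZF R := ZF_tendsto.eventually (eventually_ge_atTop u)
    refine ge_of_tendsto h ?_
    filter_upwards [h2, eventually_gt_atTop 0] with R hR _
    exact Finset.sum_le_sum_of_subset_of_nonneg hR fun z _ _ => by positivity
  refine Summable.of_nonneg_of_le (fun z => by positivity) (fun z => ?_) (h1.mul_left (3/2))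
  rw [mul_div_assoc', div_le_div_iff₀ (by positivity) (by positivity)]
  nlinarith [sq_nonneg (gam z)]

lemma q_re_c (hRH : RiemannHypothesis) : HasSum (fun z : Z => (3/2) / ((3/2) ^ 2 + gam z ^ 2)) (q (3/2)).re := by
  have h := sum_real_tendsto hRH
  have hs : Summable (fun z : Z => (3/2) / ((3/2) ^ 2 + gam z ^ 2)) := by
    refine Summable.of_nonneg_of_le (fun z => by positivity) (fun z => ?_) ((summable_g hRH).mul_left (3/2))
    rw [mul_div_assoc', div_le_div_iff₀ (by positivity) (by positivity)]
    nlinarith [sq_nonneg (gam z)]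
  have h2 := hs.hasSum.comp ZF_tendsto
  have := tendsto_nhds_unique h2 h
  rw [← this]; exact hs.hasSum


/-- elementary comparison -/
lemma cmp_sq (t g : ℝ) : 1 + g ^ 2 ≤ 2 * (1 + t ^ 2) * (1 + (t - g) ^ 2) := by
  nlinarith [sq_nonneg (t + (t - g)), sq_nonneg (t * (t - g)), sq_nonneg t, sq_nonneg (t-g)]

lemma cmp_norm (a t g : ℝ) (ha : a ≠ 0) : 1 / ‖(a:ℂ) + t * I - g * I‖ ≤
    (1 + 1/|a|) * (2 * (1 + |t|)) / Real.sqrt (1 + g ^ 2) := by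
  have e : (a:ℂ) + t * I - g * I = ((a:ℝ):ℂ) + ((t - g : ℝ):ℂ) * I := by push_cast; ring
  have hn : ‖(a:ℂ) + t * I - g * I‖ ^ 2 = a ^ 2 + (t - g) ^ 2 := by
    rw [e, ← Complex.normSq_eq_norm_sq, Complex.normSq_add_mul_I]
  have hpos : 0 < ‖(a:ℂ) + t * I - g * I‖ := by
    exact norm_pos_iff.mpr fun h => ha (by simpa using congrArg Complex.re h)
  have hs : 0 < Real.sqrt (1 + g^2) := by positivity
  rw [div_le_div_iff₀ hpos hs, one_mul]
  have ha' : 0 < |a| := abs_pos.mpr ha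
  refine Real.sqrt_le_iff.mpr ⟨by positivity, ?_⟩
  rw [mul_pow, hn]
  have h1 : 1 + (t-g)^2 ≤ (1 + 1/|a|)^2 * (a^2 + (t-g)^2) := by
    have e1 : (1 + 1/|a|)^2 * (a^2 + (t-g)^2) = (|a| + 1)^2 + (1 + 1/|a|)^2 * (t-g)^2 := by
      rw [← sq_abs a]; field_simp
    rw [e1]
    have e2 : 1 ≤ (1 + 1/|a|)^2 := one_le_pow₀ (by have : 0 ≤ 1/|a| := by positivity
                                                   linarith)
    nlinarith [sq_nonneg (t-g), sq_nonneg |a|]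
  have h2 : 2 * (1 + t^2) ≤ (2 * (1 + |t|))^2 := by
    nlinarith [abs_nonneg t, sq_abs t]
  calc 1 + g^2 ≤ 2 * (1 + t^2) * (1 + (t-g)^2) := cmp_sq t g
    _ ≤ (2 * (1 + |t|))^2 * ((1 + 1/|a|)^2 * (a^2 + (t-g)^2)) := by gcongr
    _ = _ := by ring

lemma cmp_diff (a t g : ℝ) (ha : a ≠ 0) :
    ‖1 / ((a:ℂ) + t * I - g * I) - 1 / (3/2 - g * I)‖ ≤
      (4 * (1 + |a|) * (1 + 1/|a|)) * (2 * (1 + |t|) ^ 2) * (2 * (1/(1 + g ^ 2))) := by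
  have h1 := cmp_norm a t g ha
  have h2 := cmp_norm (3/2) 0 g (by norm_num)
  have n1 : (a:ℂ) + t * I - g * I ≠ 0 := fun h => ha (by simpa using congrArg Complex.re h)
  have n2 : (3/2:ℂ) - g * I ≠ 0 := fun h => by simpa using congrArg Complex.re h
  have e : 1 / ((a:ℂ) + t * I - g * I) - 1 / (3/2 - g * I) =
      ((3/2 - a : ℝ) - t * I) * ((1 / ((a:ℂ) + t * I - g * I)) * (1 / (3/2 - g * I))) := by
    rw [div_sub_div _ _ n1 n2, one_div_mul_one_div, mul_one_div]; push_cast; ring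
  rw [e, norm_mul, norm_mul, norm_div, norm_div, norm_one]
  have h3 : ‖(((3/2 - a : ℝ):ℂ) - t * I)‖ ≤ 3/2 * ((1 + |a|) * (1 + |t|)) := by
    refine (norm_sub_le _ _).trans ?_
    rw [norm_mul, Complex.norm_I, mul_one, Complex.norm_real, Complex.norm_real, Real.norm_eq_abs, Real.norm_eq_abs]
    have : |3/2 - a| ≤ 3/2 + |a| := (abs_sub _ _).trans (by norm_num)
    nlinarith [abs_nonneg a, abs_nonneg t, mul_nonneg (abs_nonneg a) (abs_nonneg t)]
  have hs : Real.sqrt (1 + g^2) * Real.sqrt (1 + g^2) = 1 + g^2 := Real.mul_self_sqrt (by positivity)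
  have h2' : 1 / ‖(3/2:ℂ) - g * I‖ ≤ (1 + 1/(3/2)) * 2 / Real.sqrt (1 + g^2) := by
    have := h2
    push_cast at this
    simpa [abs_of_pos (by norm_num : (0:ℝ) < 3/2)] using this
  have ha' : 0 < |a| := abs_pos.mpr ha
  calc _ ≤ 3/2 * ((1 + |a|) * (1 + |t|)) * (((1 + 1/|a|) * (2 * (1 + |t|)) / Real.sqrt (1 + g ^ 2)) *
        ((1 + 1/(3/2)) * 2 / Real.sqrt (1 + g^2))) := by gcongr
    _ = 10 * ((1 + |a|) * (1 + 1/|a|) * (1 + |t|)^2) / (Real.sqrt (1 + g^2) * Real.sqrt (1 + g^2)) := by ring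
    _ ≤ _ := by
      rw [hs, div_eq_mul_one_div]
      have : 0 ≤ ((1 + |a|) * (1 + 1/|a|) * (1 + |t|)^2) * (1 / (1+g^2)) := by positivity
      nlinarith


/-- partial fractions -/
lemma q_pf (hRH : RiemannHypothesis) (a t : ℝ) (ha : a ≠ 0) :
    HasSum (fun z : Z => 1 / ((a:ℂ) + t * I - gam z * I) - 1 / (3/2 - gam z * I)) (q (a + t * I) - q (3/2)) := by
  have hs : Summable (fun z : Z => 1 / ((a:ℂ) + t * I - gam z * I) - 1 / (3/2 - gam z * I)) := by
    refine Summable.of_norm_bounded (((summable_g hRH).mul_left 2).mul_left _) (fun z => cmp_diff a t (gam z) ha)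
  have h1 := hs.hasSum.comp ZF_tendsto
  have h2 := pf_tendsto' hRH (a + t * I) (X_ne_of_re _ hRH (by simpa using ha))
  have := tendsto_nhds_unique h1 h2
  rw [← this]; exact hs.hasSum

lemma q_re (hRH : RiemannHypothesis) (a t : ℝ) (ha : a ≠ 0) :
    HasSum (fun z : Z => a / (a ^ 2 + (t - gam z) ^ 2)) (q (a + t * I)).re := by
  have h1 := (q_pf hRH a t ha).mapL Complex.reCLM
  have h2 := h1.add (q_re_c hRH)
  convert h2 using 1
  · ext z
    have e1 := re_term hRH a t (gam z)
    have e2 := re_term hRH (3/2) 0 (gam z)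
    push_cast at e2
    simp only [zero_mul, add_zero] at e2
    simp only [Complex.reCLM_apply, Complex.sub_re, e1, e2]; ring
  · simp

end Mont

namespace Mont
open scoped Topology

/-- real digamma -/
def dig (x : ℝ) : ℝ := deriv (Real.log ∘ Real.Gamma) x

lemma digamma_real (x : ℝ) (hx : 0 < x) : Complex.digamma x = (dig x : ℂ) := by
  have hG : Real.Gamma x ≠ 0 := (Real.Gamma_pos_of_pos hx).ne'
  have hd : DifferentiableAt ℝ Real.Gamma x :=
    Real.differentiableAt_Gamma fun m => by have : (0:ℝ) ≤ m := m.cast_nonneg; linarith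
  have hc : DifferentiableAt ℂ Complex.Gamma x := by
    refine Complex.differentiableAt_Gamma _ fun m h => ?_
    have := congrArg Complex.re h
    simp at this
    have : (0:ℝ) ≤ m := m.cast_nonneg
    linarith
  have h1 := hc.hasDerivAt.comp_ofReal
  have h2 := hd.hasDerivAt.ofReal_comp
  have h3 : (fun y : ℝ => Complex.Gamma y) = fun y => ((Real.Gamma y : ℝ) : ℂ) :=
    funext fun y => Complex.Gamma_ofReal y
  rw [h3] at h1
  have h4 := h1.unique h2
  have h5 : dig x = deriv Real.Gamma x / Real.Gamma x := by
    have := hd.hasDerivAt.log hG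
    exact this.deriv
  rw [Complex.digamma_def, logDeriv_apply, h4, Complex.Gamma_ofReal, h5]
  push_cast; rfl

lemma dig_mono : MonotoneOn dig (Ioi 0) := by
  refine Real.convexOn_log_Gamma.monotoneOn_deriv fun x hx => ?_
  have hx' : (0:ℝ) < x := hx
  have hG : Real.Gamma x ≠ 0 := (Real.Gamma_pos_of_pos hx').ne'
  have hd : DifferentiableAt ℝ Real.Gamma x :=
    Real.differentiableAt_Gamma fun m => by have : (0:ℝ) ≤ m := m.cast_nonneg; linarith
  exact hd.log hG

lemma dig_succ (x : ℝ) (hx : 0 < x) : dig (x + 1) = dig x + 1 / x := by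
  have h := Complex.digamma_apply_add_one x fun m h => by
    have := congrArg Complex.re h
    simp at this
    have : (0:ℝ) ≤ m := m.cast_nonneg
    linarith
  have e : ((x:ℂ) + 1) = ((x + 1 : ℝ) : ℂ) := by push_cast; rfl
  rw [e, digamma_real _ (by linarith), digamma_real _ hx] at h
  rw [one_div]; exact_mod_cast h

lemma dig_add (x : ℝ) (hx : 0 < x) (n : ℕ) : dig (x + n) = dig x + ∑ k ∈ Finset.range n, 1 / (x + k) := by
  induction n with
  | zero => simp
  | succ n ih =>
    rw [Finset.sum_range_succ, ← add_assoc, ← ih, ← dig_succ _ (by positivity)]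
    push_cast; ring_nf

lemma dig_term (k : ℕ) (z : ℂ) (hz : 0 < z.re) :
    ‖1 / ((k:ℂ) + 1) - 1 / (z + k + 1)‖ ≤ ‖z‖ * (1 / ((k:ℝ) + 1) ^ 2) := by
  have hk : (0:ℝ) ≤ k := k.cast_nonneg
  have h1 : ((k:ℝ) + 1) ≤ ‖z + k + 1‖ := by
    refine le_trans ?_ (Complex.re_le_norm _); simp; linarith
  have n1 : (k:ℂ) + 1 ≠ 0 := by exact_mod_cast (Nat.succ_ne_zero k)
  have n2 : z + k + 1 ≠ 0 := norm_pos_iff.mp (by linarith)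
  have e : 1 / ((k:ℂ) + 1) - 1 / (z + k + 1) = z / (((k:ℂ) + 1) * (z + k + 1)) := by
    rw [div_sub_div _ _ n1 n2]; congr 1; ring
  have n3 : ‖(k:ℂ) + 1‖ = k + 1 := by
    rw [show (k:ℂ) + 1 = ((k + 1 : ℝ):ℂ) by push_cast; rfl, Complex.norm_real, Real.norm_of_nonneg (by linarith)]
  rw [e, norm_div, norm_mul, n3, div_eq_mul_one_div]
  have : ((k:ℝ) + 1) ^ 2 ≤ (k + 1) * ‖z + k + 1‖ := by rw [sq]; gcongr
  gcongr

lemma summable_sq1 : Summable (fun k : ℕ => 1 / ((k:ℝ) + 1) ^ 2) := by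
  have := (summable_nat_add_iff 1).mpr (Real.summable_one_div_nat_pow.mpr (by norm_num : 1 < 2))
  refine this.congr fun k => by push_cast; rfl

lemma dig_summable (z : ℂ) (hz : 0 < z.re) :
    Summable (fun k : ℕ => 1 / ((k:ℂ) + 1) - 1 / (z + k + 1)) :=
  Summable.of_norm_bounded (summable_sq1.mul_left ‖z‖) fun k => dig_term k z hz

lemma dig_series_real (x : ℝ) (h0 : 0 < x) (h1 : x < 1) :
    ∑' k : ℕ, (1 / ((k:ℂ) + 1) - 1 / ((x:ℂ) + k + 1)) = ((dig (1 + x) - dig 1 : ℝ) : ℂ) := by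
  have hs := dig_summable x (by simpa using h0)
  have hT := hs.hasSum.tendsto_sum_nat
  refine tendsto_nhds_unique hT ?_
  have e : ∀ n : ℕ, ∑ k ∈ Finset.range n, (1 / ((k:ℂ) + 1) - 1 / ((x:ℂ) + k + 1)) =
      ((dig (1 + x) - dig 1 - (dig (1 + x + n) - dig (1 + n)) : ℝ) : ℂ) := by
    intro n
    rw [dig_add (1+x) (by linarith), dig_add 1 one_pos]
    have : dig (1 + x) - dig 1 - (dig (1 + x) + ∑ k ∈ Finset.range n, 1 / (1 + x + (k:ℝ)) - (dig 1 + ∑ k ∈ Finset.range n, 1 / (1 + (k:ℝ))))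
       = ∑ k ∈ Finset.range n, (1 / ((k:ℝ) + 1) - 1 / (x + k + 1)) := by
      rw [Finset.sum_sub_distrib]
      have e1 : ∀ k : ℕ, 1 / (1 + x + (k:ℝ)) = 1 / (x + k + 1) := fun k => by congr 1; ring
      have e2 : ∀ k : ℕ, 1 / (1 + (k:ℝ)) = 1 / ((k:ℝ) + 1) := fun k => by congr 1; ring
      simp only [e1, e2]; ring
    rw [this]; push_cast; rfl
  have hz : Tendsto (fun n : ℕ => dig (1 + x + n) - dig (1 + n)) atTop (𝓝 0) := by
    have h1n : Tendsto (fun n : ℕ => 1 / ((n:ℝ) + 1)) atTop (𝓝 0) := tendsto_one_div_add_atTop_nhds_zero_nat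
    refine squeeze_zero (fun n => ?_) (fun n => ?_) h1n
    · have : (0:ℝ) ≤ n := n.cast_nonneg
      exact sub_nonneg.mpr (dig_mono (by simp; linarith) (by simp; linarith) (by linarith))
    · have : (0:ℝ) ≤ n := n.cast_nonneg
      have h2 := dig_succ (1 + n) (by linarith)
      have h3 : dig (1 + x + n) ≤ dig (1 + n + 1) := dig_mono (by simp; linarith) (by simp; linarith) (by linarith)
      rw [add_comm (n:ℝ) 1]; linarith
  simp only [e]
  refine (Complex.continuous_ofReal.tendsto _).comp ?_
  simpa using tendsto_const_nhds.sub hz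

lemma digamma_series (z : ℂ) (hz : 0 < z.re) :
    Complex.digamma (z + 1) = Complex.digamma 1 + ∑' k : ℕ, (1 / ((k:ℂ) + 1) - 1 / (z + k + 1)) := by
  set U : Set ℂ := {w : ℂ | 0 < w.re} ∩ Metric.ball 0 (‖z‖ + 1) with hU
  have hUo : IsOpen U := (isOpen_lt continuous_const Complex.continuous_re).inter Metric.isOpen_ball
  have hUc : Convex ℝ U := (convex_halfSpace_re_gt 0).inter (convex_ball _ _)
  have hf : DifferentiableOn ℂ (fun z => Complex.digamma (z + 1)) U := by
    intro w hw
    have hw0 : 0 < w.re := hw.1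
    have hd : ∀ v : ℂ, 0 < v.re → DifferentiableAt ℂ Complex.Gamma v := fun v hv => by
      refine Complex.differentiableAt_Gamma _ fun m h => ?_
      have := congrArg Complex.re h
      simp at this
      have : (0:ℝ) ≤ m := m.cast_nonneg
      linarith
    have hGo : DifferentiableOn ℂ Complex.Gamma {v : ℂ | 0 < v.re} := fun v hv => (hd v hv).differentiableWithinAt
    have ho : IsOpen {v : ℂ | 0 < v.re} := isOpen_lt continuous_const Complex.continuous_re
    have h1 : (0:ℝ) < (w+1).re := by simp; linarith
    have hD : DifferentiableAt ℂ Complex.digamma (w + 1) := by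
      have ha := hGo.analyticAt (ho.mem_nhds h1)
      exact (ha.deriv.differentiableAt).div ha.differentiableAt (Complex.Gamma_ne_zero_of_re_pos h1)
    have hDc : DifferentiableAt ℂ (Complex.digamma ∘ fun z => z + 1) w := DifferentiableAt.comp w hD (by fun_prop)
    exact hDc.differentiableWithinAt
  have hg : DifferentiableOn ℂ (fun z : ℂ => Complex.digamma 1 + ∑' k : ℕ, (1 / ((k:ℂ) + 1) - 1 / (z + k + 1))) U := by
    refine DifferentiableOn.const_add _ ?_
    refine differentiableOn_tsum_of_summable_norm (summable_sq1.mul_left (‖z‖ + 1)) (fun k => ?_) hUo (fun k w hw => ?_)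
    · intro w hw
      have : w + k + 1 ≠ 0 := fun h => by
        have h2 := congrArg Complex.re h
        simp at h2
        have : (0:ℝ) ≤ k := k.cast_nonneg
        have h3 : 0 < w.re := hw.1
        linarith
      refine DifferentiableAt.differentiableWithinAt ?_
      fun_prop (disch := assumption)
    · refine (dig_term k w hw.1).trans ?_
      have : ‖w‖ < ‖z‖ + 1 := by simpa using hw.2
      gcongr
  have hzU : z ∈ U := ⟨hz, by simp⟩
  obtain ⟨z₀, hz₀, hz₀U⟩ : ∃ x : ℝ, (0 < x ∧ x < 1) ∧ (x:ℂ) ∈ U := ⟨1/2, by norm_num, by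
    refine ⟨by simp, ?_⟩
    simp; have := norm_nonneg z; norm_num; linarith⟩
  refine (hf.analyticOnNhd hUo).eqOn_of_preconnected_of_frequently_eq (hg.analyticOnNhd hUo) hUc.isPreconnected hz₀U ?_ hzU
  have htend : Tendsto (fun x : ℝ => (x:ℂ)) (𝓝[≠] z₀) (𝓝[≠] (z₀:ℂ)) := by
    refine tendsto_nhdsWithin_of_tendsto_nhds_of_eventually_within _
      ((Complex.continuous_ofReal.tendsto z₀).mono_left nhdsWithin_le_nhds) ?_
    filter_upwards [self_mem_nhdsWithin] with x hx
    simpa using hx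
  refine htend.frequently (Eventually.frequently ?_)
  have hm : Ioo (0:ℝ) 1 ∈ 𝓝[≠] z₀ := mem_nhdsWithin_of_mem_nhds (isOpen_Ioo.mem_nhds hz₀)
  filter_upwards [hm] with x hx
  rw [dig_series_real x hx.1 hx.2]
  have e : ((x:ℂ) + 1) = ((1 + x : ℝ) : ℂ) := by push_cast; ring
  have e1 := digamma_real 1 one_pos
  push_cast at e1
  rw [e, digamma_real _ (by linarith [hx.1]), e1]
  push_cast; ring

/-- trivial-zero part -/
def Dser (s : ℂ) : ℂ := ∑' k : ℕ, (1 / (2 * ((k:ℂ) + 1)) - 1 / (s + 2 * (k + 1)))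

lemma Dser_summable (s : ℂ) (hs : 0 < s.re) :
    Summable (fun k : ℕ => (1 / (2 * ((k:ℂ) + 1)) - 1 / (s + 2 * (k + 1)))) := by
  have h := (dig_summable (s/2) (by simpa using hs)).mul_left (1/2)
  refine h.congr fun k => ?_
  rw [mul_sub, one_div_mul_one_div, one_div_mul_one_div]
  congr 2; ring

lemma Dser_eq (s : ℂ) (hs : 0 < s.re) :
    1 / 2 * Complex.digamma (s/2 + 1) = 1/2 * Complex.digamma 1 + Dser s := by
  rw [digamma_series (s/2) (by simpa using hs), mul_add, ← tsum_mul_left, Dser]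
  congr 1
  refine tsum_congr fun k => ?_
  rw [mul_sub, one_div_mul_one_div, one_div_mul_one_div]
  congr 2; ring

def c0 : ℂ := 1/2 * Complex.digamma 1 - Real.log π / 2

lemma Gammaℝ_logDeriv (s : ℂ) (hs : 0 < s.re) :
    logDeriv Gammaℝ s + 1 / s = c0 + Dser s := by
  have hs0 : s ≠ 0 := by rintro rfl; simp at hs
  have hs2 : 0 < (s/2).re := by simpa using hs
  have hd : DifferentiableAt ℂ Complex.Gamma (s/2) := by
    refine Complex.differentiableAt_Gamma _ fun m h => ?_
    have := congrArg Complex.re h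
    simp at this
    have : (0:ℝ) ≤ m := m.cast_nonneg
    linarith
  have hpi : (π:ℂ) ≠ 0 := by exact_mod_cast Real.pi_ne_zero
  have h1 : HasDerivAt (fun s : ℂ => (π:ℂ) ^ (-s/2)) ((π:ℂ) ^ (-s/2) * Complex.log π * (-1/2)) s := by
    have := (((hasDerivAt_id s).neg).div_const 2).const_cpow (c := (π:ℂ)) (Or.inl hpi)
    simpa using this
  have h2 : HasDerivAt (fun s : ℂ => Complex.Gamma (s/2)) (deriv Complex.Gamma (s/2) * (1/2)) s :=
    HasDerivAt.comp s hd.hasDerivAt ((hasDerivAt_id s).div_const 2)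
  have h3 := h1.mul h2
  have hG : Complex.Gamma (s/2) ≠ 0 := Complex.Gamma_ne_zero_of_re_pos hs2
  have hP : (π:ℂ) ^ (-s/2) ≠ 0 := by simp [Complex.cpow_eq_zero_iff, hpi]
  have h4 : logDeriv Gammaℝ s = -Complex.log π / 2 + 1/2 * Complex.digamma (s/2) := by
    have e : Gammaℝ = fun s => (π:ℂ) ^ (-s/2) * Complex.Gamma (s/2) := rfl
    have h3' : HasDerivAt Gammaℝ _ s := h3
    rw [logDeriv_apply, h3'.deriv, Complex.digamma_def, logDeriv_apply, Complex.Gammaℝ_def]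
    field_simp
  have h5 := Complex.digamma_apply_add_one (s/2) fun m h => by
    have := congrArg Complex.re h
    simp at this
    have : (0:ℝ) ≤ m := m.cast_nonneg
    linarith
  have h6 := Dser_eq s hs
  rw [h5] at h6
  rw [h4, c0, Complex.ofReal_log Real.pi_pos.le]
  linear_combination h6 + 1/s - 1/2 * (s/2)⁻¹

open ArithmeticFunction LSeries in
/-- logarithmic derivative formula -/
lemma q_formula (w : ℂ) (hw : 1/2 < w.re) :
    q w = 1 / (w - 1/2) + c0 + Dser (w + 1/2) - LSeries (fun n => (Λ n : ℂ)) (w + 1/2) := by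
  obtain ⟨s, hs⟩ : ∃ s, s = 1/2 + w := ⟨_, rfl⟩
  have hsw : w + 1/2 = s := by rw [hs]; ring
  have hre : 1 < s.re := by simp [hs]; norm_num at *; linarith
  have hs0 : s ≠ 0 := by rintro h; rw [h] at hre; simp at hre; linarith
  have hs1 : s ≠ 1 := by rintro h; rw [h] at hre; simp at hre
  have hpos : 0 < s.re := by linarith
  have hG0 := Gammaℝ_ne_zero_of_re_pos hpos
  have hz0 := riemannZeta_ne_zero_of_one_le_re hre.le
  have hev : X =ᶠ[𝓝 s] fun s => (s * (s-1)) * (Gammaℝ s * riemannZeta s) := by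
    have ho : IsOpen {z : ℂ | 1 < z.re} := isOpen_lt continuous_const Complex.continuous_re
    filter_upwards [ho.mem_nhds hre] with z hz
    have hz' : 1 < z.re := hz
    rw [X_eq_zeta z (by rintro rfl; simp at hz'; linarith) (by rintro rfl; simp at hz')
      (Gammaℝ_ne_zero_of_re_pos (by linarith))]; ring
  have hGd : DifferentiableAt ℂ Gammaℝ s := by
    have hGan : AnalyticAt ℂ (fun s => (Gammaℝ s)⁻¹) s := differentiable_Gammaℝ_inv.analyticAt s
    have := hGan.inv (inv_ne_zero hG0)
    refine (this.congr (Eventually.of_forall fun z => ?_)).differentiableAt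
    simp
  have hzd : DifferentiableAt ℂ riemannZeta s := differentiableAt_riemannZeta hs1
  have h1s : s - 1 ≠ 0 := sub_ne_zero.mpr hs1
  have hld : logDeriv X s = logDeriv (fun s => (s * (s-1)) * (Gammaℝ s * riemannZeta s)) s := by
    rw [logDeriv_apply, logDeriv_apply, hev.deriv_eq, hev.eq_of_nhds]
  have hpoly : logDeriv (fun s : ℂ => s * (s-1)) s = 1/s + 1/(s-1) := by
    rw [logDeriv_mul s hs0 h1s (by fun_prop) (by fun_prop)]
    simp [logDeriv_apply]
  have hL := LSeries_vonMangoldt_eq_deriv_riemannZeta_div hre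
  unfold q
  rw [hsw, ← hs, hld]
  have hm1 := logDeriv_mul (f := fun s : ℂ => s * (s-1)) (g := fun s => Gammaℝ s * riemannZeta s) s
    (mul_ne_zero hs0 h1s) (mul_ne_zero hG0 hz0) (by fun_prop) (hGd.mul hzd)
  have hm2 := logDeriv_mul (f := Gammaℝ) (g := riemannZeta) s hG0 hz0 hGd hzd
  rw [hm1, hpoly, hm2]
  have h7 := Gammaℝ_logDeriv s hpos
  have e1 : w - 1/2 = s - 1 := by rw [hs]; ring
  have h8 : logDeriv riemannZeta s = deriv riemannZeta s / riemannZeta s := logDeriv_apply _ _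
  rw [e1, hL, h8]
  linear_combination h7

end Mont

namespace Mont
open scoped Topology

lemma tail_sq (K : ℕ) (hK : 1 ≤ K) (n : ℕ) :
    ∑ k ∈ Finset.range n, 1 / (((k + K : ℕ):ℝ) + 1) ^ 2 ≤ 1 / (K:ℝ) - 1 / ((n:ℝ) + K) := by
  have hK' : (1:ℝ) ≤ K := by exact_mod_cast hK
  induction n with
  | zero => simp
  | succ n ih =>
    rw [Finset.sum_range_succ]
    have h : 1 / (((n + K : ℕ):ℝ) + 1) ^ 2 ≤ 1 / ((n:ℝ) + K) - 1 / (((n+1:ℕ):ℝ) + K) := by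
      have hn : (0:ℝ) ≤ n := n.cast_nonneg
      push_cast
      rw [div_sub_div _ _ (by positivity) (by positivity), div_le_div_iff₀ (by positivity) (by positivity)]
      nlinarith
    linarith

lemma Dser_term (k : ℕ) (s : ℂ) (hs : 0 < s.re) :
    ‖1 / (2 * ((k:ℂ) + 1)) - 1 / (s + 2 * (k + 1))‖ ≤ ‖s‖ / 4 * (1 / ((k:ℝ) + 1) ^ 2) := by
  have h := dig_term k (s/2) (by simpa using hs)
  have e : 1 / (2 * ((k:ℂ) + 1)) - 1 / (s + 2 * (k + 1)) = 1/2 * (1 / ((k:ℂ) + 1) - 1 / (s/2 + k + 1)) := by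
    rw [mul_sub, one_div_mul_one_div, one_div_mul_one_div]
    congr 2; ring
  rw [e, norm_mul]
  rw [norm_div, Complex.norm_ofNat] at h
  have : ‖(1/2:ℂ)‖ = 1/2 := by norm_num
  rw [this]; linarith

lemma Dser_bound (σ : ℝ) (hσ : 0 < σ) : ∃ C : ℝ, ∀ t : ℝ, ‖Dser (σ + t * I)‖ ≤ 1/2 * Real.log (|t| + 2) + C := by
  refine ⟨1/2 + 2 + (σ+1)/4, fun t => ?_⟩
  set s : ℂ := σ + t * I with hs
  have hre : 0 < s.re := by simpa [hs] using hσ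
  have hsum := Dser_summable s hre
  set K := ⌈|t|⌉₊ + 1 with hK
  have hK1 : 1 ≤ K := by omega
  have hKt : |t| ≤ (K:ℝ) - 1 := by rw [hK]; push_cast; have := Nat.le_ceil |t|; linarith
  have hKt2 : (K:ℝ) ≤ |t| + 2 := by
    rw [hK]; push_cast; have := Nat.ceil_lt_add_one (abs_nonneg t); linarith
  have hK1' : (1:ℝ) ≤ K := by exact_mod_cast hK1
  rw [Dser, ← hsum.sum_add_tsum_nat_add K]
  refine (norm_add_le _ _).trans ?_
  have hA : ‖∑ k ∈ Finset.range K, (1 / (2 * ((k:ℂ) + 1)) - 1 / (s + 2 * (k + 1)))‖ ≤ 1/2 * Real.log (|t|+2) + 1/2 + 2 := by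
    rw [Finset.sum_sub_distrib]
    refine (norm_sub_le _ _).trans ?_
    have h1 : ‖∑ k ∈ Finset.range K, 1 / (2 * ((k:ℂ) + 1))‖ ≤ 1/2 * (1 + Real.log (|t|+2)) := by
      have e : ∑ k ∈ Finset.range K, 1 / (2 * ((k:ℂ) + 1)) = ((1/2 * (harmonic K : ℝ) : ℝ) : ℂ) := by
        simp only [harmonic]
        push_cast
        rw [Finset.mul_sum]
        refine Finset.sum_congr rfl fun k _ => ?_
        rw [one_div, mul_inv]; norm_num
      have hh := harmonic_le_one_add_log K
      have hh0 : (0:ℝ) ≤ (harmonic K : ℝ) := by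
        exact_mod_cast (by unfold harmonic; positivity : (0:ℚ) ≤ harmonic K)
      rw [e, Complex.norm_real, Real.norm_of_nonneg (by positivity)]
      have : Real.log K ≤ Real.log (|t|+2) := Real.log_le_log (by linarith) hKt2
      linarith
    have h2 : ‖∑ k ∈ Finset.range K, 1 / (s + 2 * ((k:ℂ) + 1))‖ ≤ 2 := by
      have hm : ∀ k ∈ Finset.range K, ‖1 / (s + 2 * ((k:ℂ) + 1))‖ ≤ 1 / ((|t|+2)/2) := by
        intro k _
        rw [norm_div, norm_one]
        have hk : (0:ℝ) ≤ k := k.cast_nonneg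
        have a1 : 2 ≤ ‖s + 2 * ((k:ℂ) + 1)‖ := by
          refine le_trans ?_ (Complex.re_le_norm _); simp [hs]; linarith
        have a2 : |t| ≤ ‖s + 2 * ((k:ℂ) + 1)‖ := by
          refine le_trans (le_of_eq ?_) (Complex.abs_im_le_norm _); simp [hs]
        have : 0 ≤ |t| := abs_nonneg t
        refine one_div_le_one_div_of_le (by linarith) (by linarith)
      refine (norm_sum_le_of_le _ hm).trans ?_
      rw [Finset.sum_const, Finset.card_range, nsmul_eq_mul]
      have : 0 ≤ |t| := abs_nonneg t
      rw [mul_one_div, div_le_iff₀ (by linarith)]; linarith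
    linarith
  have hB : ‖∑' k : ℕ, (1 / (2 * (((k + K : ℕ):ℂ) + 1)) - 1 / (s + 2 * (((k + K : ℕ):ℂ) + 1)))‖ ≤ (σ+1)/4 := by
    have hsn : ‖s‖ ≤ (σ + 1) * K := by
      have : ‖s‖ ≤ σ + |t| := by
        rw [hs]; refine (norm_add_le _ _).trans ?_
        rw [norm_mul, Complex.norm_I, mul_one, Complex.norm_real, Complex.norm_real, Real.norm_of_nonneg hσ.le, Real.norm_eq_abs]
      nlinarith
    have hsm : Summable (fun k : ℕ => 1 / (((k + K : ℕ):ℝ) + 1) ^ 2) := (summable_nat_add_iff K).mpr summable_sq1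
    have hle : ∑' k : ℕ, 1 / (((k + K : ℕ):ℝ) + 1) ^ 2 ≤ 1 / (K:ℝ) := by
      refine Real.tsum_le_of_sum_range_le (fun k => by positivity) fun n => ?_
      refine (tail_sq K hK1 n).trans ?_
      have : 0 ≤ 1 / ((n:ℝ) + K) := by positivity
      linarith
    refine (tsum_of_norm_bounded (hsm.mul_left (‖s‖/4)).hasSum fun k => Dser_term _ s hre).trans ?_
    rw [tsum_mul_left]
    calc ‖s‖/4 * ∑' k : ℕ, 1 / (((k + K : ℕ):ℝ) + 1) ^ 2 ≤ ((σ+1) * K)/4 * (1 / K) := by gcongr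
      _ = _ := by field_simp
  linarith

lemma log_ge (t : ℝ) : 1/2 ≤ Real.log (|t| + 2) := by
  have := Real.log_two_gt_d9
  have h : Real.log 2 ≤ Real.log (|t|+2) := Real.log_le_log (by norm_num) (by linarith [abs_nonneg t])
  linarith

open ArithmeticFunction in
lemma LS_bound : ∃ C : ℝ, ∀ s : ℂ, s.re = 3/2 → ‖LSeries (fun n => (Λ n : ℂ)) s‖ ≤ C := by
  have hs : LSeriesSummable (fun n => (Λ n : ℂ)) (3/2 : ℂ) := LSeriesSummable_vonMangoldt (by norm_num)
  refine ⟨∑' n, ‖LSeries.term (fun n => (Λ n : ℂ)) (3/2 : ℂ) n‖, fun s h => ?_⟩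
  refine tsum_of_norm_bounded hs.norm.hasSum fun n => ?_
  refine le_of_eq ?_
  rw [LSeries.norm_term_eq, LSeries.norm_term_eq, h]
  norm_num

lemma density (hRH : RiemannHypothesis) : ∃ C : ℝ, 0 < C ∧ ∀ t : ℝ, Summable (fun z : Z => 1 / (1 + (t - gam z)^2)) ∧
    ∑' z : Z, 1 / (1 + (t - gam z)^2) ≤ C * Real.log (|t| + 2) := by
  obtain ⟨C1, h1⟩ := Dser_bound (3/2) (by norm_num)
  obtain ⟨C2, h2⟩ := LS_bound
  set B := |C1| + |C2| + 2 + ‖c0‖ with hB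
  have hBpos : 0 < B := by positivity
  refine ⟨1/2 + 2 * B, by positivity, fun t => ?_⟩
  have h := q_re hRH 1 t one_ne_zero
  norm_num only [one_pow] at h
  refine ⟨h.summable, ?_⟩
  rw [h.tsum_eq]
  refine (Complex.re_le_norm _).trans ?_
  have e := q_formula ((1:ℝ) + t * I) (by simp; norm_num)
  rw [e]
  have e1 : ((1:ℝ):ℂ) + t * I + 1/2 = ((3/2 : ℝ):ℂ) + t * I := by push_cast; ring
  rw [e1]
  have a1 := h1 t
  have a2 := h2 (((3/2 : ℝ):ℂ) + t * I) (by simp)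
  have a3 : ‖1 / (((1:ℝ):ℂ) + t * I - 1/2)‖ ≤ 2 := by
    rw [norm_div, norm_one, div_le_iff₀]
    · have : (1/2:ℝ) ≤ ‖((1:ℝ):ℂ) + t * I - 1/2‖ := by
        refine le_trans (le_of_eq ?_) (Complex.re_le_norm _); norm_num
      linarith
    · refine norm_pos_iff.mpr fun h => ?_
      have := congrArg Complex.re h
      norm_num at this
  have a4 := log_ge t
  have a5 := norm_sub_le (1 / (((1:ℝ):ℂ) + t * I - 1/2) + c0 + Dser (((3/2 : ℝ):ℂ) + t * I)) (LSeries (fun n => (ArithmeticFunction.vonMangoldt n : ℂ)) (((3/2 : ℝ):ℂ) + t * I))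
  have a6 := norm_add₃_le (a := 1 / (((1:ℝ):ℂ) + t * I - 1/2)) (b := c0) (c := Dser (((3/2 : ℝ):ℂ) + t * I))
  have := le_abs_self C1
  have := le_abs_self C2
  nlinarith

end Mont

namespace Mont
open scoped Topology

def phi0 : ContDiffBump (0:ℝ) := ⟨1/8, 1/4, by norm_num, by norm_num⟩

lemma phi0_sq_pos : 0 < ∫ v, (phi0 v)^2 := by
  have hc : Continuous fun v => (phi0 v)^2 := phi0.continuous.pow 2
  have hs : HasCompactSupport fun v => (phi0 v)^2 := by
    have := phi0.hasCompactSupport.mul_left (f := fun v => phi0 v)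
    simpa [Pi.mul_def, sq] using this
  rw [integral_pos_iff_support_of_nonneg (fun v => by positivity) (hc.integrable_of_hasCompactSupport hs)]
  refine (hc.isOpen_support).measure_pos _ ⟨0, ?_⟩
  have : 0 < phi0 0 := phi0.pos_of_mem_ball (by simp [phi0])
  simp only [Function.mem_support]; positivity

def phi (v : ℝ) : ℝ := (√(2 * π * ∫ v, (phi0 v)^2))⁻¹ * phi0 v

lemma phi_smooth : ContDiff ℝ (⊤:ℕ∞) phi := contDiff_const.mul phi0.contDiff
lemma phi_supp : HasCompactSupport phi := phi0.hasCompactSupport.mul_left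
lemma phi_even (v : ℝ) : phi (-v) = phi v := by simp [phi, phi0.neg]
lemma phi_nonneg (v : ℝ) : 0 ≤ phi v := mul_nonneg (by positivity) phi0.nonneg
lemma phi_zero (v : ℝ) (h : 1/4 ≤ |v|) : phi v = 0 := by
  rw [phi, phi0.zero_of_le_dist, mul_zero]
  simpa [phi0] using h
lemma phi_cont : Continuous phi := phi_smooth.continuous
lemma phi_sq : ∫ v, (phi v)^2 = 1/(2*π) := by
  have h := phi0_sq_pos
  simp only [phi, mul_pow]
  rw [integral_const_mul, inv_pow, Real.sq_sqrt (by positivity)]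
  field_simp

lemma phi_bdd : ∃ C : ℝ, 0 < C ∧ ∀ v, phi v ≤ C := by
  refine ⟨(√(2 * π * ∫ v, (phi0 v)^2))⁻¹, ?_, fun v => ?_⟩
  · have h := phi0_sq_pos
    positivity
  · exact mul_le_of_le_one_right (by positivity) phi0.le_one

/-- Two-sided Laplace transform. -/
def HH (ψ : ℝ → ℝ) (z : ℂ) : ℂ := ∫ v : ℝ, (ψ v : ℂ) * cexp (v * z)

lemma HH_int (ψ : ℝ → ℝ) (h1 : Continuous ψ) (h2 : HasCompactSupport ψ) (z : ℂ) :
    Integrable fun v : ℝ => (ψ v : ℂ) * cexp (v * z) := by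
  refine Continuous.integrable_of_hasCompactSupport (by fun_prop) ?_
  refine HasCompactSupport.mul_right ?_
  exact h2.comp_left (g := fun x : ℝ => (x:ℂ)) (by simp)

lemma HH_ibp (ψ : ℝ → ℝ) (h1 : ContDiff ℝ (⊤:ℕ∞) ψ) (h2 : HasCompactSupport ψ) (z : ℂ) :
    z * HH ψ z = - HH (deriv ψ) z := by
  have hd : Continuous (deriv ψ) := h1.continuous_deriv (by simp)
  have e := integral_mul_deriv_eq_deriv_mul_of_integrable (A := ℂ) (u := fun v : ℝ => (ψ v : ℂ)) (u' := fun v => ((deriv ψ v : ℝ) : ℂ))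
    (v := fun v : ℝ => cexp (v * z)) (v' := fun v : ℝ => cexp (v * z) * z) ?_ ?_ ?_ ?_ ?_
  · rw [HH, HH, ← e, ← integral_const_mul]
    congr 1; ext v; ring
  · intro x _
    exact (h1.differentiable (by simp) x).hasDerivAt.ofReal_comp
  · intro x _
    have : HasDerivAt (fun v : ℝ => (v:ℂ) * z) z x := by
      simpa using (Complex.ofRealCLM.hasDerivAt (x := x)).mul_const z
    exact this.cexp
  · have := (HH_int ψ h1.continuous h2 z).mul_const z
    refine this.congr (Eventually.of_forall fun v => ?_)
    simp only [Pi.mul_apply]; ring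
  · exact HH_int _ hd h2.deriv z
  · exact HH_int _ h1.continuous h2 z

lemma HH_bd0 (ψ : ℝ → ℝ) (a y : ℝ) : ‖HH ψ (a + y * I)‖ ≤ ∫ v, |ψ v| * Real.exp (v * a) := by
  refine (norm_integral_le_integral_norm _).trans (le_of_eq ?_)
  congr 1; ext v
  rw [norm_mul, Complex.norm_exp, Complex.norm_real, Real.norm_eq_abs]
  simp

lemma HH_bdn (n : ℕ) : ∀ (ψ : ℝ → ℝ) (_ : ContDiff ℝ (⊤:ℕ∞) ψ) (_ : HasCompactSupport ψ) (a : ℝ),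
    ∃ C : ℝ, ∀ y : ℝ, ‖(a + y * I : ℂ)‖ ^ n * ‖HH ψ (a + y * I)‖ ≤ C := by
  induction n with
  | zero => intro ψ _ _ a; exact ⟨_, fun y => by simpa using HH_bd0 ψ a y⟩
  | succ n ih =>
    intro ψ h1 h2 a
    obtain ⟨C, hC⟩ := ih (deriv ψ) (contDiff_infty_iff_deriv.1 h1).2 h2.deriv a
    refine ⟨C, fun y => ?_⟩
    have : ‖(a + y * I : ℂ)‖ * ‖HH ψ (a + y * I)‖ = ‖HH (deriv ψ) (a + y * I)‖ := by
      rw [← norm_mul, HH_ibp ψ h1 h2, norm_neg]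
    rw [pow_succ, mul_assoc, this]; exact hC y

lemma HH_bd (a : ℝ) : ∃ C : ℝ, 0 < C ∧ ∀ y : ℝ, ‖HH phi (a + y * I)‖ ≤ C / (1 + y^2)^2 := by
  obtain ⟨C0, h0⟩ := HH_bdn 0 phi phi_smooth phi_supp a
  obtain ⟨C4, h4⟩ := HH_bdn 4 phi phi_smooth phi_supp a
  refine ⟨2 * C0 + 2 * C4 + 1, ?_, fun y => ?_⟩
  · have := h0 0; have := h4 0
    have h1 : 0 ≤ C0 := le_trans (by positivity) (h0 0)
    have h2 : 0 ≤ C4 := le_trans (by positivity) (h4 0)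
    linarith
  · rw [le_div_iff₀ (by positivity)]
    have h0 := h0 y; have h4 := h4 y
    have hy : y^4 ≤ ‖(a + y * I : ℂ)‖^4 := by
      have : |y| ≤ ‖(a + y * I : ℂ)‖ := by simpa using Complex.abs_im_le_norm (a + y * I : ℂ)
      calc y^4 = |y|^4 := by rw [(by decide : Even 4).pow_abs]
        _ ≤ _ := by gcongr
    rw [pow_zero, one_mul] at h0
    have hn := norm_nonneg (HH phi (a + y * I))
    have : (1+y^2)^2 ≤ 2 + 2 * ‖(a + y * I : ℂ)‖^4 := by nlinarith [sq_nonneg (y^2-1)]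
    nlinarith

lemma HH_cont (a : ℝ) : Continuous fun y : ℝ => HH phi (a + y * I) := by
  unfold HH
  refine continuous_of_dominated (bound := fun v => |phi v| * Real.exp (v * a)) ?_ ?_ ?_ ?_
  · intro y; exact (HH_int phi phi_cont phi_supp _).aestronglyMeasurable
  · intro y; refine Eventually.of_forall fun v => le_of_eq ?_
    rw [norm_mul, Complex.norm_exp, Complex.norm_real, Real.norm_eq_abs]; simp
  · refine Continuous.integrable_of_hasCompactSupport (by have := phi_cont; fun_prop) ?_
    exact (phi_supp.norm).mul_right
  · refine Eventually.of_forall fun v => by fun_prop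

lemma int_w (n : ℝ) (hn : n < -1) : Integrable fun y : ℝ => (1 + y^2) ^ (n/2) := by
  have := integrable_rpow_neg_one_add_norm_sq (E := ℝ) (μ := volume) (r := -n) (by simp; linarith)
  simpa using this

lemma int_w1 : Integrable fun y : ℝ => 1 / (1 + y^2) := by
  simpa using integrable_inv_one_add_sq

/-- Weighted integrability of `HH`. -/
lemma HH_wint (a : ℝ) : Integrable fun y : ℝ => (1 + y^2) * ‖HH phi (a + y * I)‖ := by
  obtain ⟨C, hC, h⟩ := HH_bd a
  refine (int_w1.const_mul C).mono' ?_ ?_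
  · have := HH_cont a
    exact Continuous.aestronglyMeasurable (by fun_prop)
  · refine Eventually.of_forall fun y => ?_
    rw [Real.norm_of_nonneg (by positivity)]
    calc (1+y^2) * ‖HH phi (a + y * I)‖ ≤ (1+y^2) * (C / (1 + y^2)^2) := by gcongr; exact h y
      _ = _ := by have : (1+y^2) ≠ 0 := by positivity
                  field_simp

lemma HH_integrable (a : ℝ) : Integrable fun y : ℝ => HH phi (a + y * I) := by
  refine (HH_wint a).mono' (HH_cont a).aestronglyMeasurable (Eventually.of_forall fun y => ?_)
  have := norm_nonneg (HH phi (a + y * I))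
  nlinarith [sq_nonneg y]

/-- Inversion. -/
lemma HH_inv (a x : ℝ) : (1/(2*π):ℂ) * ∫ y : ℝ, cexp (x * (a + y * I)) * HH phi (a + y * I) = phi x := by
  have hpi := Real.pi_pos
  obtain ⟨f, hf⟩ : ∃ f : ℝ → ℂ, f = fun v => (phi v : ℂ) * cexp (v * a) := ⟨_, rfl⟩
  have hfc : Continuous f := by rw [hf]; have := phi_cont; fun_prop
  have hfi : Integrable f := by rw [hf]; exact HH_int phi phi_cont phi_supp a
  have hF : ∀ w : ℝ, FourierTransform.fourier f w = HH phi (a + ((-2*π) * w : ℝ) * I) := by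
    intro w
    rw [Real.fourier_real_eq_integral_exp_smul, HH]
    congr 1; ext v
    rw [hf, smul_eq_mul, mul_left_comm, ← Complex.exp_add]
    congr 2; push_cast; ring
  have hFi : Integrable (FourierTransform.fourier f) := by
    have : FourierTransform.fourier f = fun w : ℝ => HH phi (a + ((-2*π) * w : ℝ) * I) := funext hF
    rw [this]
    exact (HH_integrable a).comp_mul_left' (by simp [hpi.ne'])
  have key := congrFun (hfc.fourierInv_fourier_eq hfi hFi) (-x)
  rw [Real.fourierInv_eq'] at key
  simp only [hF, smul_eq_mul] at key
  have e : (fun v : ℝ => cexp (↑(2 * π * inner ℝ v (-x)) * I) * HH phi (a + ((-2*π) * v : ℝ) * I))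
      = fun v => (fun y : ℝ => cexp (x * (y * I)) * HH phi (a + y * I)) ((-2*π) * v) := by
    ext v
    have : inner ℝ v (-x) = - (x * v) := by simp
    rw [this]
    simp only []
    congr 2; push_cast; ring
  rw [e, Measure.integral_comp_mul_left (fun y : ℝ => cexp (x * (y * I)) * HH phi (a + y * I)) (-2*π)] at key
  have e2 : |(-2*π)⁻¹| = 1/(2*π) := by
    rw [abs_inv, abs_mul, abs_of_pos hpi]; norm_num
  rw [e2, hf] at key
  simp only [phi_even] at key
  have : (fun y : ℝ => cexp (x * (a + y * I)) * HH phi (a + y * I)) = fun y : ℝ => cexp (x * a) * (cexp (x * (y * I)) * HH phi (a + y * I)) := by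
    ext y; rw [← mul_assoc, ← Complex.exp_add]; congr 2; ring
  rw [this, integral_const_mul, mul_left_comm]
  rw [Complex.real_smul] at key
  push_cast at key
  rw [key, mul_left_comm, ← Complex.exp_add]
  simp

end Mont

namespace Mont
open scoped Topology

def ker (b y : ℝ) : ℂ := cexp (b * (((1:ℝ):ℂ) + y * I)) * HH phi (((1:ℝ):ℂ) + y * I)

lemma ker_cont (b : ℝ) : Continuous (ker b) := by
  have := HH_cont 1
  unfold ker; fun_prop

lemma ker_norm (b y : ℝ) : ‖ker b y‖ = Real.exp b * ‖HH phi (((1:ℝ):ℂ) + y * I)‖ := by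
  rw [ker, norm_mul, Complex.norm_exp]; simp

lemma ker_wint (b : ℝ) : Integrable fun y : ℝ => (1 + y^2) * ‖ker b y‖ := by
  refine ((HH_wint 1).const_mul (Real.exp b)).congr (Eventually.of_forall fun y => ?_)
  simp only [ker_norm]; ring

lemma ker_int (b : ℝ) : Integrable (ker b) := by
  refine (ker_wint b).mono' (ker_cont b).aestronglyMeasurable (Eventually.of_forall fun y => ?_)
  have := norm_nonneg (ker b y)
  nlinarith [sq_nonneg y]

lemma ker_inv (b x : ℝ) : (1/(2*π):ℂ) * ∫ y : ℝ, cexp (x * (((1:ℝ):ℂ) + y * I)) * ker b y = phi (b + x) := by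
  rw [← HH_inv 1 (b + x)]
  congr 2; ext y
  rw [ker, ← mul_assoc, ← Complex.exp_add]; congr 2; push_cast; ring

def Op (g : ℂ → ℂ) (t b : ℝ) : ℂ := (1/(2*π):ℂ) * ∫ y : ℝ, g (1 + ((t + y : ℝ):ℂ) * I) * ker b y

def Good (g : ℂ → ℂ) : Prop := Continuous (fun τ : ℝ => g (1 + (τ:ℂ) * I)) ∧ ∃ C : ℝ, ∀ τ : ℝ, ‖g (1 + (τ:ℂ) * I)‖ ≤ C * (1 + τ^2)

lemma wt_le (t y : ℝ) : 1 + (t + y)^2 ≤ 2 * (1 + t^2) * (1 + y^2) := by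
  nlinarith [sq_nonneg (t - y), sq_nonneg (t*y)]

lemma Good.int {g : ℂ → ℂ} (h : Good g) (t b : ℝ) : Integrable fun y : ℝ => g (1 + ((t + y : ℝ):ℂ) * I) * ker b y := by
  obtain ⟨hc, C, hC⟩ := h
  have hC0 : 0 ≤ C := by simpa using (norm_nonneg _).trans (hC 0)
  refine ((ker_wint b).const_mul (C * (2 * (1 + t^2)))).mono' ?_ (Eventually.of_forall fun y => ?_)
  · have := ker_cont b
    exact ((hc.comp (continuous_const.add continuous_id)).mul this).aestronglyMeasurable
  · rw [norm_mul]
    have h1 := hC (t + y)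
    have h2 := wt_le t y
    have : ‖g (1 + ((t + y : ℝ):ℂ) * I)‖ ≤ C * (2 * (1 + t^2) * (1 + y^2)) := h1.trans (by gcongr)
    calc _ ≤ C * (2 * (1 + t^2) * (1 + y^2)) * ‖ker b y‖ := by gcongr
      _ = _ := by ring

lemma Good.sub {f g : ℂ → ℂ} (hf : Good f) (hg : Good g) : Good (fun w => f w - g w) := by
  obtain ⟨h1, C, hC⟩ := hf
  obtain ⟨h2, D, hD⟩ := hg
  refine ⟨h1.sub h2, C + D, fun τ => (norm_sub_le _ _).trans ?_⟩
  have := hC τ; have := hD τ; linarith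

lemma Good.add {f g : ℂ → ℂ} (hf : Good f) (hg : Good g) : Good (fun w => f w + g w) := by
  obtain ⟨h1, C, hC⟩ := hf
  obtain ⟨h2, D, hD⟩ := hg
  refine ⟨h1.add h2, C + D, fun τ => (norm_add_le _ _).trans ?_⟩
  have := hC τ; have := hD τ; linarith

lemma Good_const (c : ℂ) : Good (fun _ => c) :=
  ⟨continuous_const, ‖c‖, fun τ => by have := norm_nonneg c; nlinarith [sq_nonneg τ]⟩

lemma Good_atom (p : ℂ) (hp : p.re < 1) : Good (fun w => 1 / (w - p)) := by
  have hre : ∀ τ : ℝ, 1 - p.re ≤ ‖1 + (τ:ℂ) * I - p‖ := fun τ => by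
    refine le_trans (le_of_eq ?_) (Complex.re_le_norm _); simp
  have hne : ∀ τ : ℝ, 1 + (τ:ℂ) * I - p ≠ 0 := fun τ h => by
    have := hre τ; rw [h, norm_zero] at this; linarith
  refine ⟨Continuous.div (by fun_prop) (by fun_prop) hne, 1 / (1 - p.re), fun τ => ?_⟩
  rw [norm_div, norm_one]
  calc 1 / ‖1 + (τ:ℂ) * I - p‖ ≤ 1 / (1 - p.re) := one_div_le_one_div_of_le (by linarith) (hre τ)
    _ ≤ _ := by
      have : 0 < 1 / (1 - p.re) := by apply one_div_pos.2; linarith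
      nlinarith [sq_nonneg τ]

lemma Op_sub {f g : ℂ → ℂ} (hf : Good f) (hg : Good g) (t b : ℝ) : Op (fun w => f w - g w) t b = Op f t b - Op g t b := by
  rw [Op, Op, Op, ← mul_sub, ← integral_sub (hf.int t b) (hg.int t b)]
  congr 2; ext y; ring

lemma Op_add {f g : ℂ → ℂ} (hf : Good f) (hg : Good g) (t b : ℝ) : Op (fun w => f w + g w) t b = Op f t b + Op g t b := by
  rw [Op, Op, Op, ← mul_add, ← integral_add (hf.int t b) (hg.int t b)]
  congr 2; ext y; ring

lemma Op_const (c : ℂ) (t b : ℝ) : Op (fun _ => c) t b = c * phi b := by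
  have := ker_inv b 0
  simp only [Complex.ofReal_zero, zero_mul, Complex.exp_zero, one_mul, add_zero] at this
  rw [Op, integral_const_mul, mul_left_comm, this]

lemma Op_exp (l t b : ℝ) : Op (fun w => cexp (-(w + 1/2) * l)) t b = cexp (-(1/2 + t * I) * l) * phi (b - l) := by
  have := ker_inv b (-l)
  rw [← sub_eq_add_neg] at this
  rw [← this, Op, mul_left_comm, ← integral_const_mul (cexp (-(1/2 + t * I) * l))]
  refine congrArg _ (integral_congr_ae (Eventually.of_forall fun y => ?_))
  simp only []
  rw [← mul_assoc, ← Complex.exp_add]; congr 2; push_cast; ring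

def JJ (p : ℂ) (b : ℝ) : ℂ := ∫ u in Ioi (0:ℝ), cexp (p * u) * phi (u - b)

lemma Op_atom (p : ℂ) (hp : p.re < 1) (t b : ℝ) : Op (fun w => 1 / (w - p)) t b = JJ (p - t * I) b := by
  have h1 : ∀ y : ℝ, 1 / (1 + ((t + y : ℝ):ℂ) * I - p) * ker b y
      = ∫ u in Ioi (0:ℝ), cexp ((p - t * I) * u) * (cexp (((-u:ℝ):ℂ) * (((1:ℝ):ℂ) + y * I)) * ker b y) := by
    intro y
    have e := integral_exp_mul_complex_Ioi (a := p - 1 - ((t + y : ℝ):ℂ) * I) (by simpa using hp) 0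
    have hne : p - 1 - ((t + y : ℝ):ℂ) * I ≠ 0 := fun h => by
      have := congrArg Complex.re h; simp at this; linarith
    have e2 : 1 / (1 + ((t + y : ℝ):ℂ) * I - p) = ∫ u in Ioi (0:ℝ), cexp ((p - 1 - ((t + y : ℝ):ℂ) * I) * u) := by
      rw [e]; simp only [Complex.ofReal_zero, mul_zero, Complex.exp_zero]
      rw [show (1 + ((t + y : ℝ):ℂ) * I - p) = -(p - 1 - ((t + y : ℝ):ℂ) * I) by ring, div_neg, neg_div]
    rw [e2, ← integral_mul_const]
    congr 1; ext u
    rw [← mul_assoc, ← Complex.exp_add]; congr 2; push_cast; ring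
  rw [Op]
  simp only [h1]
  rw [integral_integral_swap]
  · rw [JJ, ← integral_const_mul]
    congr 1; ext u
    rw [integral_const_mul, mul_left_comm, ker_inv b (-u)]
    rw [← phi_even, neg_add, neg_neg, neg_add_eq_sub]
  · have hi : Integrable (fun u : ℝ => Real.exp ((p.re - 1) * u)) (volume.restrict (Ioi 0)) :=
      integrableOn_exp_mul_Ioi (by linarith) 0
    refine ((ker_int b).norm.mul_prod hi).mono' ?_ (Eventually.of_forall fun z => ?_)
    · have := ker_cont b
      refine Continuous.aestronglyMeasurable ?_
      unfold Function.uncurry; fun_prop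
    · simp only [Function.uncurry, norm_mul, Complex.norm_exp]
      rw [← mul_assoc, ← Real.exp_add, mul_comm]
      refine le_of_eq ?_
      congr 2; simp; ring

lemma Good_sum {ι : Type*} {f : ι → ℂ → ℂ} {g : ℂ → ℂ} (A : ι → ℝ) (hA : Summable A)
    (hf : ∀ i, Continuous (fun τ : ℝ => f i (1 + (τ:ℂ) * I))) (hb : ∀ i (τ : ℝ), ‖f i (1 + (τ:ℂ) * I)‖ ≤ A i * (1 + τ^2))
    (hs : ∀ τ : ℝ, HasSum (fun i => f i (1 + (τ:ℂ) * I)) (g (1 + (τ:ℂ) * I))) : Good g := by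
  have e : ∀ τ : ℝ, HasSum (fun i => f i (1 + (τ:ℂ) * I) / ((1 + τ^2 : ℝ):ℂ)) (g (1 + (τ:ℂ) * I) / ((1 + τ^2 : ℝ):ℂ)) := fun τ => (hs τ).div_const _
  have hn : ∀ τ : ℝ, ((1 + τ^2 : ℝ):ℂ) ≠ 0 := fun τ => by
    norm_cast; positivity
  have hcont : Continuous fun τ : ℝ => ∑' i, f i (1 + (τ:ℂ) * I) / ((1 + τ^2 : ℝ):ℂ) := by
    refine continuous_tsum (u := A) (fun i => (hf i).div (by fun_prop) hn) hA fun i τ => ?_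
    rw [norm_div, Complex.norm_real, Real.norm_of_nonneg (by positivity), div_le_iff₀ (by positivity)]
    exact hb i τ
  refine ⟨?_, ∑' i, A i, fun τ => ?_⟩
  · have : (fun τ : ℝ => g (1 + (τ:ℂ) * I)) = fun τ : ℝ => (∑' i, f i (1 + (τ:ℂ) * I) / ((1 + τ^2 : ℝ):ℂ)) * ((1 + τ^2 : ℝ):ℂ) := by
      ext τ; rw [(e τ).tsum_eq, div_mul_cancel₀ _ (hn τ)]
    rw [this]; exact hcont.mul (by fun_prop)
  · rw [← (hs τ).tsum_eq, ← tsum_mul_right]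
    exact tsum_of_norm_bounded (hA.mul_right _).hasSum fun i => hb i τ

lemma Op_sum {ι : Type*} [Countable ι] {f : ι → ℂ → ℂ} {g : ℂ → ℂ} (A : ι → ℝ) (hA : Summable A)
    (hf : ∀ i, Continuous (fun τ : ℝ => f i (1 + (τ:ℂ) * I))) (hb : ∀ i (τ : ℝ), ‖f i (1 + (τ:ℂ) * I)‖ ≤ A i * (1 + τ^2))
    (hs : ∀ τ : ℝ, HasSum (fun i => f i (1 + (τ:ℂ) * I)) (g (1 + (τ:ℂ) * I))) (t b : ℝ) :
    HasSum (fun i => Op (f i) t b) (Op g t b) := by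
  refine HasSum.mul_left _ ?_
  have hgood : ∀ i, Good (f i) := fun i => ⟨hf i, A i, hb i⟩
  have hA0 : ∀ i, 0 ≤ A i := fun i => by simpa using (norm_nonneg _).trans (hb i 0)
  refine hasSum_integral_of_dominated_convergence (fun i y => A i * ((2 * (1 + t^2)) * ((1 + y^2) * ‖ker b y‖))) ?_ ?_ ?_ ?_ ?_
  · intro i; exact ((hgood i).int t b).aestronglyMeasurable
  · intro i; refine Eventually.of_forall fun y => ?_
    rw [norm_mul]
    have h1 := hb i (t + y)
    have : ‖f i (1 + ((t + y : ℝ):ℂ) * I)‖ ≤ A i * (2 * (1 + t^2) * (1 + y^2)) := h1.trans (mul_le_mul_of_nonneg_left (wt_le t y) (hA0 i))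
    calc _ ≤ A i * (2 * (1 + t^2) * (1 + y^2)) * ‖ker b y‖ := by gcongr
      _ = _ := by ring
  · exact Eventually.of_forall fun y => hA.mul_right _
  · simp only [tsum_mul_right]
    exact ((ker_wint b).const_mul _).const_mul _
  · exact Eventually.of_forall fun y => (hs _).mul_right _

end Mont

namespace Mont
open scoped Topology
open scoped ArithmeticFunction.vonMangoldt

lemma shift_int (p : ℂ) (b : ℝ) : Integrable fun u : ℝ => cexp (p * u) * (phi (u - b) : ℂ) := by
  have h := (HH_int phi phi_cont phi_supp p).comp_sub_right b
  refine (h.const_mul (cexp (p * b))).congr (Eventually.of_forall fun u => ?_)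
  simp only []
  rw [mul_left_comm, ← Complex.exp_add, mul_comm]; congr 2; push_cast; ring

lemma shift_eq (p : ℂ) (b : ℝ) : ∫ u : ℝ, cexp (p * u) * (phi (u - b) : ℂ) = cexp (p * b) * HH phi p := by
  rw [HH, ← integral_const_mul, ← integral_sub_right_eq_self (μ := volume) (fun v : ℝ => cexp (p * b) * ((phi v : ℂ) * cexp (v * p))) b]
  congr 1; ext u
  rw [mul_left_comm, ← Complex.exp_add, mul_comm]; congr 2; push_cast; ring

lemma JJ_two (p : ℂ) (b : ℝ) : JJ p b + JJ (-p) (-b) = cexp (p * b) * HH phi p := by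
  rw [← shift_eq, ← intervalIntegral.integral_Iic_add_Ioi (b := 0) (shift_int p b).integrableOn (shift_int p b).integrableOn, add_comm, JJ, JJ]
  congr 1
  have := integral_comp_neg_Ioi 0 (fun u : ℝ => cexp (p * u) * (phi (u - b) : ℂ))
  rw [neg_zero] at this
  rw [← this]
  congr 1; ext u
  rw [← phi_even (-u - b)]
  congr 2
  · push_cast; ring
  · congr 1; ring

lemma JJ_bd (p : ℂ) (b : ℝ) : ‖JJ p b‖ ≤ Real.exp (p.re * b) * ∫ v, |phi v| * Real.exp (v * p.re) := by
  have hi := (shift_int p b).norm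
  calc ‖JJ p b‖ ≤ ∫ u in Ioi (0:ℝ), ‖cexp (p * u) * (phi (u - b) : ℂ)‖ := norm_integral_le_integral_norm _
    _ ≤ ∫ u : ℝ, ‖cexp (p * u) * (phi (u - b) : ℂ)‖ := setIntegral_le_integral hi (Eventually.of_forall fun u => norm_nonneg _)
    _ = _ := by
      rw [← integral_const_mul, ← integral_sub_right_eq_self (μ := volume) (fun v : ℝ => Real.exp (p.re * b) * (|phi v| * Real.exp (v * p.re))) b]
      congr 1; ext u
      rw [norm_mul, Complex.norm_exp, Complex.norm_real, Real.norm_eq_abs, mul_left_comm, ← Real.exp_add, mul_comm]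
      congr 2; simp; ring

lemma dphi_bdd : ∃ M : ℝ, 0 < M ∧ ∀ v, |deriv phi v| ≤ M := by
  obtain ⟨C, hC⟩ := (phi_supp.deriv).exists_bound_of_continuous (phi_smooth.continuous_deriv (by simp))
  exact ⟨max C 1, by positivity, fun v => (hC v).trans (le_max_left _ _)⟩

lemma JJ_ibp (M : ℝ) (hM : ∀ v, |deriv phi v| ≤ M) (Q : ℂ) (hQ : 0 < Q.re) (b : ℝ) :
    ‖JJ (-Q) b - phi b / Q‖ ≤ M / (‖Q‖ * Q.re) := by
  have hQ0 : Q ≠ 0 := fun h => by simp [h] at hQ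
  have hQn : 0 < ‖Q‖ := norm_pos_iff.2 hQ0
  have hi1 : IntegrableOn (fun u : ℝ => cexp (-Q * u) * (phi (u - b) : ℂ)) (Ioi 0) := (shift_int (-Q) b).integrableOn
  have hdc : Continuous (deriv phi) := phi_smooth.continuous_deriv (by simp)
  have hexp : IntegrableOn (fun u : ℝ => Real.exp (-Q.re * u) * M) (Ioi 0) :=
    (integrableOn_exp_mul_Ioi (by linarith) 0).mul_const M
  have hb2 : ∀ u : ℝ, ‖cexp (-Q * u) * ((deriv phi (u - b) : ℝ) : ℂ)‖ ≤ Real.exp (-Q.re * u) * M := by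
    intro u
    rw [norm_mul, Complex.norm_exp, Complex.norm_real, Real.norm_eq_abs]
    simp only [Complex.mul_re, Complex.neg_re, Complex.ofReal_re, Complex.ofReal_im, mul_zero, sub_zero]
    gcongr; exact hM _
  have hi2 : IntegrableOn (fun u : ℝ => cexp (-Q * u) * ((deriv phi (u - b) : ℝ) : ℂ)) (Ioi 0) := by
    refine hexp.mono' ?_ (Eventually.of_forall hb2)
    exact Continuous.aestronglyMeasurable (by fun_prop)
  have key := integral_Ioi_of_hasDerivAt_of_tendsto' (a := 0) (m := 0)
    (f := fun u : ℝ => - (1/Q) * (cexp (-Q * u) * (phi (u - b) : ℂ)))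
    (f' := fun u : ℝ => cexp (-Q * u) * (phi (u - b) : ℂ) - (1/Q) * (cexp (-Q * u) * ((deriv phi (u - b) : ℝ) : ℂ))) ?_ ?_ ?_
  · rw [integral_sub hi1 (hi2.const_mul _), integral_const_mul] at key
    simp only [Complex.ofReal_zero, mul_zero, Complex.exp_zero, zero_sub, one_mul, phi_even] at key
    have e : JJ (-Q) b - phi b / Q = (1/Q) * ∫ u in Ioi (0:ℝ), cexp (-Q * u) * ((deriv phi (u - b) : ℝ) : ℂ) := by
      rw [JJ]; linear_combination key
    rw [e, norm_mul, norm_div, norm_one]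
    have h3 : ‖∫ u in Ioi (0:ℝ), cexp (-Q * u) * ((deriv phi (u - b) : ℝ) : ℂ)‖ ≤ M / Q.re := by
      refine (norm_integral_le_of_norm_le hexp (Eventually.of_forall hb2)).trans (le_of_eq ?_)
      rw [integral_mul_const, integral_exp_mul_Ioi (by linarith)]
      simp; field_simp
    calc 1 / ‖Q‖ * _ ≤ 1 / ‖Q‖ * (M / Q.re) := by gcongr
      _ = _ := by field_simp
  · intro u _
    have h1 : HasDerivAt (fun v : ℝ => -Q * (v:ℂ)) (-Q) u := by
      simpa using (Complex.ofRealCLM.hasDerivAt (x := u)).const_mul (-Q)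
    have h2 : HasDerivAt (fun v : ℝ => (phi (v - b) : ℂ)) ((deriv phi (u - b) : ℝ) : ℂ) u := by
      have : HasDerivAt (fun v : ℝ => phi (v - b)) (deriv phi (u - b)) u :=
        HasDerivAt.comp_sub_const u b ((phi_smooth.differentiable (by simp) _).hasDerivAt)
      exact this.ofReal_comp
    refine ((h1.cexp.mul h2).const_mul (-(1/Q))).congr_deriv ?_
    field_simp; ring
  · exact hi1.sub (hi2.const_mul _)
  · refine tendsto_const_nhds.congr' ?_
    filter_upwards [eventually_ge_atTop (b + 1)] with u hu
    rw [phi_zero]; · simp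
    · rw [abs_of_nonneg (by linarith)]; linarith

end Mont

namespace Mont
open scoped Topology
open scoped ArithmeticFunction.vonMangoldt

lemma Z_countable (hRH : RiemannHypothesis) : Countable Z := by
  have h := (summable_g hRH).countable_support
  have : Function.support (fun z : Z => 1 / (1 + gam z ^ 2)) = univ := by
    ext z; simp only [Function.mem_support, mem_univ, iff_true]; positivity
  rw [this] at h
  exact Set.countable_univ_iff.1 h

lemma cmp_one (s : ℝ) (hs : |s| = 1) (t g : ℝ) :
    ‖1 / ((s:ℂ) + t * I - g * I) - 1 / (3/2 - g * I)‖ ≤ 128 * (1 / (1 + g^2)) * (1 + t^2) := by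
  have h := cmp_diff s t g (by rintro rfl; simp at hs)
  rw [hs] at h
  refine h.trans ?_
  have h1 : (1 + |t|)^2 ≤ 2 * (1 + t^2) := by nlinarith [sq_nonneg (1 - |t|), sq_abs t]
  have h2 : 0 ≤ 1 / (1 + g^2) := by positivity
  calc _ = 64 * (1 / (1 + g^2)) * (1 + |t|)^2 := by ring
    _ ≤ 64 * (1 / (1 + g^2)) * (2 * (1 + t^2)) := by gcongr
    _ = _ := by ring


lemma EFa (hRH : RiemannHypothesis) : Good q ∧ ∀ t b : ℝ, HasSum (fun z : Z => JJ (gam z * I - t * I) b - 1 / (3/2 - gam z * I) * phi b) (Op q t b - q (3/2) * phi b) := by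
  haveI := Z_countable hRH
  have hA : Summable (fun z : Z => 128 * (1 / (1 + gam z^2))) := (summable_g hRH).mul_left _
  have hgz : ∀ z : Z, Good (fun w => 1 / (w - gam z * I)) := fun z => Good_atom _ (by simp)
  have hg : ∀ z : Z, Good (fun w => 1 / (w - gam z * I) - 1 / (3/2 - gam z * I)) := fun z => (hgz z).sub (Good_const _)
  have hb : ∀ (z : Z) (τ : ℝ), ‖1 / (1 + (τ:ℂ) * I - gam z * I) - 1 / (3/2 - gam z * I)‖ ≤ 128 * (1 / (1 + gam z^2)) * (1 + τ^2) := by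
    intro z τ; simpa using cmp_one 1 (by simp) τ (gam z)
  have hs : ∀ τ : ℝ, HasSum (fun z : Z => 1 / (1 + (τ:ℂ) * I - gam z * I) - 1 / (3/2 - gam z * I)) (q (1 + τ * I) - q (3/2)) := by
    intro τ; simpa using q_pf hRH 1 τ one_ne_zero
  have hG := Good_sum (f := fun z w => 1 / (w - gam z * I) - 1 / (3/2 - gam z * I)) (g := fun w => q w - q (3/2)) _ hA (fun z => (hg z).1) hb hs
  have hq : Good q := by simpa using hG.add (Good_const (q (3/2)))
  refine ⟨hq, fun t b => ?_⟩
  have := Op_sum (f := fun z w => 1 / (w - gam z * I) - 1 / (3/2 - gam z * I)) (g := fun w => q w - q (3/2)) _ hA (fun z => (hg z).1) hb hs t b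
  rw [Op_sub hq (Good_const _), Op_const] at this
  convert this using 2 with z
  rw [Op_sub (hgz z) (Good_const _), Op_const, Op_atom _ (by simp)]

lemma EFb (hRH : RiemannHypothesis) (t b : ℝ) : HasSum (fun z : Z => JJ (-(gam z * I) - t * I) b + 1 / (3/2 - gam z * I) * phi b) (Op q t b + q (3/2) * phi b) := by
  haveI := Z_countable hRH
  have hA : Summable (fun z : Z => 128 * (1 / (1 + gam z^2))) := (summable_g hRH).mul_left _
  have hgz : ∀ z : Z, Good (fun w => 1 / (w - -(gam z * I))) := fun z => Good_atom _ (by simp)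
  have hg : ∀ z : Z, Good (fun w => 1 / (w - -(gam z * I)) + 1 / (3/2 - gam z * I)) := fun z => (hgz z).add (Good_const _)
  have e : ∀ (z : Z) (τ : ℝ), 1 / (1 + (τ:ℂ) * I - -(gam z * I)) + 1 / (3/2 - gam z * I) =
      - (1 / (((-1:ℝ):ℂ) + (-τ:ℝ) * I - gam z * I) - 1 / (3/2 - gam z * I)) := by
    intro z τ
    rw [show ((-1:ℝ):ℂ) + (-τ:ℝ) * I - gam z * I = -(1 + (τ:ℂ) * I - -(gam z * I)) by push_cast; ring, div_neg]; ring
  have hb : ∀ (z : Z) (τ : ℝ), ‖1 / (1 + (τ:ℂ) * I - -(gam z * I)) + 1 / (3/2 - gam z * I)‖ ≤ 128 * (1 / (1 + gam z^2)) * (1 + τ^2) := by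
    intro z τ
    rw [e, norm_neg]
    simpa using cmp_one (-1) (by simp) (-τ) (gam z)
  have hs : ∀ τ : ℝ, HasSum (fun z : Z => 1 / (1 + (τ:ℂ) * I - -(gam z * I)) + 1 / (3/2 - gam z * I)) (q (1 + τ * I) + q (3/2)) := by
    intro τ
    have := (q_pf hRH (-1) (-τ) (by norm_num)).neg
    simp only [← e] at this
    rw [show ((-1:ℝ):ℂ) + (-τ:ℝ) * I = -(1 + (τ:ℂ) * I) by push_cast; ring, q_neg, neg_sub, sub_neg_eq_add, add_comm (q (3/2))] at this
    exact this
  have hq := (EFa hRH).1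
  have := Op_sum (f := fun z w => 1 / (w - -(gam z * I)) + 1 / (3/2 - gam z * I)) (g := fun w => q w + q (3/2)) _ hA (fun z => (hg z).1) hb hs t b
  rw [Op_add hq (Good_const _), Op_const] at this
  convert this using 2 with z
  rw [Op_add (hgz z) (Good_const _), Op_const, Op_atom _ (by simp)]

lemma EF1 (hRH : RiemannHypothesis) (t b : ℝ) : HasSum (fun z : Z => cexp ((gam z * I - t * I) * b) * HH phi (gam z * I - t * I)) (Op q t b + Op q (-t) (-b)) := by
  have h := ((EFa hRH).2 t b).add (EFb hRH (-t) (-b))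
  simp only [phi_even] at h
  convert h using 1
  · ext z
    rw [← JJ_two, show -(gam z * I : ℂ) - ((-t : ℝ) : ℂ) * I = -(gam z * I - t * I) by push_cast; ring]; ring
  · ring


/-- prime sum -/
def PS (t b : ℝ) : ℂ := ∑' n : ℕ, (Λ n : ℂ) * (cexp (-(1/2 + t * I) * Real.log n) * phi (b - Real.log n))

lemma term_eq (n : ℕ) (w : ℂ) : LSeries.term (fun n => (Λ n : ℂ)) (w + 1/2) n = (Λ n : ℂ) * cexp (-(w + 1/2) * Real.log n) := by
  rcases Nat.eq_zero_or_pos n with rfl | hn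
  · simp
  · rw [LSeries.term_of_ne_zero hn.ne', Complex.cpow_def_of_ne_zero (by exact_mod_cast hn.ne'), div_eq_mul_inv, ← Complex.exp_neg]
    congr 2
    rw [← Complex.natCast_log]; ring

lemma OpLS : Good (fun w => LSeries (fun n => (Λ n : ℂ)) (w + 1/2)) ∧ ∀ t b : ℝ, Op (fun w => LSeries (fun n => (Λ n : ℂ)) (w + 1/2)) t b = PS t b := by
  have hA : Summable (fun n : ℕ => ‖LSeries.term (fun n => (Λ n : ℂ)) (3/2 : ℂ) n‖) :=
    (ArithmeticFunction.LSeriesSummable_vonMangoldt (s := 3/2) (by norm_num)).norm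
  have hc : ∀ n : ℕ, Continuous (fun τ : ℝ => (fun w => (Λ n : ℂ) * cexp (-(w + 1/2) * Real.log n)) (1 + (τ:ℂ) * I)) := by
    intro n; simp only []; fun_prop
  have hb : ∀ (n : ℕ) (τ : ℝ), ‖(fun w => (Λ n : ℂ) * cexp (-(w + 1/2) * Real.log n)) (1 + (τ:ℂ) * I)‖ ≤ ‖LSeries.term (fun n => (Λ n : ℂ)) (3/2 : ℂ) n‖ * (1 + τ^2) := by
    intro n τ
    simp only []
    rw [← term_eq, LSeries.norm_term_eq, LSeries.norm_term_eq]
    have : (1 + (τ:ℂ) * I + 1/2).re = ((3:ℂ)/2).re := by norm_num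
    rw [this]
    split_ifs
    · simp
    · have : 0 ≤ ‖(Λ n : ℂ)‖ / (n:ℝ) ^ ((3:ℂ)/2).re := by positivity
      nlinarith [sq_nonneg τ]
  have hs : ∀ τ : ℝ, HasSum (fun n : ℕ => (fun w => (Λ n : ℂ) * cexp (-(w + 1/2) * Real.log n)) (1 + (τ:ℂ) * I)) (LSeries (fun n => (Λ n : ℂ)) (1 + (τ:ℂ) * I + 1/2)) := by
    intro τ
    have := (ArithmeticFunction.LSeriesSummable_vonMangoldt (s := 1 + (τ:ℂ) * I + 1/2) (by norm_num)).hasSum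
    have e : (fun n : ℕ => (fun w => (Λ n : ℂ) * cexp (-(w + 1/2) * Real.log n)) (1 + (τ:ℂ) * I)) = LSeries.term (fun n => (Λ n : ℂ)) (1 + (τ:ℂ) * I + 1/2) := by
      ext n; rw [term_eq]
    rw [e]; exact this
  refine ⟨Good_sum (f := fun n w => (Λ n : ℂ) * cexp (-(w + 1/2) * Real.log n)) (g := fun w => LSeries (fun n => (Λ n : ℂ)) (w + 1/2)) _ hA hc hb hs, fun t b => ?_⟩
  have := Op_sum (f := fun n w => (Λ n : ℂ) * cexp (-(w + 1/2) * Real.log n)) (g := fun w => LSeries (fun n => (Λ n : ℂ)) (w + 1/2)) _ hA hc hb hs t b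
  rw [← this.tsum_eq, PS]
  congr 1; ext n
  rw [← Op_exp, Op, Op, mul_left_comm, ← integral_const_mul (Λ n : ℂ)]
  refine congrArg _ (integral_congr_ae (Eventually.of_forall fun y => ?_))
  simp only []; ring

lemma OpD : Good (fun w => Dser (w + 1/2)) ∧ ∃ C : ℝ, ∀ t b : ℝ, ‖Op (fun w => Dser (w + 1/2)) t b - Dser (1/2 + t * I) * phi b‖ ≤ C := by
  obtain ⟨M, hM0, hM⟩ := dphi_bdd
  have hA : Summable (fun k : ℕ => 1 / ((k:ℝ) + 1)^2) := summable_sq1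
  have hga : ∀ k : ℕ, Good (fun w => 1 / (w - (-(1/2 + 2 * ((k:ℂ) + 1))))) := fun k => Good_atom _ (by
    simp; have : (0:ℝ) ≤ k := k.cast_nonneg
    linarith)
  have hg : ∀ k : ℕ, Good (fun w => 1 / (2 * ((k:ℂ) + 1)) - 1 / (w - (-(1/2 + 2 * ((k:ℂ) + 1))))) := fun k => (Good_const _).sub (hga k)
  have e : ∀ (k : ℕ) (w : ℂ), w - (-(1/2 + 2 * ((k:ℂ) + 1))) = (w + 1/2) + 2 * ((k:ℂ) + 1) := fun k w => by ring
  have hb : ∀ (k : ℕ) (τ : ℝ), ‖1 / (2 * ((k:ℂ) + 1)) - 1 / (1 + (τ:ℂ) * I - (-(1/2 + 2 * ((k:ℂ) + 1))))‖ ≤ 1 / ((k:ℝ) + 1)^2 * (1 + τ^2) := by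
    intro k τ
    rw [e]
    refine (Dser_term k _ (by norm_num)).trans ?_
    have h0 : 0 ≤ 1 / ((k:ℝ) + 1)^2 := by positivity
    have : ‖1 + (τ:ℂ) * I + 1/2‖ ≤ 3/2 + |τ| := by
      rw [show 1 + (τ:ℂ) * I + 1/2 = (3/2:ℂ) + τ * I by ring]
      refine (norm_add_le _ _).trans ?_
      rw [norm_mul, Complex.norm_I, mul_one, Complex.norm_real, Real.norm_eq_abs]; norm_num
    rw [mul_comm]
    gcongr
    nlinarith [sq_nonneg (|τ| - 1), sq_abs τ]
  have hs : ∀ τ : ℝ, HasSum (fun k : ℕ => 1 / (2 * ((k:ℂ) + 1)) - 1 / (1 + (τ:ℂ) * I - (-(1/2 + 2 * ((k:ℂ) + 1))))) (Dser (1 + (τ:ℂ) * I + 1/2)) := by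
    intro τ
    simp only [e]
    exact (Dser_summable _ (by norm_num)).hasSum
  refine ⟨Good_sum (f := fun (k:ℕ) w => 1 / (2 * ((k:ℂ) + 1)) - 1 / (w - (-(1/2 + 2 * ((k:ℂ) + 1))))) (g := fun w => Dser (w + 1/2)) _ hA (fun k => (hg k).1) hb hs,
    ∑' k : ℕ, M * (1 / ((k:ℝ) + 1)^2), fun t b => ?_⟩
  have h1 := Op_sum (f := fun (k:ℕ) w => 1 / (2 * ((k:ℂ) + 1)) - 1 / (w - (-(1/2 + 2 * ((k:ℂ) + 1))))) (g := fun w => Dser (w + 1/2)) _ hA (fun k => (hg k).1) hb hs t b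
  have h2 := ((Dser_summable (1/2 + t * I) (by norm_num)).hasSum.mul_right (phi b : ℂ))
  have h3 := h1.sub h2
  rw [Dser, ← h3.tsum_eq]
  refine tsum_of_norm_bounded (hA.mul_left M).hasSum fun k => ?_
  have hk : (0:ℝ) ≤ k := k.cast_nonneg
  rw [Op_sub (Good_const _) (hga k), Op_const, Op_atom _ (by simp; linarith)]
  have hQ : -(1/2 + 2 * ((k:ℂ) + 1)) - t * I = -(1/2 + t * I + 2 * ((k:ℂ) + 1)) := by ring
  have hre : (1/2 + t * I + 2 * ((k:ℂ) + 1)).re = 1/2 + 2 * ((k:ℝ) + 1) := by simp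
  have h4 := JJ_ibp M hM (1/2 + t * I + 2 * ((k:ℂ) + 1)) (by rw [hre]; positivity) b
  rw [hQ]
  have h5 : ∀ A B D P : ℂ, A * P - B - (A - 1 / D) * P = -(B - P / D) := fun A B D P => by ring
  rw [h5, norm_neg]
  refine h4.trans ?_
  rw [mul_one_div]
  have h6 : (k:ℝ) + 1 ≤ ‖1/2 + t * I + 2 * ((k:ℂ) + 1)‖ := by
    refine le_trans ?_ (Complex.re_le_norm _); rw [hre]; linarith
  rw [sq, hre]
  have h7 : (k:ℝ) + 1 ≤ 1/2 + 2 * ((k:ℝ) + 1) := by linarith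
  gcongr

lemma EF2 : ∃ C : ℝ, ∀ t b : ℝ, ‖Op q t b - (JJ (1/2 - t * I) b + Dser (1/2 + t * I) * phi b - PS t b)‖ ≤ C := by
  obtain ⟨hD, C1, h1⟩ := OpD
  obtain ⟨hL, h2⟩ := OpLS
  obtain ⟨C2, hC2, h3⟩ := phi_bdd
  refine ⟨‖c0‖ * C2 + C1, fun t b => ?_⟩
  have ha : Good (fun w => 1 / (w - 1/2)) := Good_atom _ (by norm_num)
  have e : Op q t b = Op (fun w => 1 / (w - 1/2) + c0 + Dser (w + 1/2) - LSeries (fun n => (Λ n : ℂ)) (w + 1/2)) t b := by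
    rw [Op, Op]
    refine congrArg _ (integral_congr_ae (Eventually.of_forall fun y => ?_))
    simp only []
    rw [q_formula _ (by norm_num)]
  rw [e, Op_sub ((ha.add (Good_const _)).add hD) hL, Op_add (ha.add (Good_const _)) hD, Op_add ha (Good_const _), Op_const, Op_atom _ (by norm_num), h2]
  have h1 := h1 t b
  have h3 := h3 b
  have e2 : ∀ J c p O D P : ℂ, J + c * p + O - P - (J + D - P) = c * p + (O - D) := fun _ _ _ _ _ _ => by ring
  rw [e2]
  refine (norm_add_le _ _).trans (add_le_add ?_ h1)
  rw [norm_mul, Complex.norm_real, Real.norm_of_nonneg (phi_nonneg b)]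
  gcongr

end Mont

namespace Mont
open scoped Topology
open scoped ArithmeticFunction.vonMangoldt

/-- cosine transform of phi -/
def hh (u : ℝ) : ℝ := ∫ v, phi v * Real.cos (u * v)

lemma hh_int1 (u : ℝ) : Integrable fun v => phi v * Real.cos (u * v) :=
  Continuous.integrable_of_hasCompactSupport (by have := phi_cont; fun_prop) phi_supp.mul_right

lemma hh_int2 (u : ℝ) : Integrable fun v => phi v * Real.sin (u * v) :=
  Continuous.integrable_of_hasCompactSupport (by have := phi_cont; fun_prop) phi_supp.mul_right

lemma hh_eq (u : ℝ) : HH phi (u * I) = hh u := by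
  have hodd : ∫ v, phi v * Real.sin (u * v) = 0 := by
    have := integral_neg_eq_self (μ := volume) (fun v => phi v * Real.sin (u * v))
    simp only [phi_even, mul_neg, Real.sin_neg, integral_neg] at this
    linarith
  have e : ∀ v : ℝ, (phi v : ℂ) * cexp (v * (u * I)) = ((phi v * Real.cos (u * v) : ℝ) : ℂ) + ((phi v * Real.sin (u * v) : ℝ) : ℂ) * I := by
    intro v
    rw [show (v:ℂ) * (u * I) = ((u * v : ℝ) : ℂ) * I by push_cast; ring, Complex.exp_mul_I]
    push_cast; ring
  rw [HH]
  simp only [e]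
  have i1 : Integrable fun v : ℝ => ((phi v * Real.cos (u * v) : ℝ) : ℂ) := (hh_int1 u).ofReal
  have i2 : Integrable fun v : ℝ => ((phi v * Real.sin (u * v) : ℝ) : ℂ) := (hh_int2 u).ofReal
  rw [integral_add i1 (i2.mul_const I), integral_mul_const, integral_complex_ofReal, integral_complex_ofReal, hodd, hh]
  simp

lemma hh_even (u : ℝ) : hh (-u) = hh u := by
  simp [hh]

lemma hh_bd : ∃ C : ℝ, 0 < C ∧ ∀ u, |hh u| ≤ C / (1 + u^2)^2 := by
  obtain ⟨C, h, hC⟩ := HH_bd 0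
  refine ⟨C, h, fun u => ?_⟩
  have := hC u
  rw [Complex.ofReal_zero, zero_add, hh_eq, Complex.norm_real] at this
  exact this

lemma hh_cont : Continuous hh := by
  have h := HH_cont 0
  simp only [Complex.ofReal_zero, zero_add, hh_eq] at h
  exact (Complex.continuous_re.comp h)

def SS (t b : ℝ) : ℂ := ∑' z : Z, cexp ((gam z * I - t * I) * b) * hh (t - gam z)

lemma PS_zero (t b : ℝ) (hb : b ≤ 1/4) : PS t b = 0 := by
  rw [PS]
  convert tsum_zero with n
  rcases Nat.lt_or_ge n 2 with h | h
  · have : Λ n = 0 := by interval_cases n <;> simp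
    rw [this]; simp
  · have h2 : Real.log 2 ≤ Real.log n := Real.log_le_log (by norm_num) (by exact_mod_cast h)
    have := Real.log_two_gt_d9
    rw [phi_zero _ (by rw [abs_of_nonpos (by linarith)]; linarith)]; simp

lemma EF (hRH : RiemannHypothesis) : ∃ C : ℝ, 0 < C ∧ (∀ t b : ℝ, 0 ≤ b → b ≤ 1/4 → ‖SS t b‖ ≤ phi b * Real.log (|t| + 2) + C) ∧
    (∀ t b : ℝ, 1/4 ≤ b → ‖SS t b‖ ≤ ‖PS t b‖ + C + C * Real.exp (b/2) / (1 + t^2)) := by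
  obtain ⟨C1, h1⟩ := EF2
  obtain ⟨C2, h2⟩ := Dser_bound (1/2) (by norm_num)
  obtain ⟨C3, hC3, h3⟩ := phi_bdd
  obtain ⟨C4, hC4, h4⟩ := HH_bd (1/2)
  obtain ⟨C5, hC5⟩ : ∃ C5, C5 = ∫ v, |phi v| * Real.exp (v * (1/2)) := ⟨_, rfl⟩
  have hC50 : 0 ≤ C5 := by rw [hC5]; exact integral_nonneg fun v => by positivity
  have hJ : ∀ t b : ℝ, ‖JJ (1/2 - t * I) b‖ ≤ Real.exp (b/2) * C5 := by
    intro t b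
    have := JJ_bd (1/2 - t * I) b
    have e : (1/2 - (t:ℂ) * I).re = 1/2 := by simp
    rw [e, ← hC5] at this
    refine this.trans (le_of_eq ?_); congr 2; ring
  have hC10 : 0 ≤ C1 := (norm_nonneg _).trans (h1 0 0)
  have hmain : ∀ t b : ℝ, 0 ≤ b → ‖SS t b + PS t b - JJ (1/2 - t * I) b‖ ≤ phi b * Real.log (|t| + 2) + (2 * C1 + C5 + C3 * (2 * |C2|)) := by
    intro t b hb
    have e1 := (EF1 hRH t b).tsum_eq
    have e0 : SS t b = Op q t b + Op q (-t) (-b) := by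
      rw [← e1, SS]; congr 1; ext z
      rw [← hh_even, ← hh_eq]; congr 2; push_cast; ring
    have ha := h1 t b
    have hb1 := h1 (-t) (-b)
    rw [PS_zero (-t) (-b) (by linarith), phi_even, sub_zero] at hb1
    have hj := hJ (-t) (-b)
    have hj2 : ‖JJ (1/2 - ((-t:ℝ):ℂ) * I) (-b)‖ ≤ C5 := hj.trans (mul_le_of_le_one_left hC50 (by rw [Real.exp_le_one_iff]; linarith))
    have hd1 := h2 t
    have hd2 := h2 (-t)
    rw [abs_neg] at hd2
    have hp := phi_nonneg b
    have e2 : (((1/2:ℝ)):ℂ) = 1/2 := by push_cast; ring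
    rw [e2] at hd1 hd2
    have hD : ‖(Dser (1/2 + t * I) + Dser (1/2 + (-t:ℝ) * I)) * phi b‖ ≤ phi b * Real.log (|t| + 2) + C3 * (2 * |C2|) := by
      rw [norm_mul, Complex.norm_real, Real.norm_of_nonneg hp]
      have : ‖Dser (1/2 + t * I) + Dser (1/2 + (-t:ℝ) * I)‖ ≤ Real.log (|t| + 2) + 2 * |C2| := by
        refine (norm_add_le _ _).trans ?_
        have := le_abs_self C2
        linarith
      calc _ ≤ (Real.log (|t| + 2) + 2 * |C2|) * phi b := by gcongr
        _ = phi b * Real.log (|t| + 2) + phi b * (2 * |C2|) := by ring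
        _ ≤ _ := by gcongr; exact h3 b
    have e3 : SS t b + PS t b - JJ (1/2 - t * I) b = (Op q t b - (JJ (1/2 - t * I) b + Dser (1/2 + t * I) * phi b - PS t b)) +
       (Op q (-t) (-b) - (JJ (1/2 - ((-t:ℝ):ℂ) * I) (-b) + Dser (1/2 + ((-t:ℝ):ℂ) * I) * phi b)) + JJ (1/2 - ((-t:ℝ):ℂ) * I) (-b) +
       (Dser (1/2 + t * I) + Dser (1/2 + (-t:ℝ) * I)) * phi b := by rw [e0]; ring
    rw [e3]
    refine (norm_add_le _ _).trans ?_
    refine (add_le_add ((norm_add_le _ _).trans (add_le_add (norm_add_le _ _) le_rfl)) le_rfl).trans ?_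
    linarith
  refine ⟨(2 * C1 + C5 + C3 * (2 * |C2|)) + Real.exp 1 * C5 + C4, by positivity, fun t b hb0 hb => ?_, fun t b hb => ?_⟩
  · have h := hmain t b hb0
    rw [PS_zero t b hb, add_zero] at h
    have hj := hJ t b
    have hj2 : Real.exp (b/2) * C5 ≤ Real.exp 1 * C5 := by gcongr; linarith
    have := norm_sub_norm_le (SS t b) (JJ (1/2 - t * I) b)
    linarith
  · have h := hmain t b (by linarith)
    rw [phi_zero b (by rw [abs_of_nonneg (by linarith)]; exact hb), zero_mul, zero_add] at h
    have hJe : JJ (1/2 - t * I) b = cexp ((1/2 - t * I) * b) * HH phi (1/2 - t * I) := by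
      rw [← JJ_two, left_eq_add, JJ]
      refine setIntegral_eq_zero_of_forall_eq_zero fun u hu => ?_
      have hu : 0 < u := hu
      rw [phi_zero _ (by rw [abs_of_nonneg (by linarith)]; linarith)]; simp
    have hjn : ‖JJ (1/2 - t * I) b‖ ≤ C4 * Real.exp (b/2) / (1 + t^2) := by
      rw [hJe, norm_mul, Complex.norm_exp]
      have e : ((1/2 - (t:ℂ) * I) * b).re = b/2 := by simp; ring
      rw [e]
      have h4 := h4 (-t)
      rw [show (((1/2:ℝ)):ℂ) + ((-t:ℝ):ℂ) * I = 1/2 - t * I by push_cast; ring] at h4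
      calc _ ≤ Real.exp (b/2) * (C4 / (1 + (-t)^2)^2) := by gcongr
        _ ≤ Real.exp (b/2) * (C4 / (1 + t^2)) := by
          rw [neg_sq]; gcongr; nlinarith [sq_nonneg t, sq_nonneg (t^2)]
        _ = _ := by ring
    have h8 : ‖SS t b‖ ≤ ‖SS t b + PS t b - JJ (1/2 - t * I) b‖ + ‖PS t b‖ + ‖JJ (1/2 - t * I) b‖ := by
      have e : SS t b = (SS t b + PS t b - JJ (1/2 - t * I) b) - PS t b + JJ (1/2 - t * I) b := by ring
      calc ‖SS t b‖ = ‖(SS t b + PS t b - JJ (1/2 - t * I) b) - PS t b + JJ (1/2 - t * I) b‖ := by rw [← e]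
        _ ≤ _ := (norm_add_le _ _).trans (add_le_add (norm_sub_le _ _) le_rfl)
    have h9 : C4 * Real.exp (b/2) / (1 + t^2) ≤ ((2 * C1 + C5 + C3 * (2 * |C2|)) + Real.exp 1 * C5 + C4) * Real.exp (b/2) / (1 + t^2) := by
      gcongr
      have : 0 ≤ (2 * C1 + C5 + C3 * (2 * |C2|)) + Real.exp 1 * C5 := by positivity
      linarith
    have : 0 ≤ Real.exp 1 * C5 := by positivity
    linarith

end Mont

namespace Mont
open scoped Topology
open scoped ArithmeticFunction.vonMangoldt

lemma log_fact_eq (N : ℕ) : Real.log (N.factorial) = ∑ n ∈ Finset.Ioc 0 N, Λ n * ((N / n : ℕ) : ℝ) := by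
  have h := ArithmeticFunction.sum_Ioc_mul_zeta_eq_sum (ArithmeticFunction.vonMangoldt) N
  rw [ArithmeticFunction.vonMangoldt_mul_zeta] at h
  rw [← h]
  induction N with
  | zero => simp
  | succ n ih =>
    rw [← Finset.insert_Ioc_right_eq_Ioc_add_one (by omega), Finset.sum_insert (by simp), Nat.factorial_succ]
    push_cast
    rw [Real.log_mul (by positivity) (by positivity), ih (ArithmeticFunction.vonMangoldt_mul_zeta ▸ ArithmeticFunction.sum_Ioc_mul_zeta_eq_sum (ArithmeticFunction.vonMangoldt) n)]
    simp

lemma mertens_nat (N : ℕ) (hN : 1 ≤ N) : Real.log N - 1 ≤ ∑ n ∈ Finset.Ioc 0 N, Λ n / n ∧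
    ∑ n ∈ Finset.Ioc 0 N, Λ n / n ≤ Real.log N + (Real.log 4 + 4) := by
  have hN0 : (0:ℝ) < N := by exact_mod_cast hN
  have h := log_fact_eq N
  constructor
  · have h1 := Stirling.le_log_factorial_stirling (n := N) (by omega)
    have h2 : Real.log N.factorial ≤ ∑ n ∈ Finset.Ioc 0 N, (Λ n / n) * N := by
      rw [h]
      refine Finset.sum_le_sum fun n hn => ?_
      have hn1 : (0:ℝ) < n := by simp at hn; exact_mod_cast hn.1
      rw [div_mul_eq_mul_div, mul_div_assoc]
      exact mul_le_mul_of_nonneg_left Nat.cast_div_le ArithmeticFunction.vonMangoldt_nonneg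
    rw [← Finset.sum_mul] at h2
    have hl : 0 ≤ Real.log N := Real.log_nonneg (by exact_mod_cast hN)
    have hl2 : 0 ≤ Real.log (2 * π) := Real.log_nonneg (by nlinarith [Real.pi_gt_three])
    have : (Real.log N - 1) * N ≤ (∑ n ∈ Finset.Ioc 0 N, Λ n / n) * N := by nlinarith
    exact le_of_mul_le_mul_right this hN0
  · have h1 : ∑ n ∈ Finset.Ioc 0 N, (Λ n / n) * N ≤ Real.log N.factorial + ∑ n ∈ Finset.Ioc 0 N, Λ n := by
      rw [h, ← Finset.sum_add_distrib]
      refine Finset.sum_le_sum fun n hn => ?_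
      have hn0 : 0 < n := by simp at hn; exact hn.1
      have hn1 : (0:ℝ) < n := by exact_mod_cast hn0
      have hv : 0 ≤ Λ n := ArithmeticFunction.vonMangoldt_nonneg
      have : (N:ℝ) / n ≤ ((N / n : ℕ):ℝ) + 1 := by
        rw [div_le_iff₀ hn1]
        have h3 := Nat.lt_div_mul_add hn0 (a := N)
        have h4 : N ≤ (N / n + 1) * n := by rw [add_mul, one_mul]; omega
        exact_mod_cast h4
      rw [div_mul_eq_mul_div, mul_div_assoc]
      nlinarith
    have h2 := Chebyshev.psi_le_const_mul_self (x := N) (by positivity)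
    rw [Chebyshev.psi, Nat.floor_natCast] at h2
    have h3 : Real.log N.factorial ≤ N * Real.log N := by
      rw [← Real.log_pow]
      exact Real.log_le_log (by positivity) (by exact_mod_cast Nat.factorial_le_pow N)
    rw [← Finset.sum_mul] at h1
    have : (∑ n ∈ Finset.Ioc 0 N, Λ n / n) * N ≤ (Real.log N + (Real.log 4 + 4)) * N := by nlinarith
    exact le_of_mul_le_mul_right this hN0

def Mt (v : ℝ) : ℝ := ∑ n ∈ Finset.Ioc 0 ⌊Real.exp v⌋₊, Λ n / n

lemma mertens : ∃ C : ℝ, 0 < C ∧ ∀ v : ℝ, 0 ≤ v → |Mt v - v| ≤ C := by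
  have hl4 : 0 < Real.log 4 := Real.log_pos (by norm_num)
  refine ⟨Real.log 4 + 4, by positivity, fun v hv => ?_⟩
  have h1 : 1 ≤ Real.exp v := Real.one_le_exp hv
  have hN : 1 ≤ ⌊Real.exp v⌋₊ := Nat.le_floor (by simpa using h1)
  have hN0 : (1:ℝ) ≤ (⌊Real.exp v⌋₊ : ℝ) := by exact_mod_cast hN
  have hle : (⌊Real.exp v⌋₊ : ℝ) ≤ Real.exp v := Nat.floor_le (by positivity)
  have hlt := Nat.lt_floor_add_one (Real.exp v)
  have a1 : Real.log ⌊Real.exp v⌋₊ ≤ v := by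
    have := Real.log_le_log (by linarith) hle; rwa [Real.log_exp] at this
  have a2 : v ≤ Real.log ⌊Real.exp v⌋₊ + 1 := by
    have : Real.exp v ≤ ⌊Real.exp v⌋₊ * Real.exp 1 := by
      have : 2 ≤ Real.exp 1 := by have := Real.add_one_le_exp 1; linarith
      nlinarith
    have := Real.log_le_log (by positivity) this
    rwa [Real.log_exp, Real.log_mul (by positivity) (by positivity), Real.log_exp] at this
  obtain ⟨b1, b2⟩ := mertens_nat _ hN
  rw [abs_le, Mt]; constructor <;> linarith

lemma primes_sum : ∃ C : ℝ, 0 < C ∧ ∀ y : ℝ, 0 ≤ y →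
    ∑ n ∈ Finset.Ioc 0 ⌊Real.exp y⌋₊, (Λ n)^2 / n * (y - Real.log n) ≤ y^3/6 + C * y^2 := by
  obtain ⟨C, hC, h⟩ := mertens
  refine ⟨C, hC, fun y hy => ?_⟩
  have hlog : ∀ n ∈ Finset.Ioc 0 ⌊Real.exp y⌋₊, 0 ≤ Real.log n ∧ Real.log n ≤ y := by
    intro n hn
    rw [Finset.mem_Ioc] at hn
    have h1 : (1:ℝ) ≤ n := by exact_mod_cast hn.1
    refine ⟨Real.log_nonneg h1, ?_⟩
    have h2 : (n:ℝ) ≤ Real.exp y := (Nat.cast_le.2 hn.2).trans (Nat.floor_le (by positivity))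
    have := Real.log_le_log (by linarith) h2
    rwa [Real.log_exp] at this
  have hM : ∀ v ∈ Ioc 0 y, Mt v = ∑ n ∈ Finset.Ioc 0 ⌊Real.exp y⌋₊, (Λ n / n) * (Ici (Real.log n)).indicator 1 v := by
    intro v hv
    rw [Mt]
    have hsub : Finset.Ioc 0 ⌊Real.exp v⌋₊ ⊆ Finset.Ioc 0 ⌊Real.exp y⌋₊ :=
      Finset.Ioc_subset_Ioc_right (Nat.floor_le_floor (Real.exp_le_exp.2 hv.2))
    rw [← Finset.sum_subset hsub (f := fun n => (Λ n / n) * (Ici (Real.log n)).indicator 1 v)]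
    · refine Finset.sum_congr rfl fun n hn => ?_
      rw [Finset.mem_Ioc] at hn
      have h1 : (1:ℝ) ≤ n := by exact_mod_cast hn.1
      have h2 : (n:ℝ) ≤ Real.exp v := (Nat.cast_le.2 hn.2).trans (Nat.floor_le (by positivity))
      have := Real.log_le_log (by linarith) h2
      rw [Real.log_exp] at this
      rw [indicator_of_mem (by exact this)]; simp
    · intro n hn hn2
      rw [Finset.mem_Ioc] at hn
      have h1 : (1:ℝ) ≤ n := by exact_mod_cast hn.1
      rw [indicator_of_notMem, mul_zero]
      intro hc
      apply hn2
      rw [Finset.mem_Ioc]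
      refine ⟨hn.1, Nat.le_floor ?_⟩
      rw [← Real.exp_log (by linarith : (0:ℝ) < n)]
      exact Real.exp_le_exp.2 hc
  have hint : ∀ n ∈ Finset.Ioc 0 ⌊Real.exp y⌋₊, IntegrableOn (fun v => (2*v - y) * ((Λ n / n) * (Ici (Real.log n)).indicator 1 v)) (Ioc 0 y) := by
    intro n _
    have h1 : IntegrableOn (fun v : ℝ => (2*v - y) * (Λ n / n)) (Ioc 0 y) :=
      (Continuous.integrableOn_Icc (by fun_prop)).mono_set Ioc_subset_Icc_self
    have h2 := h1.indicator (measurableSet_Ici (a := Real.log n))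
    refine h2.congr (Eventually.of_forall fun v => ?_)
    by_cases hv : v ∈ Ici (Real.log n) <;> simp [hv]
  have hval : ∀ n ∈ Finset.Ioc 0 ⌊Real.exp y⌋₊, ∫ v in Ioc 0 y, (2*v - y) * ((Λ n / n) * (Ici (Real.log n)).indicator 1 v) = Λ n / n * (Real.log n * (y - Real.log n)) := by
    intro n hn
    obtain ⟨l0, l1⟩ := hlog n hn
    have e : ∀ v : ℝ, (2*v - y) * ((Λ n / n) * (Ici (Real.log n)).indicator 1 v) = (Ici (Real.log n)).indicator (fun v => (Λ n / n) * (2*v - y)) v := by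
      intro v
      by_cases hv : v ∈ Ici (Real.log n)
      · simp [hv]; ring
      · simp [hv]
    simp only [e]
    rw [setIntegral_indicator measurableSet_Ici]
    have e2 : ∫ v in Ioc 0 y ∩ Ici (Real.log n), (Λ n / n) * (2*v - y) = ∫ v in Ioc (Real.log n) y, (Λ n / n) * (2*v - y) := by
      refine setIntegral_congr_set ?_
      have : (Ioc (Real.log n) y : Set ℝ) =ᵐ[volume] Icc (Real.log n) y := Ioc_ae_eq_Icc
      rcases l0.eq_or_lt with h0 | h0
      · refine Filter.EventuallyEq.of_eq ?_
        ext v; rw [← h0]; show ((0 < v ∧ v ≤ y) ∧ 0 ≤ v) ↔ (0 < v ∧ v ≤ y)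
        constructor
        · intro h; exact h.1
        · intro h; exact ⟨h, h.1.le⟩
      · refine Filter.EventuallyEq.trans (Filter.EventuallyEq.of_eq ?_) this.symm
        ext v; show ((0 < v ∧ v ≤ y) ∧ Real.log n ≤ v) ↔ (Real.log n ≤ v ∧ v ≤ y)
        constructor
        · rintro ⟨h1, h2⟩; exact ⟨h2, h1.2⟩
        · rintro ⟨h1, h2⟩; exact ⟨⟨by linarith, h2⟩, h1⟩
    rw [e2, integral_const_mul, ← intervalIntegral.integral_of_le l1]
    congr 1
    rw [intervalIntegral.integral_sub (Continuous.intervalIntegrable (by fun_prop) _ _) (by simp), intervalIntegral.integral_const_mul, integral_id, intervalIntegral.integral_const]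
    simp; ring
  have key : ∫ v in Ioc 0 y, (2*v - y) * Mt v = ∑ n ∈ Finset.Ioc 0 ⌊Real.exp y⌋₊, Λ n / n * (Real.log n * (y - Real.log n)) := by
    rw [← Finset.sum_congr rfl hval, ← integral_finsetSum _ hint]
    refine setIntegral_congr_fun measurableSet_Ioc fun v hv => ?_
    show (2*v - y) * Mt v = _
    rw [hM v hv, Finset.mul_sum]
  have hMi : IntegrableOn (fun v => (2*v - y) * Mt v) (Ioc 0 y) := by
    refine (integrable_finsetSum _ hint).congr ?_
    filter_upwards [self_mem_ae_restrict measurableSet_Ioc] with v hv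
    rw [hM v hv, Finset.mul_sum]
  have hle : ∫ v in Ioc 0 y, (2*v - y) * Mt v ≤ ∫ v in Ioc 0 y, ((2*v - y) * v + y * C) := by
    refine setIntegral_mono_on hMi ((Continuous.integrableOn_Icc (by fun_prop)).mono_set Ioc_subset_Icc_self) measurableSet_Ioc fun v hv => ?_
    have h1 := h v hv.1.le
    have h2 : |2*v - y| ≤ y := by rw [abs_le]; constructor <;> linarith [hv.1, hv.2]
    have h3 : (2*v - y) * (Mt v - v) ≤ y * C := by
      refine (le_abs_self _).trans ?_
      rw [abs_mul]; gcongr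
    linarith
  have hval2 : ∫ v in Ioc 0 y, ((2*v - y) * v + y * C) = y^3/6 + C * y^2 := by
    rw [← intervalIntegral.integral_of_le hy]
    have : (fun v : ℝ => (2*v - y) * v + y * C) = fun v => 2 * v^2 - y * v + y * C := by ext v; ring
    rw [this, intervalIntegral.integral_add (Continuous.intervalIntegrable (by fun_prop) _ _) (by simp), intervalIntegral.integral_sub (Continuous.intervalIntegrable (by fun_prop) _ _) (Continuous.intervalIntegrable (by fun_prop) _ _), intervalIntegral.integral_const_mul, intervalIntegral.integral_const_mul, integral_id, integral_pow, intervalIntegral.integral_const]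
    simp; ring
  rw [← hval2]
  refine le_trans ?_ hle
  rw [key]
  refine Finset.sum_le_sum fun n hn => ?_
  obtain ⟨l0, l1⟩ := hlog n hn
  have hv : 0 ≤ Λ n := ArithmeticFunction.vonMangoldt_nonneg
  have hv2 : Λ n ≤ Real.log n := ArithmeticFunction.vonMangoldt_le_log
  have : (Λ n)^2 / n * (y - Real.log n) = Λ n / n * (Λ n * (y - Real.log n)) := by ring
  rw [this]
  have : 0 ≤ y - Real.log n := by linarith
  gcongr

end Mont

namespace Mont
open scoped Topology
open scoped ArithmeticFunction.vonMangoldt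

lemma norm_sq_sum {ι : Type*} (s : Finset ι) (a θ : ι → ℝ) :
    ‖∑ i ∈ s, (a i : ℂ) * cexp (θ i * I)‖^2 = ∑ i ∈ s, ∑ j ∈ s, a i * a j * Real.cos (θ i - θ j) := by
  rw [← Complex.normSq_eq_norm_sq, Complex.normSq_apply, Complex.re_sum, Complex.im_sum]
  have e1 : ∀ i, ((a i : ℂ) * cexp (θ i * I)).re = a i * Real.cos (θ i) := fun i => by
    rw [Complex.re_ofReal_mul, Complex.exp_ofReal_mul_I_re]
  have e2 : ∀ i, ((a i : ℂ) * cexp (θ i * I)).im = a i * Real.sin (θ i) := fun i => by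
    rw [Complex.im_ofReal_mul, Complex.exp_ofReal_mul_I_im]
  simp only [e1, e2]
  rw [Finset.sum_mul_sum, Finset.sum_mul_sum, ← Finset.sum_add_distrib]
  refine Finset.sum_congr rfl fun i _ => ?_
  rw [← Finset.sum_add_distrib]
  refine Finset.sum_congr rfl fun j _ => ?_
  rw [Real.cos_sub]; ring

lemma log_sep (N n m : ℕ) (hn : n ∈ Finset.Icc 1 N) (hm : m ∈ Finset.Icc 1 N) (hnm : n < m) :
    1 / (Real.log m - Real.log n) ≤ N * (1 / |(n:ℝ) - m|) := by
  rw [Finset.mem_Icc] at hn hm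
  have hn0 : (0:ℝ) < n := by exact_mod_cast hn.1
  have hm0 : (0:ℝ) < m := by exact_mod_cast hm.1
  have hmN : (m:ℝ) ≤ N := by exact_mod_cast hm.2
  have hlt : (n:ℝ) < m := by exact_mod_cast hnm
  have h1 := Real.one_sub_inv_le_log_of_pos (x := (m:ℝ)/n) (by positivity)
  rw [Real.log_div hm0.ne' hn0.ne', inv_div] at h1
  have h2 : 1 - (n:ℝ)/m = (m - n)/m := by field_simp
  have h3 : ((m:ℝ) - n)/N ≤ (m - n)/m := by gcongr
  have h4 : 0 < ((m:ℝ) - n)/N := div_pos (by linarith) (by linarith)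
  rw [abs_sub_comm, abs_of_pos (by linarith)]
  calc 1 / (Real.log m - Real.log n) ≤ 1 / (((m:ℝ) - n)/N) := one_div_le_one_div_of_le h4 (by linarith)
    _ = _ := by rw [one_div_div]; ring

lemma int_cos_le (N n m : ℕ) (hn : n ∈ Finset.Icc 1 N) (hm : m ∈ Finset.Icc 1 N) (hnm : n ≠ m) (T : ℝ) :
    |∫ t in (0:ℝ)..T, Real.cos (t * (Real.log m - Real.log n))| ≤ N * (1 / |(n:ℝ) - m|) := by
  have key : ∀ c : ℝ, c ≠ 0 → |∫ t in (0:ℝ)..T, Real.cos (t * c)| ≤ 1 / |c| := by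
    intro c hc
    rw [intervalIntegral.integral_comp_mul_right (fun x => Real.cos x) hc, integral_cos, smul_eq_mul, abs_mul, abs_inv, zero_mul, Real.sin_zero, sub_zero, one_div]
    exact mul_le_of_le_one_right (by positivity) (Real.abs_sin_le_one _)
  rcases lt_or_gt_of_ne hnm with h | h
  · have h1 := log_sep N n m hn hm h
    have h2 : 0 < Real.log m - Real.log n := by
      rw [sub_pos]; refine Real.log_lt_log ?_ (by exact_mod_cast h)
      exact_mod_cast (Finset.mem_Icc.1 hn).1
    refine (key _ h2.ne').trans ?_
    rwa [abs_of_pos h2]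
  · have h1 := log_sep N m n hm hn h
    have h2 : 0 < Real.log n - Real.log m := by
      rw [sub_pos]; refine Real.log_lt_log ?_ (by exact_mod_cast h)
      exact_mod_cast (Finset.mem_Icc.1 hm).1
    refine (key _ (by linarith)).trans ?_
    rwa [abs_sub_comm, abs_of_pos h2, abs_sub_comm (n:ℝ)]

lemma recip_sum (N n : ℕ) (hn : n ∈ Finset.Icc 1 N) : ∑ m ∈ Finset.Icc 1 N, 1 / |(n:ℝ) - m| ≤ 2 * (1 + Real.log N) := by
  have hH : ∑ k ∈ Finset.Icc 1 N, 1 / (k:ℝ) ≤ 1 + Real.log N := by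
    have := harmonic_le_one_add_log N
    rw [harmonic_eq_sum_Icc] at this
    push_cast at this
    simpa [one_div] using this
  rw [← Finset.sum_filter_add_sum_filter_not _ (fun m => m < n)]
  rw [Finset.mem_Icc] at hn
  have h1 : ∑ m ∈ (Finset.Icc 1 N).filter (fun m => m < n), 1 / |(n:ℝ) - m| ≤ ∑ k ∈ Finset.Icc 1 N, 1 / (k:ℝ) := by
    have e : ∑ m ∈ (Finset.Icc 1 N).filter (fun m => m < n), 1 / |(n:ℝ) - m| = ∑ k ∈ ((Finset.Icc 1 N).filter (fun m => m < n)).image (fun m => n - m), 1 / (k:ℝ) := by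
      rw [Finset.sum_image]
      · refine Finset.sum_congr rfl fun m hm => ?_
        rw [Finset.mem_filter] at hm
        rw [Nat.cast_sub hm.2.le, abs_of_pos (by have : (m:ℝ) < n := by exact_mod_cast hm.2
                                                 linarith)]
      · intro x hx y hy h
        simp only [Finset.coe_filter, Finset.mem_Icc] at hx hy
        have h1 := hx.2; have h2 := hy.2
        simp only [] at h
        omega
    rw [e]
    refine Finset.sum_le_sum_of_subset_of_nonneg ?_ (fun _ _ _ => by positivity)
    intro k hk
    simp only [Finset.mem_image, Finset.mem_filter, Finset.mem_Icc] at hk ⊢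
    obtain ⟨m, hm, rfl⟩ := hk
    omega
  have h2 : ∑ m ∈ (Finset.Icc 1 N).filter (fun m => ¬ m < n), 1 / |(n:ℝ) - m| ≤ ∑ k ∈ Finset.Icc 1 N, 1 / (k:ℝ) := by
    have e : ∑ m ∈ (Finset.Icc 1 N).filter (fun m => ¬ m < n), 1 / |(n:ℝ) - m| = ∑ k ∈ ((Finset.Icc 1 N).filter (fun m => ¬ m < n)).image (fun m => m - n), 1 / (k:ℝ) := by
      rw [Finset.sum_image]
      · refine Finset.sum_congr rfl fun m hm => ?_
        rw [Finset.mem_filter] at hm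
        have hm2 : n ≤ m := by omega
        rw [Nat.cast_sub hm2, abs_sub_comm, abs_of_nonneg (by have : (n:ℝ) ≤ m := by exact_mod_cast hm2
                                                              linarith)]
      · intro x hx y hy h
        simp only [Finset.coe_filter, Finset.mem_Icc] at hx hy
        have h1 := hx.2; have h2 := hy.2
        simp only [] at h
        omega
    rw [e]
    have e2 : ∑ k ∈ Finset.Icc 1 N, 1 / (k:ℝ) = ∑ k ∈ Finset.Icc 0 N, 1 / (k:ℝ) := by
      rw [← Finset.insert_Icc_add_one_left_eq_Icc (Nat.zero_le N), Finset.sum_insert (by simp)]; simp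
    rw [e2]
    refine Finset.sum_le_sum_of_subset_of_nonneg ?_ (fun _ _ _ => by positivity)
    intro k hk
    simp only [Finset.mem_image, Finset.mem_filter, Finset.mem_Icc] at hk ⊢
    obtain ⟨m, hm, rfl⟩ := hk
    omega
  linarith

lemma mean_value (N : ℕ) (a : ℕ → ℝ) (T : ℝ) (hT : 0 ≤ T) :
    ∫ t in (0:ℝ)..T, ‖∑ n ∈ Finset.Icc 1 N, (a n : ℂ) * cexp (((-(t * Real.log n) : ℝ) : ℂ) * I)‖^2
      ≤ (T + 2 * N * (1 + Real.log N)) * ∑ n ∈ Finset.Icc 1 N, (a n)^2 := by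
  have e : ∀ t : ℝ, ‖∑ n ∈ Finset.Icc 1 N, (a n : ℂ) * cexp (((-(t * Real.log n) : ℝ) : ℂ) * I)‖^2 =
      ∑ n ∈ Finset.Icc 1 N, ∑ m ∈ Finset.Icc 1 N, a n * a m * Real.cos (t * (Real.log m - Real.log n)) := by
    intro t
    rw [norm_sq_sum (Finset.Icc 1 N) a (fun n : ℕ => -(t * Real.log n))]
    refine Finset.sum_congr rfl fun n _ => Finset.sum_congr rfl fun m _ => ?_
    congr 2; ring
  simp only [e]
  have hi : ∀ n m : ℕ, IntervalIntegrable (fun t : ℝ => a n * a m * Real.cos (t * (Real.log m - Real.log n))) volume 0 T :=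
    fun n m => Continuous.intervalIntegrable (by fun_prop) _ _
  rw [intervalIntegral.integral_finsetSum (fun n _ => Continuous.intervalIntegrable (by fun_prop) _ _)]
  have hterm : ∀ n ∈ Finset.Icc 1 N, ∀ m ∈ Finset.Icc 1 N,
      ∫ t in (0:ℝ)..T, a n * a m * Real.cos (t * (Real.log m - Real.log n)) ≤
        (if n = m then T * (a n)^2 else 0) + ((a n)^2/2 * (N * (1 / |(n:ℝ) - m|)) + (a m)^2/2 * (N * (1 / |(m:ℝ) - n|))) := by
    intro n hn m hm
    by_cases h : n = m
    · subst h; simp; apply le_of_eq; ring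
    · rw [intervalIntegral.integral_const_mul, if_neg h, zero_add, abs_sub_comm (m:ℝ)]
      have h1 := int_cos_le N n m hn hm h T
      have h2 : |a n * a m| ≤ (a n)^2/2 + (a m)^2/2 := by
        rw [abs_mul]; nlinarith [sq_nonneg (|a n| - |a m|), sq_abs (a n), sq_abs (a m)]
      refine (le_abs_self _).trans ?_
      rw [abs_mul, ← add_mul]
      gcongr
  rw [Finset.sum_congr rfl fun n _ => intervalIntegral.integral_finsetSum fun m _ => hi n m]
  refine (Finset.sum_le_sum fun n hn => Finset.sum_le_sum fun m hm => hterm n hn m hm).trans ?_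
  simp only [Finset.sum_add_distrib]
  have hA : ∑ n ∈ Finset.Icc 1 N, ∑ m ∈ Finset.Icc 1 N, (if n = m then T * (a n)^2 else 0) = T * ∑ n ∈ Finset.Icc 1 N, (a n)^2 := by
    rw [Finset.mul_sum]
    refine Finset.sum_congr rfl fun n hn => ?_
    rw [Finset.sum_ite_eq, if_pos hn]
  have hB : ∑ n ∈ Finset.Icc 1 N, ∑ m ∈ Finset.Icc 1 N, (a n)^2/2 * (N * (1 / |(n:ℝ) - m|)) ≤ N * (1 + Real.log N) * ∑ n ∈ Finset.Icc 1 N, (a n)^2 := by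
    rw [Finset.mul_sum]
    refine Finset.sum_le_sum fun n hn => ?_
    rw [← Finset.mul_sum, ← Finset.mul_sum]
    have := recip_sum N n hn
    calc (a n)^2/2 * (N * ∑ m ∈ Finset.Icc 1 N, 1 / |(n:ℝ) - m|) ≤ (a n)^2/2 * (N * (2 * (1 + Real.log N))) := by gcongr
      _ = _ := by ring
  have hC : ∑ n ∈ Finset.Icc 1 N, ∑ m ∈ Finset.Icc 1 N, (a m)^2/2 * (N * (1 / |(m:ℝ) - n|)) = ∑ n ∈ Finset.Icc 1 N, ∑ m ∈ Finset.Icc 1 N, (a n)^2/2 * (N * (1 / |(n:ℝ) - m|)) :=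
    Finset.sum_comm
  rw [hA, hC]
  linarith

end Mont

namespace Mont
open scoped Topology
open scoped ArithmeticFunction.vonMangoldt

/-- prime weight sum -/
def QQ (N : ℕ) (b : ℝ) : ℝ := ∑ n ∈ Finset.Icc 1 N, (Λ n)^2/n * (phi (b - Real.log n))^2

lemma QQ_nonneg (N : ℕ) (b : ℝ) : 0 ≤ QQ N b := Finset.sum_nonneg fun n _ => by positivity

lemma QQ_cont (N : ℕ) : Continuous (QQ N) := by
  unfold QQ
  have := phi_cont
  fun_prop

lemma PS_eq (Y b t : ℝ) (hb : b ≤ Y) :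
    PS t b = ∑ n ∈ Finset.Icc 1 ⌊Real.exp (Y+1/4)⌋₊,
      ((Λ n * Real.exp (-(Real.log n)/2) * phi (b - Real.log n) : ℝ) : ℂ) *
        cexp (((-(t*Real.log n):ℝ):ℂ)*I) := by
  unfold PS
  rw [tsum_eq_sum (s := Finset.Icc 1 ⌊Real.exp (Y+1/4)⌋₊)]
  · refine Finset.sum_congr rfl fun n _ => ?_
    have : cexp (-(1/2+t*I)*Real.log n) = (Real.exp (-(Real.log n)/2) : ℂ) * cexp (((-(t*Real.log n):ℝ):ℂ)*I) := by
      push_cast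
      rw [← Complex.exp_add]
      congr 1; ring
    rw [this]; push_cast; ring
  · intro n hn
    rcases Nat.eq_zero_or_pos n with h | h
    · subst h; simp
    · have h1 : ⌊Real.exp (Y+1/4)⌋₊ < n := by
        by_contra hc; exact hn (Finset.mem_Icc.2 ⟨h, by omega⟩)
      have h2 := (Nat.floor_lt (Real.exp_pos _).le).1 h1
      have h3 : Y + 1/4 < Real.log n := (Real.lt_log_iff_exp_lt (by exact_mod_cast h)).2 h2
      rw [phi_zero _ (by rw [abs_of_nonpos (by linarith)]; linarith)]; simp

lemma PS_ms (Y b T : ℝ) (hb : b ≤ Y) (hT : 0 ≤ T) :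
    Continuous (fun t => ‖PS t b‖^2) ∧
    ∫ t in (0:ℝ)..T, ‖PS t b‖^2 ≤ (T + 2*⌊Real.exp (Y+1/4)⌋₊*(1+Real.log ⌊Real.exp (Y+1/4)⌋₊)) *
      QQ ⌊Real.exp (Y+1/4)⌋₊ b := by
  constructor
  · simp_rw [PS_eq Y b _ hb]; fun_prop
  simp_rw [PS_eq Y b _ hb]
  refine (mean_value _ (fun n => Λ n * Real.exp (-(Real.log n)/2) * phi (b - Real.log n)) T hT).trans (le_of_eq ?_)
  unfold QQ
  congr 1
  refine Finset.sum_congr rfl fun n hn => ?_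
  have hn : (0:ℝ) < n := by exact_mod_cast (Finset.mem_Icc.1 hn).1
  have : Real.exp (-(Real.log n)/2)^2 = 1/n := by
    rw [← Real.exp_nat_mul]
    rw [show ((2:ℕ):ℝ) * (-(Real.log n)/2) = - Real.log n by push_cast; ring, Real.exp_neg, Real.exp_log hn, one_div]
  rw [mul_pow, mul_pow, this]; ring

lemma ev_small : ∀ᶠ T : ℝ in atTop, ∀ Y, Y = 19/20 * Real.log T →
    T + 2*⌊Real.exp (Y+1/4)⌋₊*(1+Real.log ⌊Real.exp (Y+1/4)⌋₊) ≤ 101/100 * T := by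
  have h1 : Tendsto (fun L : ℝ => Real.exp (L/20) / (L/20)^2) atTop atTop := by
    have := (Real.tendsto_exp_div_pow_atTop 2).comp (tendsto_id.atTop_div_const (show (0:ℝ) < 20 by norm_num))
    exact this
  have h2 := (h1.eventually (eventually_ge_atTop (Real.exp (1/4) * 800*1000))).and (eventually_ge_atTop 1000)
  filter_upwards [Real.tendsto_log_atTop.eventually h2, eventually_gt_atTop 0] with T hT hT0 Y hY
  obtain ⟨hT, hL⟩ := hT
  obtain ⟨L, hLd⟩ : ∃ L, L = Real.log T := ⟨_, rfl⟩
  rw [← hLd] at hT hL hY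
  have hTe : T = Real.exp L := by rw [hLd, Real.exp_log hT0]
  have hf : (⌊Real.exp (Y+1/4)⌋₊:ℝ) ≤ Real.exp (Y+1/4) := Nat.floor_le (Real.exp_pos _).le
  have hf1 : (1:ℝ) ≤ ⌊Real.exp (Y+1/4)⌋₊ := by
    have : 1 ≤ ⌊Real.exp (Y+1/4)⌋₊ := Nat.le_floor (by simpa using by linarith)
    exact_mod_cast this
  have hl : Real.log ⌊Real.exp (Y+1/4)⌋₊ ≤ Y + 1/4 := by
    rw [Real.log_le_iff_le_exp (by linarith)]; exact hf
  have h3 : Real.exp (1/4) * 800*1000 * (L/20)^2 ≤ Real.exp (L/20) := by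
    rwa [le_div_iff₀ (by positivity)] at hT
  have hl0 : 0 ≤ Real.log ⌊Real.exp (Y+1/4)⌋₊ := Real.log_nonneg hf1
  have h4 : 2*(⌊Real.exp (Y+1/4)⌋₊:ℝ)*(1+Real.log ⌊Real.exp (Y+1/4)⌋₊) ≤ 2 * Real.exp (Y+1/4) * (1 + (Y+1/4)) := by
    gcongr
  have h5 : T = Real.exp Y * Real.exp (L/20) := by rw [hTe, ← Real.exp_add]; congr 1; linarith
  have h6 : 2 * Real.exp (Y+1/4) * (1 + (Y+1/4)) ≤ 1/100 * T := by
    rw [h5, Real.exp_add]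
    have e1 := Real.exp_pos Y
    have e2 := Real.exp_pos (1/4)
    have : 2 * Real.exp (1/4) * (1 + (Y+1/4)) ≤ 1/100 * Real.exp (L/20) := by
      have : 2 * Real.exp (1/4) * (1 + (Y+1/4)) ≤ 1/100 * (Real.exp (1/4) * 800*1000 * (L/20)^2) := by
        have : 2 * (1 + (Y+1/4)) ≤ 1/100 * (800*1000 * (L/20)^2) := by nlinarith
        nlinarith
      linarith
    nlinarith
  linarith

lemma phi_sq_int : Integrable (fun v => (phi v)^2) := by
  by_contra h
  have := integral_undef h
  rw [phi_sq] at this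
  have := Real.pi_pos
  have : (0:ℝ) < 1/(2*π) := by positivity
  linarith

lemma phi_half (Y : ℝ) (hY : 0 ≤ Y) : ∫ b in (0:ℝ)..Y, (phi b)^2 ≤ 1/(4*π) := by
  have h1 : ∫ b in Ioi (0:ℝ), (phi b)^2 = 1/(4*π) := by
    have h := integral_comp_abs (f := fun x => (phi x)^2)
    have h2 : (fun x:ℝ => (phi |x|)^2) = fun x => (phi x)^2 := by
      ext x; rcases abs_choice x with h | h <;> rw [h]
      rw [phi_even]
    rw [h2, phi_sq] at h
    have := Real.pi_pos
    have e : 1/(2*π) = 2 * (1/(4*π)) := by field_simp; norm_num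
    linarith
  rw [← h1, intervalIntegral.integral_of_le hY]
  exact setIntegral_mono_set phi_sq_int.integrableOn (Eventually.of_forall fun x => sq_nonneg _) (Eventually.of_forall fun x hx => hx.1)

lemma QQ_int (Y : ℝ) (hY : 0 < Y) :
    ∫ b in (0:ℝ)..Y, (1 - b/Y) * QQ ⌊Real.exp (Y+1/4)⌋₊ b ≤
      1/(2*π*Y) * ∑ n ∈ Finset.Ioc 0 ⌊Real.exp (Y+1/4)⌋₊, (Λ n)^2/n*((Y+1/4) - Real.log n) := by
  unfold QQ
  simp_rw [Finset.mul_sum]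
  have := phi_cont
  rw [intervalIntegral.integral_finsetSum (fun n _ => Continuous.intervalIntegrable (by fun_prop) _ _)]
  refine Finset.sum_le_sum fun n hn => ?_
  obtain ⟨hn1, hn2⟩ := Finset.mem_Icc.1 hn
  have hn0 : (0:ℝ) < n := by exact_mod_cast hn1
  have hlog : Real.log n ≤ Y + 1/4 := by
    rw [Real.log_le_iff_le_exp hn0]
    exact (Nat.le_floor_iff (Real.exp_pos _).le).1 hn2
  have hpi := Real.pi_pos
  have e1 : ∫ b in (0:ℝ)..Y, (1 - b/Y) * ((Λ n)^2/n * (phi (b - Real.log n))^2) ≤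
     ∫ b in (0:ℝ)..Y, ((Λ n)^2/n * (((Y+1/4) - Real.log n)/Y)) * (phi (b - Real.log n))^2 := by
    refine intervalIntegral.integral_mono_on hY.le (Continuous.intervalIntegrable (by fun_prop) _ _) (Continuous.intervalIntegrable (by fun_prop) _ _) fun b hb => ?_
    by_cases hz : 1/4 ≤ |b - Real.log n|
    · rw [phi_zero _ hz]; simp
    · push Not at hz
      have := (abs_lt.1 hz).1
      have h2 : 1 - b/Y ≤ ((Y+1/4) - Real.log n)/Y := by
        rw [le_div_iff₀ hY, sub_mul, div_mul_cancel₀ _ hY.ne']; linarith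
      have h3 : 0 ≤ (Λ n)^2/n * (phi (b - Real.log n))^2 := by positivity
      nlinarith
  refine e1.trans ?_
  rw [intervalIntegral.integral_const_mul]
  have e2 : ∫ b in (0:ℝ)..Y, (phi (b - Real.log n))^2 ≤ 1/(2*π) := by
    rw [← phi_sq, ← integral_sub_right_eq_self (fun v => (phi v)^2) (Real.log n), intervalIntegral.integral_of_le hY.le]
    exact setIntegral_le_integral (phi_sq_int.comp_sub_right _) (Eventually.of_forall fun x => sq_nonneg _)
  have e3 : 0 ≤ (Λ n)^2/n * (((Y+1/4) - Real.log n)/Y) :=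
    mul_nonneg (by positivity) (div_nonneg (by linarith) hY.le)
  refine (mul_le_mul_of_nonneg_left e2 e3).trans (le_of_eq ?_)
  field_simp

end Mont

namespace Mont
open scoped Topology
open scoped ArithmeticFunction.vonMangoldt

def ZT (T : ℝ) : Finset Z := (ZF (T+4)).filter (fun z => 0 < gam z ∧ gam z ≤ T)

lemma mem_ZT {T : ℝ} {z : Z} : z ∈ ZT T ↔ 0 < gam z ∧ gam z ≤ T := by
  unfold ZT
  rw [Finset.mem_filter, mem_ZF]
  refine ⟨fun h => h.2, fun h => ⟨?_, h⟩⟩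
  have h1 := X_zero_strip z.1.2
  refine (Complex.norm_le_abs_re_add_abs_im _).trans ?_
  have h2 : (rho z - 2).im = gam z := by simp [rho, gam]
  have h3 : (rho z - 2).re = z.1.1.re - 2 := by simp [rho]
  rw [h2, h3, abs_of_pos h.1, abs_of_nonpos (by linarith)]
  linarith

def ST (T t b : ℝ) : ℂ := ∑ z ∈ ZT T, cexp ((gam z*I - t*I)*b) * hh (t - gam z)

lemma norm_ph (a b t : ℝ) : ‖cexp ((a*I - t*I)*b)‖ = 1 := by
  rw [show ((a:ℂ)*I - t*I)*b = (((a - t)*b : ℝ):ℂ)*I by push_cast; ring, Complex.norm_exp_ofReal_mul_I]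

def ee (T t : ℝ) : ℝ := 1/(1+t^2) + 1/(1+(t-T)^2)

lemma hh_prod {C : ℝ} (hC : 0 < C) (h : ∀ u, |hh u| ≤ C / (1 + u^2)^2) (u m : ℝ) (hm : m^2 ≤ u^2) :
    |hh u| ≤ C/(1+m^2) * (1/(1+u^2)) := by
  refine (h u).trans ?_
  rw [div_mul_div_comm, mul_one, sq (1+u^2)]
  gcongr

lemma fin_le (hs : Summable (fun z : Z => 1 / (1 + ((0:ℝ) - gam z)^2))) (t : ℝ)
    (hst : Summable (fun z : Z => 1 / (1 + (t - gam z)^2))) (s : Finset Z) :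
    ∑ z ∈ s, 1 / (1 + (t - gam z)^2) ≤ ∑' z : Z, 1 / (1 + (t - gam z)^2) :=
  hst.sum_le_tsum s (fun z _ => by positivity)

lemma ST_in (hRH : RiemannHypothesis) : ∃ C : ℝ, 0 < C ∧ ∀ T t b : ℝ, 0 ≤ t → t ≤ T →
    ‖ST T t b‖ ≤ ‖SS t b‖ + C * Real.log (T+2) * ee T t := by
  obtain ⟨C1, hC1, h1⟩ := hh_bd
  obtain ⟨C2, hC2, h2⟩ := density hRH
  refine ⟨C1*C2, by positivity, fun T t b ht0 htT => ?_⟩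
  obtain ⟨hsum, hle⟩ := h2 t
  have hb : ∀ z : Z, ‖cexp ((gam z*I - t*I)*b) * hh (t - gam z)‖ = |hh (t - gam z)| := fun z => by
    rw [norm_mul, norm_ph, one_mul, Complex.norm_real, Real.norm_eq_abs]
  have hS : Summable (fun z : Z => cexp ((gam z*I - t*I)*b) * hh (t - gam z)) := by
    refine Summable.of_norm_bounded (hsum.mul_left C1) fun z => ?_
    rw [hb]
    refine (hh_prod hC1 h1 _ 0 (by simpa using sq_nonneg (t - gam z))).trans (le_of_eq ?_)
    simp
  have hdec := hS.sum_add_tsum_compl (s := ZT T)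
  have hT2 : SS t b = ST T t b + ∑' z : ((ZT T : Set Z)ᶜ : Set Z), cexp ((gam z.1*I - t*I)*b) * hh (t - gam z.1) := by
    unfold SS ST; exact hdec.symm
  have he0 : 0 ≤ ee T t := by unfold ee; positivity
  have hrest : ‖∑' z : ((ZT T : Set Z)ᶜ : Set Z), cexp ((gam z.1*I - t*I)*b) * hh (t - gam z.1)‖ ≤
      ∑' z : ((ZT T : Set Z)ᶜ : Set Z), C1 * ee T t * (1/(1+(t-gam z.1)^2)) := by
    refine tsum_of_norm_bounded (((hsum.subtype _).mul_left _).hasSum) fun z => ?_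
    rw [hb]
    have hz : ¬ (0 < gam z.1 ∧ gam z.1 ≤ T) := fun h => z.2 (mem_ZT.2 h)
    by_cases hg : 0 < gam z.1
    · have hgT : T < gam z.1 := by by_contra hc; exact hz ⟨hg, not_lt.1 hc⟩
      refine (hh_prod hC1 h1 _ (t - T) (by nlinarith)).trans ?_
      refine mul_le_mul_of_nonneg_right ?_ (by positivity)
      rw [div_eq_mul_one_div]
      refine mul_le_mul_of_nonneg_left ?_ hC1.le
      unfold ee
      have : 0 < 1/(1+t^2) := by positivity
      linarith
    · push Not at hg
      refine (hh_prod hC1 h1 _ t (by nlinarith)).trans ?_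
      refine mul_le_mul_of_nonneg_right ?_ (by positivity)
      rw [div_eq_mul_one_div]
      refine mul_le_mul_of_nonneg_left ?_ hC1.le
      unfold ee
      have : 0 < 1/(1+(t-T)^2) := by positivity
      linarith
  have hrest2 : ∑' z : ((ZT T : Set Z)ᶜ : Set Z), C1 * ee T t * (1/(1+(t-gam z.1)^2)) ≤ C1 * ee T t * (C2 * Real.log (|t|+2)) := by
    rw [tsum_mul_left]
    gcongr
    exact (hsum.tsum_subtype_le _ _ (fun z => by positivity)).trans hle
  have hlog : Real.log (|t|+2) ≤ Real.log (T+2) := by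
    rw [abs_of_nonneg ht0]; exact Real.log_le_log (by linarith) (by linarith)
  have hfin : C1 * ee T t * (C2 * Real.log (|t|+2)) ≤ C1*C2 * Real.log (T+2) * ee T t := by
    have : C1 * ee T t * (C2 * Real.log (|t|+2)) ≤ C1 * ee T t * (C2 * Real.log (T+2)) := by gcongr
    linarith
  have : ST T t b = SS t b - ∑' z : ((ZT T : Set Z)ᶜ : Set Z), cexp ((gam z.1*I - t*I)*b) * hh (t - gam z.1) := by
    rw [hT2]; ring
  rw [this]
  refine (norm_sub_le _ _).trans ?_
  linarith

lemma log_sq_le (s : ℝ) (hs : 0 ≤ s) : Real.log (s+2)^2 ≤ 2*(1+s^2) := by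
  have h1 : Real.log (s+2) ≤ s + 1 := by
    have := Real.log_le_sub_one_of_pos (x := s+2) (by linarith); linarith
  have h0 : 0 ≤ Real.log (s+2) := Real.log_nonneg (by linarith)
  nlinarith [sq_nonneg (s-1)]

lemma log_add_le (s T : ℝ) (hs : 0 ≤ s) (hT : 0 ≤ T) : Real.log (T+s+2) ≤ 4 * Real.log (T+2) * Real.log (s+2) := by
  have h1 : Real.log (T+s+2) ≤ Real.log ((T+2)*(s+2)) := Real.log_le_log (by linarith) (by nlinarith)
  rw [Real.log_mul (by linarith) (by linarith)] at h1
  have h2 := log_ge T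
  have h3 := log_ge s
  rw [abs_of_nonneg hT] at h2
  rw [abs_of_nonneg hs] at h3
  nlinarith

lemma ST_out (hRH : RiemannHypothesis) : ∃ C : ℝ, 0 < C ∧ ∀ T t b : ℝ, 0 ≤ T → (t < 0 ∨ T < t) →
    ‖ST T t b‖^2 ≤ C * Real.log (T+2)^2 * ee T t := by
  obtain ⟨C1, hC1, h1⟩ := hh_bd
  obtain ⟨C2, hC2, h2⟩ := density hRH
  refine ⟨32*(C1*C2)^2, by positivity, fun T t b hT ht => ?_⟩
  have hl := log_ge T
  rw [abs_of_nonneg hT] at hl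
  have key : ∀ m : ℝ, (∀ z ∈ ZT T, m^2 ≤ (t - gam z)^2) → ‖ST T t b‖ ≤ C1*C2/(1+m^2) * Real.log (|t|+2) := by
    intro m hm
    unfold ST
    refine (norm_sum_le _ _).trans ?_
    have : ∀ z ∈ ZT T, ‖cexp ((gam z*I - t*I)*b) * hh (t - gam z)‖ ≤ C1/(1+m^2) * (1/(1+(t-gam z)^2)) := fun z hz => by
      rw [norm_mul, norm_ph, one_mul, Complex.norm_real, Real.norm_eq_abs]
      exact hh_prod hC1 h1 _ m (hm z hz)
    refine (Finset.sum_le_sum this).trans ?_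
    rw [← Finset.mul_sum]
    have h3 := (fin_le (h2 0).1 t (h2 t).1 (ZT T)).trans (h2 t).2
    have : C1*C2/(1+m^2) * Real.log (|t|+2) = C1/(1+m^2) * (C2 * Real.log (|t|+2)) := by ring
    rw [this]; gcongr
  have fin : ∀ s : ℝ, 0 ≤ s → ‖ST T t b‖ ≤ C1*C2/(1+s^2) * (4*Real.log (T+2) * Real.log (s+2)) →
      ‖ST T t b‖^2 ≤ 32*(C1*C2)^2 * Real.log (T+2)^2 * (1/(1+s^2)) := by
    intro s hs h
    have h3 := pow_le_pow_left₀ (norm_nonneg _) h 2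
    refine h3.trans ?_
    have h4 := log_sq_le s hs
    have : (C1*C2/(1+s^2) * (4*Real.log (T+2) * Real.log (s+2)))^2 =
      16 * (C1*C2)^2 * Real.log (T+2)^2 * (1/(1+s^2))^2 * Real.log (s+2)^2 := by
        field_simp; ring
    rw [this]
    have : 16 * (C1*C2)^2 * Real.log (T+2)^2 * (1/(1+s^2))^2 * Real.log (s+2)^2 ≤
      16 * (C1*C2)^2 * Real.log (T+2)^2 * (1/(1+s^2))^2 * (2*(1+s^2)) := by gcongr
    refine this.trans (le_of_eq ?_)
    field_simp; ring
  rcases ht with ht | ht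
  · have h3 := key (-t) fun z hz => by
      have := (mem_ZT.1 hz).1; nlinarith
    have h4 : Real.log (|t|+2) ≤ 4*Real.log (T+2) * Real.log (-t+2) := by
      rw [abs_of_neg ht]
      have := log_ge t
      rw [abs_of_neg ht] at this
      nlinarith
    have h5 := fin (-t) (by linarith) (h3.trans (by gcongr))
    refine h5.trans ?_
    unfold ee
    have : 0 < 1/(1+(t-T)^2) := by positivity
    gcongr
    rw [neg_sq]; linarith
  · have h3 := key (t-T) fun z hz => by
      have := (mem_ZT.1 hz).2; nlinarith
    have h4 : Real.log (|t|+2) ≤ 4*Real.log (T+2) * Real.log (t-T+2) := by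
      rw [abs_of_pos (by linarith)]
      have := log_add_le (t-T) T (by linarith) hT
      rwa [show T+(t-T)+2 = t+2 by ring] at this
    have h5 := fin (t-T) (by linarith) (h3.trans (by gcongr))
    refine h5.trans ?_
    unfold ee
    have : 0 < 1/(1+t^2) := by positivity
    gcongr
    linarith

end Mont

namespace Mont
open scoped Topology
open scoped ArithmeticFunction.vonMangoldt

lemma int_q : ∫ t:ℝ, 1/(1+t^2) = π := by simp

lemma ee_int (T : ℝ) : Integrable (ee T) := by
  unfold ee
  exact int_w1.add (int_w1.comp_sub_right T)

lemma ee_val (T : ℝ) : ∫ t, ee T t = 2*π := by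
  unfold ee
  rw [integral_add int_w1 (int_w1.comp_sub_right T),
    integral_sub_right_eq_self (fun t:ℝ => 1/(1+t^2)) T, int_q]; ring

lemma q_le (t : ℝ) : 1/(1+t^2) ≤ 1 := by
  rw [div_le_one (by positivity)]; nlinarith [sq_nonneg t]

lemma ee_le (T t : ℝ) : ee T t ≤ 2 := by
  have := q_le t; have := q_le (t-T); unfold ee; linarith

lemma ee_nonneg (T t : ℝ) : 0 ≤ ee T t := by unfold ee; positivity

lemma sq_split (x a y z w : ℝ) (hx : 0 ≤ x) (h : x ≤ a + (y+z+w)) :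
    x^2 ≤ 101/100*a^2 + 303*(y^2+z^2+w^2) := by
  have h1 : x^2 ≤ (a+(y+z+w))^2 := pow_le_pow_left₀ hx h 2
  nlinarith [sq_nonneg (a - 100*(y+z+w)), sq_nonneg (y-z), sq_nonneg (y-w), sq_nonneg (z-w)]

lemma ST_gen (hRH : RiemannHypothesis) (C0 : ℝ) (hC0 : 0 < C0) : ∃ C : ℝ, 0 < C ∧ ∀ T b : ℝ, 0 ≤ T → ∀ A : ℝ → ℝ,
    Continuous A → (∀ t, 0 ≤ t → t ≤ T → ‖SS t b‖ ≤ A t + C0 + C0 * Real.exp (b/2) / (1+t^2)) →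
    ∫ t, ‖ST T t b‖^2 ≤ 101/100 * (∫ t in (0:ℝ)..T, (A t)^2) + C * (T + Real.exp b + Real.log (T+2)^2) := by
  obtain ⟨C1, hC1, h1⟩ := ST_in hRH
  obtain ⟨C2, hC2, h2⟩ := ST_out hRH
  obtain ⟨K, hK⟩ : ∃ K, K = 303*C0^2 + 606*C1^2 + C2 := ⟨_, rfl⟩
  have hK0 : 0 < K := by rw [hK]; positivity
  refine ⟨K*(2*π), by have := Real.pi_pos; positivity, fun T b hT A hA hS => ?_⟩
  obtain ⟨g1, hg1⟩ : ∃ g1 : ℝ → ℝ, g1 = (Ioc 0 T).indicator (fun t => 101/100*(A t)^2 + K) := ⟨_, rfl⟩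
  have hi0 : IntegrableOn (fun t => 101/100*(A t)^2 + K) (Ioc 0 T) :=
    (Continuous.integrableOn_Icc (by fun_prop)).mono_set Ioc_subset_Icc_self
  have hi1 : Integrable g1 := by
    rw [hg1, integrable_indicator_iff measurableSet_Ioc]; exact hi0
  have hi2 : Integrable (fun t : ℝ => K * Real.exp b * (1/(1+t^2))) := int_w1.const_mul _
  have hi3 : Integrable (fun t : ℝ => K * Real.log (T+2)^2 * ee T t) := (ee_int T).const_mul _
  have hmono : ∫ t, ‖ST T t b‖^2 ≤ ∫ t, ((g1 t + K * Real.exp b * (1/(1+t^2))) + K * Real.log (T+2)^2 * ee T t) := by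
    refine integral_mono_of_nonneg (Eventually.of_forall fun t => by positivity) ((hi1.add hi2).add hi3) ?_
    have hne : ∀ᵐ t : ℝ, t ≠ 0 := by simp [ae_iff]
    filter_upwards [hne] with t ht0
    show ‖ST T t b‖^2 ≤ _
    have he := ee_nonneg T t
    have he2 := ee_le T t
    have hq := q_le t
    have hq0 : 0 < 1/(1+t^2) := by positivity
    have hexp := Real.exp_pos b
    by_cases hin : t ∈ Ioc 0 T
    · rw [hg1, indicator_of_mem hin]
      have h3 := h1 T t b hin.1.le hin.2
      have h4 := hS t hin.1.le hin.2
      have h5 := sq_split _ (A t) C0 (C0 * Real.exp (b/2) / (1+t^2)) (C1 * Real.log (T+2) * ee T t) (norm_nonneg (ST T t b)) (by linarith)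
      refine h5.trans ?_
      have h6 : (C0 * Real.exp (b/2) / (1+t^2))^2 ≤ C0^2 * Real.exp b * (1/(1+t^2)) := by
        have : (C0 * Real.exp (b/2) / (1+t^2))^2 = C0^2 * Real.exp b * ((1/(1+t^2)) * (1/(1+t^2))) := by
          have : Real.exp b = Real.exp (b/2)^2 := by rw [← Real.exp_nat_mul]; congr 1; push_cast; ring
          rw [this]; field_simp
        rw [this]
        have : (1/(1+t^2)) * (1/(1+t^2)) ≤ 1/(1+t^2) := by nlinarith
        gcongr
      have h7 : (C1 * Real.log (T+2) * ee T t)^2 ≤ 2*C1^2 * Real.log (T+2)^2 * ee T t := by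
        have : (C1 * Real.log (T+2) * ee T t)^2 = C1^2 * Real.log (T+2)^2 * (ee T t * ee T t) := by ring
        rw [this]
        have : ee T t * ee T t ≤ 2 * ee T t := by nlinarith
        have : C1^2 * Real.log (T+2)^2 * (ee T t * ee T t) ≤ C1^2 * Real.log (T+2)^2 * (2*ee T t) := by gcongr
        linarith
      have k1 : 303*C0^2 ≤ K := by rw [hK]; nlinarith
      have k2 : 606*C1^2 ≤ K := by rw [hK]; nlinarith
      have h8 : 303*C0^2 * (Real.exp b * (1/(1+t^2))) ≤ K * (Real.exp b * (1/(1+t^2))) := by gcongr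
      have h9 : 606*C1^2 * (Real.log (T+2)^2 * ee T t) ≤ K * (Real.log (T+2)^2 * ee T t) := by gcongr
      linarith
    · rw [hg1, indicator_of_notMem hin]
      have hcase : t < 0 ∨ T < t := by
        by_contra hc
        push Not at hc
        exact hin ⟨lt_of_le_of_ne hc.1 (Ne.symm ht0), hc.2⟩
      refine (h2 T t b hT hcase).trans ?_
      have k3 : C2 ≤ K := by rw [hK]; nlinarith
      have : C2 * (Real.log (T+2)^2 * ee T t) ≤ K * (Real.log (T+2)^2 * ee T t) := by gcongr
      have : 0 ≤ K * Real.exp b * (1/(1+t^2)) := by positivity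
      linarith
  refine hmono.trans ?_
  have hi12 : Integrable (fun t : ℝ => g1 t + K * Real.exp b * (1/(1+t^2))) := hi1.add hi2
  rw [integral_add hi12 hi3, integral_add hi1 hi2, integral_const_mul (K * Real.exp b), integral_const_mul (K * Real.log (T+2)^2), int_q, ee_val, hg1,
    integral_indicator measurableSet_Ioc, ← intervalIntegral.integral_of_le hT,
    intervalIntegral.integral_add (Continuous.intervalIntegrable (by fun_prop) _ _) (Continuous.intervalIntegrable (by fun_prop) _ _),
    intervalIntegral.integral_const_mul]
  simp only [intervalIntegral.integral_const, smul_eq_mul, sub_zero]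
  have hpi := Real.pi_gt_three
  have hexp := Real.exp_pos b
  have : K * Real.exp b * π ≥ 0 := by positivity
  have : T * K ≤ K * (2*π) * T := by nlinarith [mul_nonneg hT hK0.le]
  nlinarith

lemma ST_int (hRH : RiemannHypothesis) : ∃ C : ℝ, 0 < C ∧ ∀ T b : ℝ, 0 ≤ T → 0 ≤ b →
    (b ≤ 1/4 → ∫ t, ‖ST T t b‖^2 ≤ 101/100 * ((phi b)^2 * (T * Real.log (T+2)^2)) + C * (T + Real.exp b + Real.log (T+2)^2)) ∧
    (1/4 ≤ b → ∫ t, ‖ST T t b‖^2 ≤ 101/100 * (∫ t in (0:ℝ)..T, ‖PS t b‖^2) + C * (T + Real.exp b + Real.log (T+2)^2)) := by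
  obtain ⟨C0, hC0, h1, h2⟩ := EF hRH
  obtain ⟨C, hC, h⟩ := ST_gen hRH C0 hC0
  refine ⟨C, hC, fun T b hT hb => ⟨fun hb4 => ?_, fun hb4 => ?_⟩⟩
  · have := h T b hT (fun _ => phi b * Real.log (T+2)) continuous_const (fun t ht0 htT => ?_)
    · refine this.trans (le_of_eq ?_)
      rw [intervalIntegral.integral_const]; simp only [smul_eq_mul, sub_zero]; ring
    · refine (h1 t b hb hb4).trans ?_
      have h3 : Real.log (|t|+2) ≤ Real.log (T+2) := by
        rw [abs_of_nonneg ht0]; exact Real.log_le_log (by linarith) (by linarith)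
      have h4 : phi b * Real.log (|t|+2) ≤ phi b * Real.log (T+2) := mul_le_mul_of_nonneg_left h3 (phi_nonneg b)
      have : 0 ≤ C0 * Real.exp (b/2) / (1+t^2) := by positivity
      linarith
  · have hc : Continuous (fun t => ‖PS t b‖) := by
      have := (PS_ms b b 0 le_rfl le_rfl).1.sqrt
      simpa [Real.sqrt_sq] using this
    exact h T b hT (fun t => ‖PS t b‖) hc (fun t _ _ => h2 t b hb4)

end Mont

namespace Mont
open scoped Topology
open scoped ArithmeticFunction.vonMangoldt

lemma hh_bd1 : ∃ C : ℝ, 0 < C ∧ ∀ u, |hh u| ≤ C * (1/(1+u^2)) := by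
  obtain ⟨C, hC, h⟩ := hh_bd
  refine ⟨C, hC, fun u => ?_⟩
  refine (hh_prod hC h u 0 (by simpa using sq_nonneg u)).trans (le_of_eq (by simp))

lemma hh_int : Integrable hh := by
  obtain ⟨C, hC, h⟩ := hh_bd1
  exact (int_w1.const_mul C).mono' hh_cont.aestronglyMeasurable (Eventually.of_forall h)

lemma phi_int : Integrable phi := phi_cont.integrable_of_hasCompactSupport phi_supp

lemma phi_inv (x : ℝ) : phi x = 1/(2*π) * ∫ y, hh y * Real.cos (y * x) := by
  have h := HH_inv 0 x
  have h2 : ∫ y : ℝ, cexp (x*((0:ℝ)+y*I)) * HH phi ((0:ℝ)+y*I) = ∫ y : ℝ, ((hh y : ℂ) * cexp ((((y*x):ℝ):ℂ)*I)) := by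
    refine integral_congr_ae (Eventually.of_forall fun y => ?_)
    show cexp (x*((0:ℝ)+y*I)) * HH phi ((0:ℝ)+y*I) = _
    rw [Complex.ofReal_zero, zero_add, hh_eq, mul_comm]
    congr 2; push_cast; ring
  rw [h2] at h
  have hint : Integrable (fun y : ℝ => ((hh y : ℂ) * cexp ((((y*x):ℝ):ℂ)*I))) := by
    refine (hh_int.norm).mono' ?_ (Eventually.of_forall fun y => ?_)
    · exact Continuous.aestronglyMeasurable (by have := hh_cont; fun_prop)
    · rw [norm_mul, Complex.norm_exp_ofReal_mul_I, mul_one, Complex.norm_real]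
  have h3 := congrArg Complex.re h
  rw [Complex.ofReal_re] at h3
  rw [← h3]
  have h4 : (∫ y : ℝ, ((hh y : ℂ) * cexp ((((y*x):ℝ):ℂ)*I))).re = ∫ y, hh y * Real.cos (y * x) := by
    have := integral_re (𝕜 := ℂ) hint
    rw [← RCLike.re_eq_complex_re, ← this]
    refine integral_congr_ae (Eventually.of_forall fun y => ?_)
    show (((hh y : ℂ) * cexp ((((y*x):ℝ):ℂ)*I))).re = _
    rw [Complex.re_ofReal_mul, Complex.exp_ofReal_mul_I_re]
  have h5 : (1/(2*(π:ℂ))) = ((1/(2*π):ℝ):ℂ) := by push_cast; ring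
  rw [h5, Complex.re_ofReal_mul, h4]

def wt (u : ℝ) : ℝ := ∫ t, hh t * hh (t + u)

lemma wt_int (a b : ℝ) : Integrable (fun t => hh (t + a) * hh (t + b)) := by
  obtain ⟨C, hC, h⟩ := hh_bd1
  refine (hh_int.comp_add_right b).bdd_mul (c := C) (by have := hh_cont; exact Continuous.aestronglyMeasurable (by fun_prop)) (Eventually.of_forall fun t => ?_)
  rw [Real.norm_eq_abs]
  refine (h _).trans ?_
  have := q_le (t+a); nlinarith

lemma wt_zero : wt 0 = 1 := by
  unfold wt
  have hsw : ∫ x, ∫ y, phi x * (hh y * Real.cos (y*x)) = ∫ y, ∫ x, phi x * (hh y * Real.cos (y*x)) := by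
    apply integral_integral_swap
    have h := phi_int.mul_prod hh_int
    refine h.mono (Continuous.aestronglyMeasurable ?_) (Eventually.of_forall fun p => ?_)
    · have := hh_cont; have := phi_cont
      show Continuous fun p : ℝ × ℝ => phi p.1 * (hh p.2 * Real.cos (p.2*p.1))
      fun_prop
    · show ‖phi p.1 * (hh p.2 * Real.cos (p.2*p.1))‖ ≤ ‖phi p.1 * hh p.2‖
      rw [norm_mul, norm_mul, norm_mul]
      have : ‖Real.cos (p.2*p.1)‖ ≤ 1 := Real.abs_cos_le_one _
      exact mul_le_mul_of_nonneg_left (mul_le_of_le_one_right (norm_nonneg _) this) (norm_nonneg _)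
  have e1 : ∫ x, ∫ y, phi x * (hh y * Real.cos (y*x)) = 2*π*(∫ x, (phi x)^2) := by
    rw [← integral_const_mul (2*π)]
    refine integral_congr_ae (Eventually.of_forall fun x => ?_)
    show ∫ y, phi x * (hh y * Real.cos (y*x)) = 2*π*(phi x)^2
    rw [integral_const_mul]
    have h := phi_inv x
    have hpi := Real.pi_pos
    have : ∫ y, hh y * Real.cos (y * x) = 2*π*phi x := by
      rw [h, ← mul_assoc, mul_one_div_cancel (by positivity), one_mul]
    rw [this]; ring
  have e2 : ∫ y, ∫ x, phi x * (hh y * Real.cos (y*x)) = ∫ t, hh t * hh (t+0) := by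
    refine integral_congr_ae (Eventually.of_forall fun y => ?_)
    show ∫ x, phi x * (hh y * Real.cos (y*x)) = hh y * hh (y+0)
    rw [add_zero]
    have e3 : hh y * hh y = hh y * ∫ x, phi x * Real.cos (y*x) := rfl
    rw [e3, ← integral_const_mul (hh y)]
    refine integral_congr_ae (Eventually.of_forall fun x => ?_)
    show phi x * (hh y * Real.cos (y*x)) = hh y * (phi x * Real.cos (y*x))
    ring
  rw [← e2, ← hsw, e1, phi_sq]
  have hpi := Real.pi_pos
  field_simp

lemma wt_cont : Continuous wt := by
  obtain ⟨C, hC, h⟩ := hh_bd1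
  unfold wt
  have := hh_cont
  refine continuous_of_dominated (bound := fun t => C * ‖hh t‖) (fun u => Continuous.aestronglyMeasurable (by fun_prop)) (fun u => Eventually.of_forall fun t => ?_) (hh_int.norm.const_mul C) (Eventually.of_forall fun t => by fun_prop)
  rw [norm_mul, mul_comm]
  refine mul_le_mul_of_nonneg_right ?_ (norm_nonneg _)
  refine (h _).trans ?_
  have := q_le (t+u); nlinarith

lemma wt_bdd : ∃ C : ℝ, 0 < C ∧ ∀ u, |wt u| ≤ C := by
  obtain ⟨C, hC, h⟩ := hh_bd1
  refine ⟨C * (∫ t, ‖hh t‖) + 1, by positivity, fun u => ?_⟩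
  have : ‖wt u‖ ≤ ∫ t, C * ‖hh t‖ := by
    refine norm_integral_le_of_norm_le (hh_int.norm.const_mul C) (Eventually.of_forall fun t => ?_)
    rw [norm_mul, mul_comm]
    refine mul_le_mul_of_nonneg_right ?_ (norm_nonneg _)
    refine (h _).trans ?_
    have := q_le (t+u); nlinarith
  rw [integral_const_mul] at this
  rw [Real.norm_eq_abs] at this
  linarith

lemma wt_shift (x y : ℝ) : ∫ t, hh (t - x) * hh (t - y) = wt (x - y) := by
  unfold wt
  rw [← integral_sub_right_eq_self (fun t => hh t * hh (t + (x-y))) x]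
  refine integral_congr_ae (Eventually.of_forall fun t => ?_)
  show hh (t-x) * hh (t-y) = hh (t-x) * hh (t-x+(x-y))
  congr 2; ring

lemma ST_sq (T b : ℝ) : ∫ t, ‖ST T t b‖^2 = ∑ z ∈ ZT T, ∑ z' ∈ ZT T, wt (gam z - gam z') * Real.cos (b * (gam z - gam z')) := by
  have h1 : ∀ t, ‖ST T t b‖^2 = ∑ z ∈ ZT T, ∑ z' ∈ ZT T, hh (t - gam z) * hh (t - gam z') * Real.cos (b * (gam z - gam z')) := by
    intro t
    have h := norm_sq_sum (ZT T) (fun z => hh (t - gam z)) (fun z => (gam z - t)*b)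
    have h2 : ST T t b = ∑ i ∈ ZT T, (hh (t - gam i) : ℂ) * cexp ((((gam i - t)*b : ℝ):ℂ) * I) := by
      unfold ST
      refine Finset.sum_congr rfl fun z _ => ?_
      rw [mul_comm]; congr 2; push_cast; ring
    rw [h2, h]
    refine Finset.sum_congr rfl fun z _ => Finset.sum_congr rfl fun z' _ => ?_
    congr 2; ring
  simp_rw [h1]
  have hi : ∀ z z' : Z, Integrable (fun t => hh (t - gam z) * hh (t - gam z') * Real.cos (b * (gam z - gam z'))) := fun z z' => by
    refine Integrable.mul_const ?_ _
    simpa [sub_eq_add_neg] using wt_int (-gam z) (-gam z')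
  rw [integral_finsetSum _ (fun z _ => integrable_finsetSum _ fun z' _ => hi z z')]
  refine Finset.sum_congr rfl fun z _ => ?_
  rw [integral_finsetSum _ (fun z' _ => hi z z')]
  refine Finset.sum_congr rfl fun z' _ => ?_
  rw [integral_mul_const, wt_shift]

/-- Fejer kernel -/
def KY (Y u : ℝ) : ℝ := 2 * ∫ b in (0:ℝ)..Y, (1 - b/Y) * Real.cos (b * u)

lemma KY_eq (Y u : ℝ) (hY : 0 < Y) (hu : u ≠ 0) : KY Y u = 2 * (1 - Real.cos (Y*u)) / (Y*u^2) := by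
  unfold KY
  have hd : ∀ b ∈ uIcc 0 Y, HasDerivAt (fun b => (1 - b/Y) * (Real.sin (b*u)/u) - Real.cos (b*u)/(Y*u^2)) ((1 - b/Y) * Real.cos (b*u)) b := by
    intro b _
    have h1 : HasDerivAt (fun b : ℝ => b*u) u b := by simpa using (hasDerivAt_id b).mul_const u
    have h2 := ((hasDerivAt_id b).div_const Y).const_sub 1
    have h3 := (h2.mul (h1.sin.div_const u)).sub (h1.cos.div_const (Y*u^2))
    refine h3.congr_deriv ?_
    simp only [id]
    field_simp
    ring
  rw [intervalIntegral.integral_eq_sub_of_hasDerivAt hd (Continuous.intervalIntegrable (by fun_prop) _ _)]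
  simp
  field_simp
  simp
  ring

lemma KY_nonneg (Y u : ℝ) (hY : 0 < Y) : 0 ≤ KY Y u := by
  by_cases hu : u = 0
  · unfold KY; subst hu
    refine mul_nonneg (by norm_num) (intervalIntegral.integral_nonneg hY.le fun b hb => ?_)
    simp only [mul_zero, Real.cos_zero, mul_one]
    have : b/Y ≤ 1 := (div_le_one hY).2 hb.2
    linarith
  · rw [KY_eq Y u hY hu]
    have := Real.cos_le_one (Y*u)
    exact div_nonneg (by linarith) (by positivity)

lemma KY_le (Y u : ℝ) (hY : 0 < Y) (hu : u ≠ 0) : KY Y u ≤ 4/(Y*u^2) := by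
  rw [KY_eq Y u hY hu]
  have := Real.neg_one_le_cos (Y*u)
  gcongr; linarith

lemma ST_KY (T Y : ℝ) : 2 * ∫ b in (0:ℝ)..Y, (1 - b/Y) * ∫ t, ‖ST T t b‖^2 =
    ∑ z ∈ ZT T, ∑ z' ∈ ZT T, wt (gam z - gam z') * KY Y (gam z - gam z') := by
  simp_rw [ST_sq, Finset.mul_sum]
  rw [intervalIntegral.integral_finsetSum (fun n _ => Continuous.intervalIntegrable (by fun_prop) _ _), Finset.mul_sum]
  refine Finset.sum_congr rfl fun z _ => ?_
  rw [intervalIntegral.integral_finsetSum (fun n _ => Continuous.intervalIntegrable (by fun_prop) _ _), Finset.mul_sum]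
  refine Finset.sum_congr rfl fun z' _ => ?_
  unfold KY
  rw [mul_left_comm, ← intervalIntegral.integral_const_mul (wt (gam z - gam z'))]
  congr 1
  refine intervalIntegral.integral_congr (E := ℝ) fun b _ => ?_
  ring

lemma STi_cont (T : ℝ) : Continuous (fun b => ∫ t, ‖ST T t b‖^2) := by
  simp_rw [ST_sq]; fun_prop

end Mont

namespace Mont
open scoped Topology
open scoped ArithmeticFunction.vonMangoldt

lemma ev_log (M : ℝ) : ∀ᶠ T : ℝ in atTop, M ≤ Real.log T ∧ 0 < T := 
  (Real.tendsto_log_atTop.eventually (eventually_ge_atTop M)).and (eventually_gt_atTop 0)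

lemma log_T2 (T : ℝ) (hT : 0 < T) (h : 100 ≤ Real.log T) : Real.log (T+2) ≤ Real.log T + 2 := by
  have h1 : 1 ≤ T := by
    by_contra hc
    have := Real.log_nonpos hT.le (not_le.1 hc).le
    linarith
  have h2 : Real.log (T+2) ≤ Real.log (T * Real.exp 2) := by
    apply Real.log_le_log (by linarith)
    have := Real.add_one_le_exp 2
    nlinarith
  rwa [Real.log_mul hT.ne' (Real.exp_pos _).ne', Real.log_exp] at h2

lemma log_T2_sq (T : ℝ) (hT : 0 < T) (h : 100 ≤ Real.log T) : Real.log (T+2)^2 ≤ T := by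
  have h1 := log_T2 T hT h
  have h2 : 0 ≤ Real.log (T+2) := by
    rw [← Real.log_one]
    exact Real.log_le_log (by norm_num) (by linarith)
  have h3 := Real.pow_div_factorial_le_exp (Real.log T) (by linarith) 3
  rw [Real.exp_log hT] at h3
  have h4 : ((Nat.factorial 3 : ℕ):ℝ) = 6 := by norm_num [Nat.factorial]
  rw [h4] at h3
  have h5 : Real.log (T+2)^2 ≤ (Real.log T + 2)^2 := pow_le_pow_left₀ h2 h1 2
  nlinarith [sq_nonneg (Real.log T)]

lemma I_bound (hRH : RiemannHypothesis) : ∃ C : ℝ, 0 < C ∧ ∀ᶠ T : ℝ in atTop, ∀ Y, Y = 19/20 * Real.log T →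
    ∀ b, 0 ≤ b → b ≤ Y → ∫ t, ‖ST T t b‖^2 ≤
      10201/10000 * T * (Real.log (T+2)^2 * (phi b)^2 + QQ ⌊Real.exp (Y+1/4)⌋₊ b) + C * T := by
  obtain ⟨C, hC, h⟩ := ST_int hRH
  refine ⟨3*C, by positivity, ?_⟩
  filter_upwards [ev_log 100, ev_small] with T hT hsm Y hY b hb0 hbY
  obtain ⟨hL, hT0⟩ := hT
  have hq := QQ_nonneg ⌊Real.exp (Y+1/4)⌋₊ b
  have herr : C * (T + Real.exp b + Real.log (T+2)^2) ≤ 3*C*T := by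
    have h1 := log_T2_sq T hT0 hL
    have h2 : Real.exp b ≤ T := by
      calc Real.exp b ≤ Real.exp (Real.log T) := Real.exp_le_exp.2 (by linarith)
        _ = T := Real.exp_log hT0
    nlinarith
  have hp : 0 ≤ T * (Real.log (T+2)^2 * (phi b)^2) := by positivity
  have hp2 : 0 ≤ T * QQ ⌊Real.exp (Y+1/4)⌋₊ b := by positivity
  obtain ⟨ha, hb'⟩ := h T b hT0.le hb0
  rcases le_total b (1/4) with h4 | h4
  · have := ha h4
    nlinarith
  · have h1 := hb' h4
    have h2 := (PS_ms Y b T hbY hT0.le).2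
    have h3 : ∫ t in (0:ℝ)..T, ‖PS t b‖^2 ≤ 101/100*T * QQ ⌊Real.exp (Y+1/4)⌋₊ b :=
      h2.trans (mul_le_mul_of_nonneg_right (hsm Y hY) hq)
    nlinarith

set_option maxHeartbeats 1600000 in
lemma main1 (hRH : RiemannHypothesis) : ∀ᶠ T : ℝ in atTop, ∀ Y, Y = 19/20 * Real.log T →
    ∑ z ∈ ZT T, ∑ z' ∈ ZT T, wt (gam z - gam z') * KY Y (gam z - gam z') ≤ 134/100 * (T/(2*π) * Real.log T^2) := by
  obtain ⟨C, hC, h⟩ := I_bound hRH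
  obtain ⟨C', hC', h'⟩ := primes_sum
  filter_upwards [h, ev_log (100000 + 1000000*C + 10000*C')] with T hI hT Y hY
  obtain ⟨hL, hT0⟩ := hT
  obtain ⟨L, hLd⟩ : ∃ L, L = Real.log T := ⟨_, rfl⟩
  obtain ⟨P, hP⟩ : ∃ P, P = T/(2*π) := ⟨_, rfl⟩
  have hpi := Real.pi_pos
  have hPpos : 0 < P := by rw [hP]; positivity
  have hTP : T = 2*π*P := by rw [hP]; field_simp
  rw [← hP]
  have hI := hI Y hY
  have hl2 := log_T2 T hT0 (by nlinarith)
  rw [← hLd] at hL hY hl2 ⊢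
  have hLbig : 100000 ≤ L := by nlinarith
  have hY0 : 0 < Y := by linarith
  have hl0 : 0 ≤ Real.log (T+2) := by
    rw [← Real.log_one]
    exact Real.log_le_log (by norm_num) (by linarith)
  have hlsq : Real.log (T+2)^2 ≤ 1001/1000*L^2 := by
    have : Real.log (T+2)^2 ≤ (L+2)^2 := pow_le_pow_left₀ hl0 hl2 2
    nlinarith
  obtain ⟨N, hN⟩ : ∃ N, N = ⌊Real.exp (Y+1/4)⌋₊ := ⟨_, rfl⟩
  rw [← hN] at hI
  have hpc := phi_cont
  have hqc := QQ_cont N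
  have hsc := STi_cont T
  rw [← ST_KY]
  have e1 : ∫ b in (0:ℝ)..Y, (1 - b/Y) * ∫ t, ‖ST T t b‖^2 ≤
     ∫ b in (0:ℝ)..Y, (10201/10000*T*Real.log (T+2)^2 * (phi b)^2 + 10201/10000*T*((1-b/Y)*QQ N b) + C*T) := by
    refine intervalIntegral.integral_mono_on hY0.le (Continuous.intervalIntegrable (by fun_prop) _ _) (Continuous.intervalIntegrable (by fun_prop) _ _) fun b hb => ?_
    have hb1 : 0 ≤ 1 - b/Y := by
      have : b/Y ≤ 1 := (div_le_one hY0).2 hb.2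
      linarith
    have hb2 : 1 - b/Y ≤ 1 := by
      have : 0 ≤ b/Y := div_nonneg hb.1 hY0.le
      linarith
    have h1 := mul_le_mul_of_nonneg_left (hI b hb.1 hb.2) hb1
    have h2 : 0 ≤ 10201/10000*T*Real.log (T+2)^2 * (phi b)^2 := by positivity
    have h3 : 0 ≤ C * T := by positivity
    have h4 : (1-b/Y) * (10201/10000*T*Real.log (T+2)^2 * (phi b)^2) ≤ 10201/10000*T*Real.log (T+2)^2 * (phi b)^2 := mul_le_of_le_one_left h2 hb2
    have h5 : (1-b/Y) * (C*T) ≤ C*T := mul_le_of_le_one_left h3 hb2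
    linarith
  rw [intervalIntegral.integral_add (Continuous.intervalIntegrable (by fun_prop) _ _) (Continuous.intervalIntegrable (by fun_prop) _ _),
    intervalIntegral.integral_add (Continuous.intervalIntegrable (by fun_prop) _ _) (Continuous.intervalIntegrable (by fun_prop) _ _),
    intervalIntegral.integral_const_mul, intervalIntegral.integral_const_mul, intervalIntegral.integral_const, smul_eq_mul, sub_zero] at e1
  have e2 := phi_half Y hY0.le
  have e3 := QQ_int Y hY0
  have e4 := h' (Y+1/4) (by linarith)
  rw [← hN] at e3 e4
  have e5 : 1/(2*π*Y) * ∑ n ∈ Finset.Ioc 0 N, (Λ n)^2/n*((Y+1/4) - Real.log n) ≤ 1/(2*π*Y) * ((Y+1/4)^3/6 + C'*(Y+1/4)^2) := by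
    gcongr
  have hy : Y+1/4 ≤ 10003/10000*Y := by linarith
  have hy2 : (Y+1/4)^2 ≤ (10003/10000*Y)^2 := pow_le_pow_left₀ (by linarith) hy 2
  have hy3 : (Y+1/4)^3 ≤ (10003/10000*Y)^3 := pow_le_pow_left₀ (by linarith) hy 3
  have e6 : (Y+1/4)^3/6 + C'*(Y+1/4)^2 ≤ Y*(1001/1000*(Y^2/6 + C'*Y)) := by
    have : C'*(Y+1/4)^2 ≤ C'*(10003/10000*Y)^2 := by gcongr
    have h1 : 0 ≤ Y^3 := by positivity
    have h2 : 0 ≤ C'*Y^2 := by positivity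
    nlinarith
  have e7 : 1/(2*π*Y) * ((Y+1/4)^3/6 + C'*(Y+1/4)^2) ≤ 1/(2*π) * (1001/1000*(Y^2/6 + C'*Y)) := by
    calc _ ≤ 1/(2*π*Y) * (Y*(1001/1000*(Y^2/6 + C'*Y))) := by gcongr
      _ = _ := by field_simp
  have e8 : ∫ b in (0:ℝ)..Y, (1 - b/Y) * QQ N b ≤ 1/(2*π) * (1001/1000*(Y^2/6 + C'*Y)) := by linarith
  have f1 : 10201/10000*T*Real.log (T+2)^2 * (∫ b in (0:ℝ)..Y, (phi b)^2) ≤ 10201/10000*T*(1001/1000*L^2) * (1/(4*π)) := by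
    gcongr
    exact intervalIntegral.integral_nonneg hY0.le fun b _ => by positivity
  have f2 : 10201/10000*T * (∫ b in (0:ℝ)..Y, (1 - b/Y) * QQ N b) ≤ 10201/10000*T*(1/(2*π) * (1001/1000*(Y^2/6 + C'*Y))) := by
    gcongr
  have f3 : 10201/10000*T*(1001/1000*L^2) * (1/(4*π)) = 10201/10000*P*(1001/1000*L^2)/2 := by
    rw [hTP]; field_simp; ring
  have f4 : 10201/10000*T*(1/(2*π) * (1001/1000*(Y^2/6 + C'*Y))) = 10201/10000*P*(1001/1000*(Y^2/6 + C'*Y)) := by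
    rw [hTP]; field_simp
  have f5 : Y*(C*T) ≤ P * (7*C*L) := by
    rw [hTP]
    have h1 : 2*π ≤ 7 := by have := Real.pi_lt_d2; linarith
    have h2 : Y ≤ L := by linarith
    calc Y*(C*(2*π*P)) ≤ L*(C*(7*P)) := by gcongr
      _ = _ := by ring
  have g1 : C*L ≤ 1/1000000*L^2 := by nlinarith
  have g2 : C'*Y ≤ 1/10000*L^2 := by
    have : C'*Y ≤ C'*L := by gcongr; linarith
    nlinarith
  have g3 : Y^2 = 361/400*L^2 := by rw [hY]; ring
  have tot : 2 * (10201/10000*P*(1001/1000*L^2)/2 + 10201/10000*P*(1001/1000*(Y^2/6 + C'*Y)) + P * (7*C*L)) ≤ 134/100*(P*L^2) := by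
    rw [g3]
    have k1 := mul_le_mul_of_nonneg_left g1 hPpos.le
    have k2 := mul_le_mul_of_nonneg_left g2 hPpos.le
    have k3 : 0 ≤ P*L^2 := by positivity
    linarith
  linarith

end Mont

namespace Mont
open scoped Topology

lemma card_ZT (hRH : RiemannHypothesis) : ∃ C : ℝ, 0 < C ∧ ∀ T : ℝ, 1 ≤ T → ((ZT T).card : ℝ) ≤ C * (T * Real.log (T+2)) := by
  obtain ⟨C2, hC2, h2⟩ := density hRH
  refine ⟨4*C2, by positivity, fun T hT => ?_⟩
  have h1 : ∀ z ∈ ZT T, (1:ℝ) ≤ ∑ k ∈ Finset.range (⌊T⌋₊+1), 2 * (1/(1+((k:ℝ) - gam z)^2)) := by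
    intro z hz
    obtain ⟨ha, hb⟩ := mem_ZT.1 hz
    have hk : ⌊gam z⌋₊ ∈ Finset.range (⌊T⌋₊+1) := by
      rw [Finset.mem_range, Nat.lt_succ_iff]; exact Nat.floor_le_floor hb
    have h3 := Finset.single_le_sum (f := fun k : ℕ => 2 * (1/(1+((k:ℝ) - gam z)^2))) (fun k _ => by positivity) hk
    refine le_trans ?_ h3
    have h4 := Nat.floor_le ha.le
    have h5 := Nat.lt_floor_add_one (gam z)
    have h6 : ((⌊gam z⌋₊:ℝ) - gam z)^2 ≤ 1 := by nlinarith
    rw [mul_one_div, le_div_iff₀ (by positivity)]; linarith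
  have h3 : ((ZT T).card : ℝ) ≤ ∑ z ∈ ZT T, ∑ k ∈ Finset.range (⌊T⌋₊+1), 2 * (1/(1+((k:ℝ) - gam z)^2)) := by
    have := Finset.sum_le_sum h1
    simpa using this
  rw [Finset.sum_comm] at h3
  have h4 : ∀ k ∈ Finset.range (⌊T⌋₊+1), ∑ z ∈ ZT T, 2 * (1/(1+((k:ℝ) - gam z)^2)) ≤ 2 * (C2 * Real.log (T+2)) := by
    intro k hk
    rw [← Finset.mul_sum]
    have h5 := (fin_le (h2 0).1 k (h2 k).1 (ZT T)).trans (h2 k).2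
    have h6 : (k:ℝ) ≤ T := by
      have : k ≤ ⌊T⌋₊ := Nat.lt_succ_iff.1 (Finset.mem_range.1 hk)
      exact (Nat.le_floor_iff (by linarith)).1 this
    have h7 : Real.log (|(k:ℝ)|+2) ≤ Real.log (T+2) := by
      rw [abs_of_nonneg (by positivity)]; exact Real.log_le_log (by positivity) (by linarith)
    have : C2 * Real.log (|(k:ℝ)|+2) ≤ C2 * Real.log (T+2) := by gcongr
    linarith
  have h5 := Finset.sum_le_sum h4
  rw [Finset.sum_const, Finset.card_range, nsmul_eq_mul] at h5
  have h6 : ((⌊T⌋₊+1:ℕ):ℝ) ≤ 2*T := by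
    have := Nat.floor_le (show 0 ≤ T by linarith)
    push_cast; linarith
  have hl : 0 ≤ Real.log (T+2) := Real.log_nonneg (by linarith)
  have h7 : ((⌊T⌋₊+1:ℕ):ℝ) * (2 * (C2 * Real.log (T+2))) ≤ 2*T*(2 * (C2 * Real.log (T+2))) := by gcongr
  linarith

lemma pairs_sum (hRH : RiemannHypothesis) : ∃ C : ℝ, 0 < C ∧ ∀ T : ℝ, 1 ≤ T →
    ∑ z ∈ ZT T, ∑ z' ∈ ZT T, 1/(1+(gam z - gam z')^2) ≤ C * (T * Real.log (T+2)^2) := by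
  obtain ⟨C1, hC1, h1⟩ := card_ZT hRH
  obtain ⟨C2, hC2, h2⟩ := density hRH
  refine ⟨C1*C2, by positivity, fun T hT => ?_⟩
  have hl : 0 ≤ Real.log (T+2) := Real.log_nonneg (by linarith)
  have h3 : ∀ z ∈ ZT T, ∑ z' ∈ ZT T, 1/(1+(gam z - gam z')^2) ≤ C2 * Real.log (T+2) := by
    intro z hz
    obtain ⟨ha, hb⟩ := mem_ZT.1 hz
    refine (fin_le (h2 0).1 _ (h2 _).1 (ZT T)).trans ((h2 _).2.trans ?_)
    rw [abs_of_pos ha]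
    gcongr
  refine (Finset.sum_le_sum h3).trans ?_
  rw [Finset.sum_const, nsmul_eq_mul]
  calc _ ≤ C1 * (T * Real.log (T+2)) * (C2 * Real.log (T+2)) := by gcongr; exact h1 T hT
    _ = _ := by ring

lemma w_term : ∃ D : ℝ, 0 < D ∧ ∀ Y u : ℝ, 0 < Y →
    4/(4+u^2) * KY Y u ≤ 101/100 * (wt u * KY Y u) + D/Y * (1/(1+u^2)) := by
  obtain ⟨Cw, hCw, hw⟩ := wt_bdd
  have hc : ∀ᶠ u in 𝓝 (0:ℝ), 100/101 < wt u := by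
    apply wt_cont.continuousAt.eventually
    rw [wt_zero]; exact lt_mem_nhds (by norm_num)
  obtain ⟨U, hU, hUw⟩ := Metric.eventually_nhds_iff.1 hc
  refine ⟨(1+2*Cw)*4*(1+1/U^2), by positivity, fun Y u hY => ?_⟩
  have hK := KY_nonneg Y u hY
  have hw1 : 4/(4+u^2) ≤ 1 := by rw [div_le_one (by positivity)]; nlinarith [sq_nonneg u]
  have hD : 0 ≤ (1+2*Cw)*4*(1+1/U^2)/Y * (1/(1+u^2)) := by positivity
  rcases lt_or_ge |u| U with h | h
  · have h1 := hUw (y := u) (by simpa using h)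
    have : 4/(4+u^2) ≤ 101/100 * wt u := by linarith
    have := mul_le_mul_of_nonneg_right this hK
    linarith
  · have hu : u ≠ 0 := by rintro rfl; simp at h; linarith
    have hUu : U^2 ≤ u^2 := by rw [← sq_abs u]; exact pow_le_pow_left₀ hU.le h 2
    have h1 := KY_le Y u hY hu
    have h2 : 4/(4+u^2) - 101/100*wt u ≤ 1 + 2*Cw := by
      have := (abs_le.1 (hw u)).1; linarith
    have h3 : (4/(4+u^2) - 101/100*wt u) * KY Y u ≤ (1+2*Cw) * (4/(Y*u^2)) := by
      calc _ ≤ (1+2*Cw) * KY Y u := mul_le_mul_of_nonneg_right h2 hK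
        _ ≤ _ := by gcongr
    have hu2 : 0 < u^2 := by positivity
    have h4 : 1/u^2 ≤ (1+1/U^2) * (1/(1+u^2)) := by
      rw [mul_one_div, div_le_div_iff₀ hu2 (by positivity)]
      have : 1 ≤ 1/U^2 * u^2 := by rw [one_div_mul_eq_div, le_div_iff₀ (by positivity)]; linarith
      linarith
    have h5 : (1+2*Cw) * (4/(Y*u^2)) = (1+2*Cw)*4/Y * (1/u^2) := by field_simp
    have h6 : (1+2*Cw)*4/Y * (1/u^2) ≤ (1+2*Cw)*4/Y * ((1+1/U^2) * (1/(1+u^2))) := by gcongr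
    have h7 : (1+2*Cw)*4/Y * ((1+1/U^2) * (1/(1+u^2))) = (1+2*Cw)*4*(1+1/U^2)/Y * (1/(1+u^2)) := by ring
    linarith

lemma main2 (hRH : RiemannHypothesis) : ∀ᶠ T : ℝ in atTop, ∀ Y, Y = 19/20 * Real.log T →
    ∑ z ∈ ZT T, ∑ z' ∈ ZT T, 4/(4+(gam z - gam z')^2) * KY Y (gam z - gam z') ≤ 137/100 * (T/(2*π) * Real.log T^2) := by
  obtain ⟨D, hD, h⟩ := w_term
  obtain ⟨C, hC, hp⟩ := pairs_sum hRH
  filter_upwards [main1 hRH, ev_log (100000 + 10000*(D*C)), eventually_ge_atTop 1] with T hm hT hT1 Y hY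
  obtain ⟨hL, hT0⟩ := hT
  have hDC : 0 < D*C := by positivity
  have hm := hm Y hY
  have hl2 := log_T2 T hT0 (by linarith)
  obtain ⟨L, hLd⟩ : ∃ L, L = Real.log T := ⟨_, rfl⟩
  rw [← hLd] at hL hY hl2 hm ⊢
  have hY0 : 0 < Y := by linarith
  have hl0 : 0 ≤ Real.log (T+2) := Real.log_nonneg (by linarith)
  have hs : ∑ z ∈ ZT T, ∑ z' ∈ ZT T, 4/(4+(gam z - gam z')^2) * KY Y (gam z - gam z') ≤
      ∑ z ∈ ZT T, ∑ z' ∈ ZT T, (101/100 * (wt (gam z - gam z') * KY Y (gam z - gam z')) + D/Y * (1/(1+(gam z - gam z')^2))) :=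
    Finset.sum_le_sum fun z _ => Finset.sum_le_sum fun z' _ => h Y _ hY0
  simp_rw [Finset.sum_add_distrib, ← Finset.mul_sum] at hs
  have h1 : D/Y * (∑ z ∈ ZT T, ∑ z' ∈ ZT T, 1/(1+(gam z - gam z')^2)) ≤ D/Y * (C * (T * (2*L)^2)) := by
    gcongr
    refine (hp T hT1).trans ?_
    gcongr
    linarith
  have hpi := Real.pi_pos
  have h2 : D/Y * (C * (T * (2*L)^2)) ≤ 1/100 * (T/(2*π) * L^2) := by
    have e : D/Y * (C * (T * (2*L)^2)) = (T/(2*π)*L^2) * (8*π*(D*C)/Y) := by field_simp; ring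
    rw [e, mul_comm (1/100)]
    refine mul_le_mul_of_nonneg_left ?_ (by positivity)
    rw [div_le_iff₀ hY0]
    have := Real.pi_lt_d2
    nlinarith
  have : 0 < T/(2*π)*L^2 := by
    have : 0 < L := by linarith
    positivity
  linarith

end Mont

namespace Mont
open scoped Topology

def SF' (T : ℝ) : Finset {ρ : ℂ // X ρ = 0} := (SF (T+4)).filter (fun ρ => 0 < ρ.1.im ∧ ρ.1.im ≤ T)

lemma ZT_eq (T : ℝ) : ZT T = (SF' T).sigma (fun _ => Finset.univ) := by
  ext z
  rw [ZT, Finset.mem_filter, ZF, Finset.mem_sigma, Finset.mem_sigma, SF', Finset.mem_filter]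
  simp only [Finset.mem_univ, and_true]
  rfl

lemma mem_SF' {T : ℝ} {ρ : {ρ : ℂ // X ρ = 0}} : ρ ∈ SF' T ↔ 0 < ρ.1.im ∧ ρ.1.im ≤ T := by
  refine ⟨fun h => (Finset.mem_filter.1 h).2, fun h => Finset.mem_filter.2 ⟨?_, h⟩⟩
  simp only [SF, Finite.mem_toFinset]
  show ‖ρ.1 - 2‖ ≤ T + 4
  have h1 := X_zero_strip ρ.2
  refine (Complex.norm_le_abs_re_add_abs_im _).trans ?_
  have h2 : (ρ.1 - 2).im = ρ.1.im := by simp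
  have h3 : (ρ.1 - 2).re = ρ.1.re - 2 := by simp
  rw [h2, h3, abs_of_pos h.1, abs_of_nonpos (by linarith)]
  linarith

lemma zUT_finite (T : ℝ) : (zerosUpTo T).Finite := by
  refine ((SF' T).finite_toSet.image Subtype.val).subset fun ρ hρ => ?_
  exact ⟨⟨ρ, X_zero_of_strip hρ.1⟩, mem_SF'.2 hρ.2, rfl⟩

lemma sum_ZT (T : ℝ) [Fintype (zerosUpTo T)] (g : ℂ → ℂ) :
    ∑ ρ : zerosUpTo T, (zetaMult ρ : ℂ) * g ρ = ∑ z ∈ ZT T, g (rho z) := by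
  rw [ZT_eq, Finset.sum_sigma]
  symm
  refine Finset.sum_bij (fun ρ hρ => (⟨ρ.1, ?_, mem_SF'.1 hρ⟩ : zerosUpTo T)) (fun _ _ => Finset.mem_univ _) ?_ ?_ ?_
  · have := X_zero_strip ρ.2
    exact ⟨this.2.2, this.1, this.2.1⟩
  · intro a _ b _ h
    exact Subtype.ext (congrArg (fun x : zerosUpTo T => (x : ℂ)) h)
  · intro ρ _
    exact ⟨⟨ρ.1, X_zero_of_strip ρ.2.1⟩, mem_SF'.2 ρ.2.2, rfl⟩
  · intro ρ hρ
    have h := X_zero_strip ρ.2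
    have hz : ZetaNontrivZero ρ.1 := ⟨h.2.2, h.1, h.2.1⟩
    simp [rho, zetaMult_eq hz]

lemma sum_pairs (T : ℝ) (G : ℂ → ℂ → ℂ) :
    ∑' p : zerosUpTo T × zerosUpTo T, ((zetaMult p.1 : ℂ) * zetaMult p.2) * G p.1 p.2 =
      ∑ z ∈ ZT T, ∑ z' ∈ ZT T, G (rho z) (rho z') := by
  have : Fintype (zerosUpTo T) := (zUT_finite T).fintype
  rw [tsum_fintype, Fintype.sum_prod_type, ← sum_ZT T (fun ρ => ∑ z' ∈ ZT T, G ρ (rho z'))]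
  refine Finset.sum_congr rfl fun ρ _ => ?_
  rw [← sum_ZT T (fun ρ' => G ρ ρ'), Finset.mul_sum]
  refine Finset.sum_congr rfl fun ρ' _ => ?_
  ring

def GG (T y : ℝ) : ℝ := ∑ z ∈ ZT T, ∑ z' ∈ ZT T, Real.cos (y * (gam z - gam z')) * (4/(4+(gam z - gam z')^2))

lemma GG_cont (T : ℝ) : Continuous (GG T) := by unfold GG; fun_prop

lemma FF_re (T α : ℝ) (hT : 0 < T) : (FF α T).re = (T/(2*π)*Real.log T)⁻¹ * GG T (α * Real.log T) := by
  have h : Fxt (T^α) T = (GG T (α * Real.log T) : ℂ) + (∑ z ∈ ZT T, ∑ z' ∈ ZT T, Real.sin (α * Real.log T * (gam z - gam z')) * (4/(4+(gam z - gam z')^2)) : ℝ) * I := by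
    have h1 := sum_pairs T (fun a b => cexp (I * ((a.im - b.im : ℝ):ℂ) * (Real.log (T^α) : ℂ)) * ((4/(4+(a.im-b.im)^2) : ℝ) : ℂ))
    unfold Fxt
    simp only [mul_assoc] at h1 ⊢
    rw [h1]
    unfold GG
    push_cast
    simp only [Finset.sum_mul, ← Finset.sum_add_distrib]
    refine Finset.sum_congr rfl fun z _ => Finset.sum_congr rfl fun z' _ => ?_
    rw [Real.log_rpow hT]
    have h2 : cexp (I * (((rho z).im - (rho z').im) * ((α * Real.log T : ℝ) : ℂ))) =
        Complex.cos (α * (Real.log T * (gam z - gam z'))) + Complex.sin (α * (Real.log T * (gam z - gam z'))) * I := by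
      rw [← Complex.exp_mul_I]
      congr 1
      simp only [rho, gam]
      push_cast; ring
    rw [h2]
    simp only [rho, gam]
    ring
  unfold FF
  rw [← Complex.ofReal_inv, Complex.re_ofReal_mul, h, Complex.add_re, Complex.re_ofReal_mul, Complex.ofReal_re, Complex.I_re, mul_zero, add_zero]

lemma w_int (u : ℝ) : IntegrableOn (fun v => Real.exp (-2*v) * Real.cos (u*v)) (Ioi 0) ∧
    ∫ v in Ioi (0:ℝ), Real.exp (-2*v) * Real.cos (u*v) = 2/(4+u^2) := by
  have ha : (-2 + u*I : ℂ).re < 0 := by simp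
  have h1 := integrableOn_exp_mul_complex_Ioi ha 0
  have h2 := integral_exp_mul_complex_Ioi ha 0
  have he : ∀ v : ℝ, (cexp ((-2 + u*I)*v)).re = Real.exp (-2*v) * Real.cos (u*v) := fun v => by
    rw [Complex.exp_re]; congr 2 <;> simp
  have h3 := h1.re
  simp only [RCLike.re_eq_complex_re, he] at h3
  refine ⟨h3, ?_⟩
  have h4 := integral_re (𝕜 := ℂ) h1
  simp only [RCLike.re_eq_complex_re, he] at h4
  rw [h4, h2]
  simp [Complex.div_re, Complex.normSq_apply]
  congr 1; ring

lemma cos_sum_nonneg (T y : ℝ) : 0 ≤ ∑ z ∈ ZT T, ∑ z' ∈ ZT T, Real.cos (y * (gam z - gam z')) := by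
  have h := norm_sq_sum (ZT T) (fun _ => 1) (fun z => y * gam z)
  simp only [one_mul] at h
  simp only [mul_sub]
  rw [← h]; positivity

lemma GG_nonneg (T y : ℝ) : 0 ≤ GG T y := by
  have h : GG T y = ∫ v in Ioi (0:ℝ), Real.exp (-2*v) * ((∑ z ∈ ZT T, ∑ z' ∈ ZT T, Real.cos ((y+v) * (gam z - gam z'))) + ∑ z ∈ ZT T, ∑ z' ∈ ZT T, Real.cos ((y-v) * (gam z - gam z'))) := by
    have e : ∀ v : ℝ, Real.exp (-2*v) * ((∑ z ∈ ZT T, ∑ z' ∈ ZT T, Real.cos ((y+v) * (gam z - gam z'))) + ∑ z ∈ ZT T, ∑ z' ∈ ZT T, Real.cos ((y-v) * (gam z - gam z')))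
      = ∑ z ∈ ZT T, ∑ z' ∈ ZT T, (2*Real.cos (y * (gam z - gam z'))) * (Real.exp (-2*v) * Real.cos ((gam z - gam z')*v)) := by
      intro v
      rw [← Finset.sum_add_distrib, Finset.mul_sum]
      refine Finset.sum_congr rfl fun z _ => ?_
      rw [← Finset.sum_add_distrib, Finset.mul_sum]
      refine Finset.sum_congr rfl fun z' _ => ?_
      rw [add_mul, sub_mul, Real.cos_add, Real.cos_sub, mul_comm v]
      ring
    simp_rw [e]
    have hi : ∀ z z' : Z, IntegrableOn (fun v => (2*Real.cos (y * (gam z - gam z'))) * (Real.exp (-2*v) * Real.cos ((gam z - gam z')*v))) (Ioi 0) :=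
      fun z z' => (w_int _).1.const_mul _
    rw [integral_finsetSum _ (fun z _ => integrable_finsetSum _ fun z' _ => hi z z')]
    unfold GG
    refine Finset.sum_congr rfl fun z _ => ?_
    rw [integral_finsetSum _ (fun z' _ => hi z z')]
    refine Finset.sum_congr rfl fun z' _ => ?_
    rw [integral_const_mul, (w_int _).2]
    ring
  rw [h]
  refine integral_nonneg fun v => ?_
  exact mul_nonneg (Real.exp_pos _).le (add_nonneg (cos_sum_nonneg _ _) (cos_sum_nonneg _ _))

lemma KY_scale (δ L u : ℝ) (hL : 0 < L) : L * KY δ (L*u) = KY (δ*L) u := by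
  unfold KY
  have h := intervalIntegral.mul_integral_comp_mul_right (a := 0) (b := δ) (c := L) (f := fun b => (1 - b/(δ*L)) * Real.cos (b*u))
  rw [zero_mul] at h
  rw [← h, mul_left_comm]
  congr 2
  refine intervalIntegral.integral_congr (E := ℝ) fun a _ => ?_
  show (1 - a/δ) * Real.cos (a*(L*u)) = (1 - a*L/(δ*L)) * Real.cos (a*L*u)
  rw [mul_div_mul_right _ _ hL.ne', mul_assoc a L u]

lemma avg_bound (T L B : ℝ) (hL : 0 < L) :
    ∫ α in B..(B+1), GG T (α*L) ≤ 19/9 * (1/L * ∑ z ∈ ZT T, ∑ z' ∈ ZT T, 4/(4+(gam z - gam z')^2) * KY (19/20*L) (gam z - gam z')) := by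
  have hc := GG_cont T
  obtain ⟨m, hm⟩ : ∃ m, m = B + 1/2 := ⟨_, rfl⟩
  have e1 : ∫ α in B..(B+1), GG T (α*L) = ∫ a in (0:ℝ)..(1/2), (GG T ((m-a)*L) + GG T ((m+a)*L)) := by
    rw [intervalIntegral.integral_add (Continuous.intervalIntegrable (by fun_prop) _ _) (Continuous.intervalIntegrable (by fun_prop) _ _),
      intervalIntegral.integral_comp_sub_left (fun α => GG T (α*L)) m,
      intervalIntegral.integral_comp_add_left (fun α => GG T (α*L)) m, sub_zero, add_zero,
      intervalIntegral.integral_add_adjacent_intervals (Continuous.intervalIntegrable (by fun_prop) _ _) (Continuous.intervalIntegrable (by fun_prop) _ _)]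
    congr 1 <;> rw [hm] <;> ring
  have hP : ∀ a, 0 ≤ GG T ((m-a)*L) + GG T ((m+a)*L) := fun a => add_nonneg (GG_nonneg _ _) (GG_nonneg _ _)
  have e2 : ∫ a in (0:ℝ)..(1/2), (GG T ((m-a)*L) + GG T ((m+a)*L)) ≤
      ∫ a in (0:ℝ)..(1/2), 19/9 * ((1 - a/(19/20)) * (GG T ((m-a)*L) + GG T ((m+a)*L))) := by
    refine intervalIntegral.integral_mono_on (by norm_num) (Continuous.intervalIntegrable (by fun_prop) _ _) (Continuous.intervalIntegrable (by fun_prop) _ _) fun a ha => ?_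
    have h1 : 1 ≤ 19/9 * (1 - a/(19/20)) := by have := ha.2; linarith
    have := mul_le_mul_of_nonneg_right h1 (hP a)
    linarith
  have e3 : ∫ a in (0:ℝ)..(1/2), 19/9 * ((1 - a/(19/20)) * (GG T ((m-a)*L) + GG T ((m+a)*L))) ≤
      ∫ a in (0:ℝ)..(19/20), 19/9 * ((1 - a/(19/20)) * (GG T ((m-a)*L) + GG T ((m+a)*L))) := by
    rw [← intervalIntegral.integral_add_adjacent_intervals (a := 0) (b := 1/2) (c := 19/20) (Continuous.intervalIntegrable (by fun_prop) _ _) (Continuous.intervalIntegrable (by fun_prop) _ _)]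
    have : 0 ≤ ∫ a in (1/2:ℝ)..(19/20), 19/9 * ((1 - a/(19/20)) * (GG T ((m-a)*L) + GG T ((m+a)*L))) := by
      refine intervalIntegral.integral_nonneg (by norm_num) fun a ha => ?_
      have := ha.2
      exact mul_nonneg (by norm_num) (mul_nonneg (by linarith) (hP a))
    linarith
  have e4 : ∫ a in (0:ℝ)..(19/20), (1 - a/(19/20)) * (GG T ((m-a)*L) + GG T ((m+a)*L)) =
      ∑ z ∈ ZT T, ∑ z' ∈ ZT T, (Real.cos (m*L*(gam z - gam z')) * (4/(4+(gam z - gam z')^2))) * KY (19/20) (L*(gam z - gam z')) := by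
    have e : ∀ a : ℝ, (1 - a/(19/20)) * (GG T ((m-a)*L) + GG T ((m+a)*L)) =
      ∑ z ∈ ZT T, ∑ z' ∈ ZT T, (Real.cos (m*L*(gam z - gam z')) * (4/(4+(gam z - gam z')^2)) * 2) * ((1 - a/(19/20)) * Real.cos (a*(L*(gam z - gam z')))) := by
      intro a
      unfold GG
      rw [← Finset.sum_add_distrib, Finset.mul_sum]
      refine Finset.sum_congr rfl fun z _ => ?_
      rw [← Finset.sum_add_distrib, Finset.mul_sum]
      refine Finset.sum_congr rfl fun z' _ => ?_
      rw [show (m-a)*L*(gam z - gam z') = m*L*(gam z - gam z') - a*(L*(gam z - gam z')) by ring,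
        show (m+a)*L*(gam z - gam z') = m*L*(gam z - gam z') + a*(L*(gam z - gam z')) by ring, Real.cos_add, Real.cos_sub]
      ring
    simp_rw [e]
    rw [intervalIntegral.integral_finsetSum (fun n _ => Continuous.intervalIntegrable (by fun_prop) _ _)]
    refine Finset.sum_congr rfl fun z _ => ?_
    rw [intervalIntegral.integral_finsetSum (fun n _ => Continuous.intervalIntegrable (by fun_prop) _ _)]
    refine Finset.sum_congr rfl fun z' _ => ?_
    rw [intervalIntegral.integral_const_mul]
    unfold KY
    ring
  rw [intervalIntegral.integral_const_mul, intervalIntegral.integral_const_mul, e4, ← intervalIntegral.integral_const_mul] at e3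
  rw [e1]
  refine e2.trans (e3.trans ?_)
  refine mul_le_mul_of_nonneg_left ?_ (by norm_num)
  rw [Finset.mul_sum]
  refine Finset.sum_le_sum fun z _ => ?_
  rw [Finset.mul_sum]
  refine Finset.sum_le_sum fun z' _ => ?_
  have h1 := KY_scale (19/20) L (gam z - gam z') hL
  have h2 := KY_nonneg (19/20) (L*(gam z - gam z')) (by norm_num)
  rw [← h1]
  have h3 : 1/L * (4/(4+(gam z - gam z')^2) * (L * KY (19/20) (L*(gam z - gam z')))) = 4/(4+(gam z - gam z')^2) * KY (19/20) (L*(gam z - gam z')) := by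
    field_simp
  rw [h3]
  refine mul_le_mul_of_nonneg_right ?_ h2
  exact mul_le_of_le_one_left (by positivity) (Real.cos_le_one _)

lemma final (hRH : RiemannHypothesis) : ∃ T₀ : ℝ, ∀ T : ℝ, T₀ ≤ T → ∀ B : ℝ, (∫ α in B..(B+1), (FF α T).re) ≤ 3 := by
  rw [← eventually_atTop]
  filter_upwards [main2 hRH, ev_log 1] with T hm hT B
  obtain ⟨hL, hT0⟩ := hT
  have hm := hm _ rfl
  have hL0 : 0 < Real.log T := by linarith
  have hpi := Real.pi_pos
  simp_rw [FF_re T _ hT0]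
  rw [intervalIntegral.integral_const_mul]
  have h1 := avg_bound T (Real.log T) B hL0
  have h2 : 19/9 * (1/Real.log T * ∑ z ∈ ZT T, ∑ z' ∈ ZT T, 4/(4+(gam z - gam z')^2) * KY (19/20*Real.log T) (gam z - gam z')) ≤
      19/9 * (1/Real.log T * (137/100 * (T/(2*π) * Real.log T^2))) := by gcongr
  have h3 : 19/9 * (1/Real.log T * (137/100 * (T/(2*π) * Real.log T^2))) ≤ 3 * (T/(2*π)*Real.log T) := by
    have e : 19/9 * (1/Real.log T * (137/100 * (T/(2*π) * Real.log T^2))) = 2603/900 * (T/(2*π)*Real.log T) := by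
      field_simp; ring
    rw [e]
    have : 0 < T/(2*π)*Real.log T := by positivity
    linarith
  have hN : 0 < T/(2*π)*Real.log T := by positivity
  rw [inv_mul_le_iff₀ hN]
  linarith

end Mont

/-- Assuming RH, for all large `T` and every real `B` (possibly depending on `T`),
`∫_B^{B+1} F(α,T) dα ≤ 3`. -/
theorem F_average_bound (hRH : RiemannHypothesis) :
    ∃ T₀ : ℝ, ∀ T : ℝ, T₀ ≤ T → ∀ B : ℝ,
      (∫ α in B..(B + 1), (FF α T).re) ≤ 3 := by
  exact Mont.final hRH
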